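/- Let f and its polynomial sieving system (I_p) be as in the context. For every integer ν ≥ 0, the limit ρ_ν = lim_{x→∞} #{p ≤ x prime : |I_p| = ν} / (x/log x) exists; moreover, ρ_ν equals the proportion of elements of the Galois group G of the splitting field of f over ℚ which fix exactly ν of the d roots of f (under the natural action of G on the roots). -/

import Mathlib

open scoped BigOperators Classical

noncomputable section

/-- The set of primes `p ≤ t`. -/
def primesLe (t : ℝ) : Finset ℕ :=
  ((Finset.range (⌊t⌋₊ + 1)).filter Nat.Prime).filter (fun p => (p : ℝ) ≤ t)

/-!
For a Galois extension `L` of `ℚ` with group `G` and a subgroup `H ≤ G`, a prime ideal of degree one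
of the fixed field of `H` above an unramified prime `p` corresponds to a fixed point of the
Frobenius element `Frob p` on `G ⧸ H`. By the prime ideal theorem for the fixed field, the number of
these fixed points therefore has mean value `1` over the primes, which is also its mean value over
`G`. Decomposing into orbits, the number of fixed points of `Frob p` on any finite `G`-set has the
same mean over `p` as over `G`; applied to the powers of the set of roots of `f`, this says that the
moments of the number of roots fixed by `Frob p` agree with those over `G`, and hence so do the
distributions. Finally, `|I_p|` is the number of roots of `f` fixed by `Frob p`, for all but
finitely many `p`. In this way the full Chebotarev theorem is not needed.

The prime ideal theorem rests on the Wiener–Ikehara theorem. The input is a power-saving count of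
the ideals of bounded norm, smoothed by a Lipschitz weight: by Dirichlet's unit theorem it reduces
to comparing the sum of a compactly supported Lipschitz function over a lattice with its integral.
The Mellin transform of this count continues the Dedekind zeta function beyond the line `re s = 1`,
with a simple pole at `1`; the inequality `3 + 4 cos θ + cos (2 θ) ≥ 0` excludes zeros on that line.
-/

section FejerKernel

open Filter Topology MeasureTheory Set

/-- The Fejér kernel `(1 - cos x) / x ^ 2` of the real line, used as the test kernel of the
Wiener–Ikehara theorem. Writing it as the cosine transform of a triangle avoids the removable
singularity at `0`. -/
def fejerKernel (x : ℝ) : ℝ := ∫ y in (0 : ℝ)..1, (1 - y) * Real.cos (x * y)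

lemma fejerKernel_of_ne_zero {x : ℝ} (hx : x ≠ 0) : fejerKernel x = (1 - Real.cos x) / x ^ 2 := by
  have hderiv (y : ℝ) : HasDerivAt
      (fun y : ℝ ↦ (1 - y) * (Real.sin (x * y) / x) - Real.cos (x * y) / x ^ 2)
      ((1 - y) * Real.cos (x * y)) y := by
    have hxy : HasDerivAt (fun y : ℝ ↦ x * y) x y := by
      simpa using (hasDerivAt_id y).const_mul x
    have hsub : HasDerivAt (fun y : ℝ ↦ 1 - y) (-1) y := by
      simpa using (hasDerivAt_id y).const_sub 1
    refine ((hsub.mul (hxy.sin.div_const x)).sub (hxy.cos.div_const (x ^ 2))).congr_deriv ?_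
    field_simp
    ring
  rw [fejerKernel, intervalIntegral.integral_eq_sub_of_hasDerivAt (fun y _ ↦ hderiv y)
    (Continuous.intervalIntegrable (by fun_prop) _ _)]
  simp only [mul_one, mul_zero, sub_self, zero_mul, Real.cos_zero, Real.sin_zero, zero_div]
  ring

lemma fejerKernel_nonneg (x : ℝ) : 0 ≤ fejerKernel x := by
  rcases eq_or_ne x 0 with rfl | hx
  · refine intervalIntegral.integral_nonneg zero_le_one fun y hy ↦ ?_
    simpa using hy.2
  · rw [fejerKernel_of_ne_zero hx]
    exact div_nonneg (sub_nonneg.mpr (Real.cos_le_one x)) (sq_nonneg x)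

lemma fejerKernel_le_one (x : ℝ) : fejerKernel x ≤ 1 := by
  have hbound : ‖fejerKernel x‖ ≤ 1 * |(1 : ℝ) - 0| := by
    refine intervalIntegral.norm_integral_le_of_norm_le_const fun y hy ↦ ?_
    rw [uIoc_of_le zero_le_one] at hy
    rw [norm_mul, ← one_mul 1]
    gcongr
    · rw [Real.norm_eq_abs, abs_le]
      constructor <;> linarith [hy.1, hy.2]
    · exact Real.abs_cos_le_one _
  simpa using (le_abs_self _).trans hbound

lemma fejerKernel_le (x : ℝ) : fejerKernel x ≤ 3 * (1 + x ^ 2)⁻¹ := by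
  rw [← div_eq_mul_inv, le_div_iff₀ (by positivity)]
  have hsq : fejerKernel x * x ^ 2 ≤ 2 := by
    rcases eq_or_ne x 0 with rfl | hx
    · simp
    · rw [fejerKernel_of_ne_zero hx, div_mul_cancel₀ _ (by positivity)]
      linarith [Real.neg_one_le_cos x]
  linarith [fejerKernel_le_one x]

lemma continuous_fejerKernel : Continuous fejerKernel :=
  intervalIntegral.continuous_parametric_intervalIntegral_of_continuous' (by fun_prop) _ _

lemma integrable_fejerKernel : Integrable fejerKernel := by
  refine (integrable_inv_one_add_sq.const_mul 3).mono'
    continuous_fejerKernel.aestronglyMeasurable (.of_forall fun x ↦ ?_)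
  rw [Real.norm_of_nonneg (fejerKernel_nonneg x)]
  exact fejerKernel_le x

lemma integral_fejerKernel_pos : 0 < ∫ x, fejerKernel x := by
  refine integral_pos_of_integrable_nonneg_nonzero (x := Real.pi) continuous_fejerKernel
    integrable_fejerKernel fejerKernel_nonneg ?_
  simp [fejerKernel_of_ne_zero Real.pi_ne_zero]

lemma integrable_fejerKernel_comp {L : ℝ} (hL : L ≠ 0) (u : ℝ) :
    Integrable fun v ↦ fejerKernel (L * (u - v)) :=
  (integrable_fejerKernel.comp_mul_left' hL).comp_sub_left u

lemma integral_comp_mul_sub (f : ℝ → ℝ) {L : ℝ} (hL : 0 < L) (u : ℝ) :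
    ∫ v, f (L * (u - v)) = L⁻¹ * ∫ x, f x := by
  rw [integral_sub_left_eq_self (fun v ↦ f (L * v)) volume u, Measure.integral_comp_mul_left f L,
    abs_of_pos (inv_pos.mpr hL), smul_eq_mul]

lemma setIntegral_comp_mul_sub_Icc (f : ℝ → ℝ) {L : ℝ} (hL : 0 < L) (h u : ℝ) :
    ∫ v in Icc (u - h) (u + h), f (L * (u - v)) = L⁻¹ * ∫ x in Icc (-(L * h)) (L * h), f x := by
  have hmem (v : ℝ) : L * (u - v) ∈ Icc (-(L * h)) (L * h) ↔ v ∈ Icc (u - h) (u + h) := by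
    rw [mem_Icc, mem_Icc, ← mul_neg, mul_le_mul_iff_right₀ hL, mul_le_mul_iff_right₀ hL]
    constructor <;> rintro ⟨h₁, h₂⟩ <;> constructor <;> linarith
  rw [← integral_indicator measurableSet_Icc, ← integral_indicator measurableSet_Icc,
    ← integral_comp_mul_sub _ hL u]
  simp only [indicator, hmem]

lemma tendsto_setIntegral_fejerKernel {h : ℝ} (hh : 0 < h) :
    Tendsto (fun L ↦ ∫ x in Icc (-(L * h)) (L * h), fejerKernel x) atTop
      (𝓝 (∫ x, fejerKernel x)) := by
  have hlim : Tendsto (fun L : ℝ ↦ ∫ x in (-(L * h))..(L * h), fejerKernel x) atTop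
      (𝓝 (∫ x, fejerKernel x)) :=
    intervalIntegral_tendsto_integral integrable_fejerKernel
      (tendsto_neg_atTop_atBot.comp (tendsto_id.atTop_mul_const hh))
      (tendsto_id.atTop_mul_const hh)
  refine hlim.congr' ?_
  filter_upwards [eventually_ge_atTop 0] with L hL
  rw [intervalIntegral.integral_of_le (neg_le_self (mul_nonneg hL hh.le)),
    integral_Icc_eq_integral_Ioc]

lemma fejerKernel_eq_re (x : ℝ) :
    fejerKernel x =
      (∫ y in (0 : ℝ)..1, ((1 - y : ℝ) : ℂ) * Complex.exp (Complex.I * (x * y : ℝ))).re := by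
  rw [← Complex.reCLM_apply, ← ContinuousLinearMap.intervalIntegral_comp_comm _
    (Continuous.intervalIntegrable (by fun_prop) _ _)]
  simp_rw [Complex.reCLM_apply, Complex.re_ofReal_mul, mul_comm Complex.I,
    Complex.exp_ofReal_mul_I_re]
  rfl

lemma integral_mul_fejerKernel_eq_re {μ : Measure ℝ} [SFinite μ] {b : ℝ → ℝ}
    (hb : Integrable b μ) (L u : ℝ) :
    ∫ v, b v * fejerKernel (L * (u - v)) ∂μ =
      (∫ y in (0 : ℝ)..1, ((1 - y : ℝ) : ℂ) * Complex.exp (Complex.I * (L * u * y : ℝ)) *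
        ∫ v, (b v : ℂ) * Complex.exp (-(Complex.I * (L * y : ℝ)) * v) ∂μ).re := by
  set F : ℝ → ℝ → ℂ := fun v y ↦
    (b v : ℂ) * (((1 - y : ℝ) : ℂ) * Complex.exp (Complex.I * (L * (u - v) * y : ℝ))) with hF
  have hF_int : Integrable (Function.uncurry F) (μ.prod (volume.restrict (Ioc (0 : ℝ) 1))) := by
    refine (hb.ofReal (𝕜 := ℂ)).comp_fst _ |>.mul_bdd (c := 1)
      (Continuous.aestronglyMeasurable (by fun_prop)) ?_
    have hIoc : ∀ᵐ z ∂(μ.prod (volume.restrict (Ioc (0 : ℝ) 1))), z.2 ∈ Ioc (0 : ℝ) 1 :=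
      Measure.quasiMeasurePreserving_snd.ae (ae_restrict_mem measurableSet_Ioc)
    filter_upwards [hIoc] with z hz
    rw [norm_mul, mul_comm Complex.I, Complex.norm_exp_ofReal_mul_I, mul_one, Complex.norm_real,
      Real.norm_eq_abs, abs_le]
    constructor <;> linarith [hz.1, hz.2]
  have hleft : ∫ v, b v * fejerKernel (L * (u - v)) ∂μ =
      (∫ v, (∫ y in Ioc (0 : ℝ) 1, F v y) ∂μ).re := by
    refine Eq.trans ?_ (Complex.reCLM.integral_comp_comm hF_int.integral_prod_left)
    congr 1 with v
    simp only [hF, integral_const_mul, Complex.reCLM_apply, Complex.re_ofReal_mul,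
      fejerKernel_eq_re, intervalIntegral.integral_of_le zero_le_one]
  rw [hleft, integral_integral_swap hF_int, intervalIntegral.integral_of_le zero_le_one]
  congr 2 with y
  rw [← integral_const_mul]
  congr 1 with v
  have hexp : Complex.exp (Complex.I * (L * (u - v) * y : ℝ)) =
      Complex.exp (Complex.I * (L * u * y : ℝ)) *
        Complex.exp (-(Complex.I * (L * y : ℝ)) * v) := by
    rw [← Complex.exp_add]
    push_cast
    ring_nf
  simp only [hF, hexp]
  ring

end FejerKernel

section WienerIkehara

open Filter Topology MeasureTheory Set

lemma tendsto_setIntegral_mul_exp_neg {g : ℝ → ℝ} (hg : IntegrableOn g (Ioi 0)) :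
    Tendsto (fun ε : ℝ ↦ ∫ v in Ioi 0, g v * Real.exp (-ε * v)) (𝓝[>] 0)
      (𝓝 (∫ v in Ioi 0, g v)) := by
  refine tendsto_integral_filter_of_dominated_convergence (fun v ↦ ‖g v‖)
    (.of_forall fun ε ↦ hg.aestronglyMeasurable.mul
      (Continuous.aestronglyMeasurable (by fun_prop))) ?_ hg.norm (.of_forall fun v ↦ ?_)
  · filter_upwards [self_mem_nhdsWithin] with ε (hε : 0 < ε)
    filter_upwards [ae_restrict_mem measurableSet_Ioi] with v (hv : 0 < v)
    rw [norm_mul, Real.norm_of_nonneg (Real.exp_pos _).le]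
    exact mul_le_of_le_one_right (norm_nonneg _)
      (Real.exp_le_one_iff.mpr (by nlinarith [mul_pos hε hv]))
  · have hcont : Continuous fun ε : ℝ ↦ g v * Real.exp (-ε * v) := by fun_prop
    simpa using hcont.tendsto 0 |>.mono_left nhdsWithin_le_nhds

lemma tendsto_intervalIntegral_mul_comp_add {G : ℂ → ℂ} (hG : ContinuousOn G {s | 0 ≤ s.re})
    {φ : ℝ → ℂ} (hφ : Continuous φ) (L : ℝ) :
    Tendsto (fun ε : ℝ ↦ ∫ y in (0 : ℝ)..1, φ y * G (ε + Complex.I * (L * y : ℝ))) (𝓝[>] 0)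
      (𝓝 (∫ y in (0 : ℝ)..1, φ y * G (Complex.I * (L * y : ℝ)))) := by
  have hcont : ContinuousOn (fun z : ℝ × ℝ ↦ φ z.2 * G (z.1 + Complex.I * (L * z.2 : ℝ)))
      {z | 0 ≤ z.1} := by
    refine (hφ.comp continuous_snd).continuousOn.mul
      (hG.comp (Continuous.continuousOn (by fun_prop)) fun z hz ↦ ?_)
    simpa using hz
  obtain ⟨C, hC⟩ : ∃ C, ∀ z ∈ Icc (0 : ℝ) 1 ×ˢ Icc (0 : ℝ) 1,
      ‖φ z.2 * G (z.1 + Complex.I * (L * z.2 : ℝ))‖ ≤ C :=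
    (isCompact_Icc.prod isCompact_Icc).exists_bound_of_continuousOn
      (hcont.mono fun z hz ↦ hz.1.1)
  refine intervalIntegral.tendsto_integral_filter_of_dominated_convergence (fun _ ↦ C) ?_ ?_
    intervalIntegrable_const (.of_forall fun y _ ↦ ?_)
  · filter_upwards [self_mem_nhdsWithin] with ε (hε : 0 < ε)
    exact (hcont.comp_continuous (by fun_prop : Continuous fun y : ℝ ↦ (ε, y))
      fun _ ↦ hε.le).aestronglyMeasurable
  · filter_upwards [Ioc_mem_nhdsGT zero_lt_one] with ε hε
    refine .of_forall fun y hy ↦ ?_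
    rw [uIoc_of_le zero_le_one] at hy
    exact hC (ε, y) ⟨Ioc_subset_Icc_self hε, Ioc_subset_Icc_self hy⟩
  · have hlim : Tendsto (fun ε : ℝ ↦ (ε, y)) (𝓝[>] 0) (𝓝[{z | 0 ≤ z.1}] (0, y)) :=
      tendsto_nhdsWithin_of_tendsto_nhds_of_eventually_within _
        ((Continuous.tendsto (by fun_prop) 0).mono_left nhdsWithin_le_nhds)
        (by filter_upwards [self_mem_nhdsWithin] with ε hε using le_of_lt hε)
    simpa [Function.comp_def] using (hcont (0, y) (le_refl (0 : ℝ))).tendsto.comp hlim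

variable {b : ℝ → ℝ} {M : ℝ}

lemma setIntegral_mul_fejerKernel_eq_re (hb : Measurable b) (hM : ∀ v, |b v| ≤ M) {G : ℂ → ℂ}
    (hG : ContinuousOn G {s | 0 ≤ s.re})
    (hLaplace : ∀ s : ℂ, 0 < s.re → ∫ v in Ioi (0 : ℝ), (b v : ℂ) * Complex.exp (-s * v) = G s)
    {L : ℝ} (hL : L ≠ 0) (u : ℝ) :
    ∫ v in Ioi (0 : ℝ), b v * fejerKernel (L * (u - v)) =
      (∫ y in (0 : ℝ)..1, ((1 - y : ℝ) : ℂ) * Complex.exp (Complex.I * (L * u * y : ℝ)) *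
        G (Complex.I * (L * y : ℝ))).re := by
  have hdamped (ε : ℝ) (hε : 0 < ε) :
      ∫ v in Ioi (0 : ℝ), b v * fejerKernel (L * (u - v)) * Real.exp (-ε * v) =
        (∫ y in (0 : ℝ)..1, ((1 - y : ℝ) : ℂ) * Complex.exp (Complex.I * (L * u * y : ℝ)) *
          G (ε + Complex.I * (L * y : ℝ))).re := by
    have hint : IntegrableOn (fun v ↦ b v * Real.exp (-ε * v)) (Ioi 0) :=
      (integrableOn_exp_mul_Ioi (neg_lt_zero.mpr hε) 0).bdd_mul hb.aestronglyMeasurable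
        (.of_forall hM)
    simp_rw [mul_right_comm _ (fejerKernel _)]
    rw [integral_mul_fejerKernel_eq_re hint]
    congr 2 with y
    rw [← hLaplace _ (by simpa using hε)]
    congr 2 with v
    rw [Complex.ofReal_mul, mul_assoc, Complex.ofReal_exp, ← Complex.exp_add]
    push_cast
    ring_nf
  have hint : IntegrableOn (fun v ↦ b v * fejerKernel (L * (u - v))) (Ioi 0) :=
    ((integrable_fejerKernel_comp hL u).bdd_mul hb.aestronglyMeasurable
      (.of_forall hM)).integrableOn
  refine tendsto_nhds_unique (tendsto_setIntegral_mul_exp_neg hint) (Tendsto.congr' ?_ <|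
    (Complex.continuous_re.tendsto _).comp <| tendsto_intervalIntegral_mul_comp_add hG
      (by fun_prop : Continuous fun y : ℝ ↦
        ((1 - y : ℝ) : ℂ) * Complex.exp (Complex.I * (L * u * y : ℝ))) L)
  filter_upwards [self_mem_nhdsWithin] with ε hε using (hdamped ε hε).symm

lemma tendsto_setIntegral_mul_fejerKernel (hb : Measurable b) (hM : ∀ v, |b v| ≤ M) {G : ℂ → ℂ}
    (hG : ContinuousOn G {s | 0 ≤ s.re})
    (hLaplace : ∀ s : ℂ, 0 < s.re → ∫ v in Ioi (0 : ℝ), (b v : ℂ) * Complex.exp (-s * v) = G s)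
    {L : ℝ} (hL : 0 < L) :
    Tendsto (fun u ↦ ∫ v in Ioi (0 : ℝ), b v * fejerKernel (L * (u - v))) atTop (𝓝 0) := by
  have hfreq : Tendsto (fun u : ℝ ↦ -L / (2 * Real.pi) * u) atTop (cocompact ℝ) :=
    (tendsto_id.const_mul_atTop_of_neg
      (div_neg_of_neg_of_pos (neg_lt_zero.mpr hL) Real.two_pi_pos)).mono_right atBot_le_cocompact
  have hRL := (Complex.continuous_re.tendsto _).comp <|
    (Real.tendsto_integral_exp_smul_cocompact ((Ioc (0 : ℝ) 1).indicator
      fun y ↦ ((1 - y : ℝ) : ℂ) * G (Complex.I * (L * y : ℝ)))).comp hfreq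
  rw [Complex.zero_re] at hRL
  refine hRL.congr fun u ↦ ?_
  rw [setIntegral_mul_fejerKernel_eq_re hb hM hG hLaplace hL.ne' u,
    intervalIntegral.integral_of_le zero_le_one, ← integral_indicator measurableSet_Ioc]
  simp only [Function.comp_apply]
  congr 2 with y
  have hphase : 2 * Real.pi * -(y * (-L / (2 * Real.pi) * u)) = L * u * y := by
    field_simp [Real.pi_ne_zero]
  simp only [indicator, Circle.smul_def, Real.fourierChar_apply, hphase, smul_eq_mul,
    mul_comm Complex.I]
  split_ifs <;> ring

lemma le_setIntegral_mul_fejerKernel (hb : Measurable b) (hM : ∀ v, |b v| ≤ M)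
    {L h u c : ℝ} (hL : 0 < L) (hu : h < u) (hc : ∀ v ∈ Icc (u - h) (u + h), c ≤ b v) :
    L⁻¹ * ((c + M) * (∫ x in Icc (-(L * h)) (L * h), fejerKernel x) - M * ∫ x, fejerKernel x) ≤
      ∫ v in Ioi (0 : ℝ), b v * fejerKernel (L * (u - v)) := by
  set K : ℝ → ℝ := fun v ↦ fejerKernel (L * (u - v))
  have hK_nonneg (v : ℝ) : 0 ≤ K v := fejerKernel_nonneg _
  have hK : Integrable K := integrable_fejerKernel_comp hL.ne' u
  have hbK : Integrable fun v ↦ b v * K v := hK.bdd_mul hb.aestronglyMeasurable (.of_forall hM)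
  have hbMK : Integrable fun v ↦ (b v + M) * K v := by
    simpa only [add_mul] using! hbK.add (hK.const_mul M)
  have hbM (v : ℝ) : 0 ≤ b v + M := by linarith [neg_le_of_abs_le (hM v)]
  have hwindow : (c + M) * (L⁻¹ * ∫ x in Icc (-(L * h)) (L * h), fejerKernel x) ≤
      ∫ v in Ioi (0 : ℝ), (b v + M) * K v := calc
    _ = ∫ v in Icc (u - h) (u + h), (c + M) * K v := by
      rw [← setIntegral_comp_mul_sub_Icc _ hL, integral_const_mul]
    _ ≤ ∫ v in Icc (u - h) (u + h), (b v + M) * K v :=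
      setIntegral_mono_on (hK.const_mul _).integrableOn hbMK.integrableOn measurableSet_Icc
        fun v hv ↦ by gcongr; exacts [hK_nonneg v, hc v hv]
    _ ≤ _ := setIntegral_mono_set hbMK.integrableOn
      (.of_forall fun v ↦ mul_nonneg (hbM v) (hK_nonneg v))
      (LE.le.eventuallyLE fun v hv ↦ show 0 < v by linarith [hv.1])
  have hsplit : ∫ v in Ioi (0 : ℝ), (b v + M) * K v =
      (∫ v in Ioi (0 : ℝ), b v * K v) + M * ∫ v in Ioi (0 : ℝ), K v := by
    simp_rw [add_mul]
    rw [integral_add hbK.integrableOn (hK.const_mul M).integrableOn, integral_const_mul]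
  have hmass : ∫ v in Ioi (0 : ℝ), K v ≤ L⁻¹ * ∫ x, fejerKernel x :=
    (setIntegral_le_integral hK (.of_forall hK_nonneg)).trans_eq
      (integral_comp_mul_sub fejerKernel hL u)
  have hM_nonneg : 0 ≤ M := (abs_nonneg _).trans (hM 0)
  linarith [mul_le_mul_of_nonneg_left hmass hM_nonneg]

lemma eventually_exists_mem_Icc_lt (hb : Measurable b) (hM : ∀ v, |b v| ≤ M)
    (hmean : ∀ L : ℝ, 0 < L →
      Tendsto (fun u ↦ ∫ v in Ioi (0 : ℝ), b v * fejerKernel (L * (u - v))) atTop (𝓝 0))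
    {h c : ℝ} (hh : 0 < h) (hc : 0 < c) :
    ∀ᶠ u in atTop, ∃ v ∈ Icc (u - h) (u + h), b v < c := by
  have hlim := ((tendsto_setIntegral_fejerKernel hh).const_mul (c + M)).sub_const
    (M * ∫ x, fejerKernel x)
  have hpos : 0 < (c + M) * (∫ x, fejerKernel x) - M * ∫ x, fejerKernel x := by
    rw [← sub_mul, add_sub_cancel_right]
    exact mul_pos hc integral_fejerKernel_pos
  obtain ⟨L, hL_lim, hL⟩ := ((hlim.eventually_const_lt hpos).and (eventually_gt_atTop 0)).exists
  filter_upwards [(hmean L hL).eventually_lt_const (mul_pos (inv_pos.mpr hL) hL_lim),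
    eventually_gt_atTop h] with u hu_lt hu
  by_contra! hge
  exact hu_lt.not_ge (le_setIntegral_mul_fejerKernel hb hM hL hu hge)

lemma tendsto_of_tendsto_setIntegral_mul_fejerKernel {B : ℝ → ℝ} (hB : Measurable B)
    (hB_nonneg : ∀ v, 0 ≤ B v) (hBM : ∀ v, B v ≤ M)
    (hB_exp : ∀ u v, u ≤ v → B u ≤ B v * Real.exp (v - u)) {A : ℝ}
    (hmean : ∀ L : ℝ, 0 < L →
      Tendsto (fun u ↦ ∫ v in Ioi (0 : ℝ), (B v - A) * fejerKernel (L * (u - v))) atTop (𝓝 0)) :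
    Tendsto B atTop (𝓝 A) := by
  have hbound (v : ℝ) : |B v - A| ≤ M + |A| := by
    rw [abs_le]
    constructor <;> linarith [hB_nonneg v, hBM v, neg_abs_le A, le_abs_self A]
  have hmean_neg (L : ℝ) (hL : 0 < L) : Tendsto
      (fun u ↦ ∫ v in Ioi (0 : ℝ), -(B v - A) * fejerKernel (L * (u - v))) atTop (𝓝 0) := by
    simpa only [neg_mul, integral_neg, neg_zero] using (hmean L hL).neg
  have hgrow {u v h : ℝ} (huv : u ≤ v) (hvh : v ≤ u + 2 * h) :
      B u ≤ B v * Real.exp (2 * h) := by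
    refine (hB_exp u v huv).trans ?_
    gcongr
    exacts [hB_nonneg v, by linarith]
  rw [tendsto_order]
  constructor <;> intro a ha
  · have hcont : Continuous fun h : ℝ ↦ (A - h) - a * Real.exp (2 * h) := by fun_prop
    obtain ⟨h, hlt, hh⟩ := (((hcont.tendsto 0).mono_left nhdsWithin_le_nhds).eventually_const_lt
      (u := 0) (by simpa using ha)).and (self_mem_nhdsWithin (s := Ioi (0 : ℝ))) |>.exists
    have hev := eventually_exists_mem_Icc_lt (hB.sub_const A).neg
      (fun v ↦ (abs_neg _).trans_le (hbound v)) hmean_neg hh hh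
    filter_upwards [(tendsto_atTop_add_const_right atTop (-h) tendsto_id).eventually hev]
      with u ⟨v, hv, hBv⟩
    simp only [id] at hv
    have := hgrow (u := v) (v := u) (h := h) (by linarith [hv.2]) (by linarith [hv.1])
    refine lt_of_mul_lt_mul_right ?_ (Real.exp_pos (2 * h)).le
    simp only [Pi.neg_apply] at hBv
    linarith
  · have hcont : Continuous fun h : ℝ ↦ (A + h) * Real.exp (2 * h) := by fun_prop
    obtain ⟨h, hlt, hh⟩ := (((hcont.tendsto 0).mono_left nhdsWithin_le_nhds).eventually_lt_const
      (by simpa using ha)).and (self_mem_nhdsWithin (s := Ioi (0 : ℝ))) |>.exists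
    have hev := eventually_exists_mem_Icc_lt (hB.sub_const A) hbound hmean hh hh
    filter_upwards [(tendsto_atTop_add_const_right atTop h tendsto_id).eventually hev]
      with u ⟨v, hv, hBv⟩
    simp only [id] at hv
    calc B u ≤ B v * Real.exp (2 * h) := hgrow (by linarith [hv.1]) (by linarith [hv.2])
      _ ≤ (A + h) * Real.exp (2 * h) := by gcongr; linarith
      _ < a := hlt

theorem wiener_ikehara {S : ℝ → ℝ} (hS : Monotone S) (hS_nonneg : ∀ x, 0 ≤ S x) {M A : ℝ}
    (hM : ∀ x, 0 < x → S x ≤ M * x) {G : ℂ → ℂ} (hG : ContinuousOn G {s | 0 ≤ s.re})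
    (hLaplace : ∀ s : ℂ, 0 < s.re →
      ∫ v in Ioi (0 : ℝ), ((S (Real.exp v) * Real.exp (-v) - A : ℝ) : ℂ) * Complex.exp (-s * v) =
        G s) :
    Tendsto (fun x ↦ S x / x) atTop (𝓝 A) := by
  set B : ℝ → ℝ := fun v ↦ S (Real.exp v) * Real.exp (-v) with hB_def
  have hS_meas : Measurable S := hS.measurable
  have hB : Measurable B := by fun_prop
  have hB_nonneg (v : ℝ) : 0 ≤ B v := mul_nonneg (hS_nonneg _) (Real.exp_pos _).le
  have hBM (v : ℝ) : B v ≤ M := by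
    simpa only [hB_def, Real.exp_neg, ← div_eq_mul_inv, div_le_iff₀ (Real.exp_pos v)]
      using hM _ (Real.exp_pos v)
  have hB_exp (u v : ℝ) (huv : u ≤ v) : B u ≤ B v * Real.exp (v - u) := by
    simp only [hB_def, mul_assoc, ← Real.exp_add, ← sub_eq_neg_add, sub_sub_cancel_left]
    gcongr
    exact hS (Real.exp_le_exp.mpr huv)
  have hbound (v : ℝ) : |B v - A| ≤ M + |A| := by
    rw [abs_le]
    constructor <;> linarith [hB_nonneg v, hBM v, neg_abs_le A, le_abs_self A]
  have hlim : Tendsto B atTop (𝓝 A) :=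
    tendsto_of_tendsto_setIntegral_mul_fejerKernel hB hB_nonneg hBM hB_exp fun L hL ↦
      tendsto_setIntegral_mul_fejerKernel (hB.sub_const A) hbound hG hLaplace hL
  refine (hlim.comp Real.tendsto_log_atTop).congr' ?_
  filter_upwards [eventually_gt_atTop 0] with x hx
  simp only [hB_def, Function.comp_apply, Real.exp_neg, Real.exp_log hx, div_eq_mul_inv]

end WienerIkehara

section SmoothedSums

open Filter Topology MeasureTheory Set

/-- The weight `u (1 - u)` on `[0, 1]`, extended by zero. It is Lipschitz, so that weighted counts
of lattice points have a power saving, and its Mellin transform has no zeros. -/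
def parabolicWeight (u : ℝ) : ℝ :=
  max 0 (u * (1 - u))

lemma parabolicWeight_nonneg (u : ℝ) : 0 ≤ parabolicWeight u :=
  le_max_left _ _

lemma parabolicWeight_of_mem {u : ℝ} (hu : u ∈ Icc 0 1) : parabolicWeight u = u * (1 - u) :=
  max_eq_right (mul_nonneg hu.1 (sub_nonneg.2 hu.2))

lemma parabolicWeight_of_nonpos {u : ℝ} (hu : u ≤ 0) : parabolicWeight u = 0 :=
  max_eq_left (mul_nonpos_of_nonpos_of_nonneg hu (by linarith))

lemma parabolicWeight_of_one_le {u : ℝ} (hu : 1 ≤ u) : parabolicWeight u = 0 :=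
  max_eq_left (mul_nonpos_of_nonneg_of_nonpos (by linarith) (by linarith))

lemma continuous_parabolicWeight : Continuous parabolicWeight := by
  unfold parabolicWeight
  fun_prop

lemma ofReal_parabolicWeight_eq_indicator_sub (u : ℝ) :
    (parabolicWeight u : ℂ) = (Ioc 0 1).indicator (fun t : ℝ ↦ (t : ℂ) ^ (1 : ℂ)) u -
      (Ioc 0 1).indicator (fun t : ℝ ↦ (t : ℂ) ^ (2 : ℂ)) u := by
  by_cases hu : u ∈ Ioc 0 1
  · rw [indicator_of_mem hu, indicator_of_mem hu, parabolicWeight_of_mem (Ioc_subset_Icc_self hu),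
      Complex.cpow_one, Complex.cpow_ofNat]
    push_cast
    ring
  · rw [indicator_of_notMem hu, indicator_of_notMem hu, sub_self, Complex.ofReal_eq_zero]
    rcases le_or_gt u 0 with h | h
    · exact parabolicWeight_of_nonpos h
    · exact parabolicWeight_of_one_le (not_le.1 fun h' ↦ hu ⟨h, h'⟩).le

lemma hasMellin_parabolicWeight {s : ℂ} (hs : -1 < s.re) :
    HasMellin (fun u ↦ (parabolicWeight u : ℂ)) s (1 / ((s + 1) * (s + 2))) := by
  have h₁ := hasMellin_cpow_Ioc 1 (s := s) (by rw [Complex.one_re]; linarith)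
  have h₂ := hasMellin_cpow_Ioc 2 (s := s) (by rw [Complex.re_ofNat]; linarith)
  have hne₁ : s + 1 ≠ 0 :=
    Complex.ne_zero_of_re_pos (by rw [Complex.add_re, Complex.one_re]; linarith)
  have hne₂ : s + 2 ≠ 0 :=
    Complex.ne_zero_of_re_pos (by rw [Complex.add_re, Complex.re_ofNat]; linarith)
  have h := hasMellin_sub h₁.1 h₂.1
  rw [h₁.2, h₂.2, div_sub_div _ _ hne₁ hne₂,
    show 1 * (s + 2) - (s + 1) * 1 = 1 by ring] at h
  simpa only [ofReal_parabolicWeight_eq_indicator_sub] using h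

lemma setIntegral_norm_cpow_smul_comp_mul {E : Type*} [NormedAddCommGroup E] [NormedSpace ℂ E]
    (f : ℝ → E) (s : ℂ) {r : ℝ} (hr : 0 < r) :
    ∫ t in Ioi (0 : ℝ), ‖(t : ℂ) ^ (s - 1) • f (r * t)‖ =
      r ^ (-s.re) * ∫ t in Ioi (0 : ℝ), ‖(t : ℂ) ^ (s - 1) • f t‖ := by
  have hscale (t : ℝ) (ht : t ∈ Ioi 0) : ‖(t : ℂ) ^ (s - 1) • f (r * t)‖ =
      r ^ (1 - s.re) * ‖((r * t : ℝ) : ℂ) ^ (s - 1) • f (r * t)‖ := by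
    rw [norm_smul, norm_smul, Complex.norm_cpow_eq_rpow_re_of_pos ht,
      Complex.norm_cpow_eq_rpow_re_of_pos (mul_pos hr ht), Real.mul_rpow hr.le (le_of_lt ht),
      Complex.sub_re, Complex.one_re, ← mul_assoc, ← mul_assoc, ← Real.rpow_add hr]
    simp
  rw [setIntegral_congr_fun measurableSet_Ioi hscale, integral_const_mul,
    integral_comp_mul_left_Ioi (fun t : ℝ ↦ ‖(t : ℂ) ^ (s - 1) • f t‖) 0 hr, mul_zero, smul_eq_mul,
    ← mul_assoc, ← Real.rpow_neg_one, ← Real.rpow_add hr]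
  congr 2
  ring

lemma mellin_tsum_mul_comp_mul {f : ℝ → ℂ} {s : ℂ} {a : ℕ → ℂ} (hf : MellinConvergent f s)
    (hf₀ : f 0 = 0) (ha : LSeriesSummable a s) :
    mellin (fun t ↦ ∑' n, a n * f (n * t)) s = LSeries a s * mellin f s := by
  have hterm (n : ℕ) : MellinConvergent (fun t ↦ a n * f (n * t)) s ∧
      mellin (fun t ↦ a n * f (n * t)) s = LSeries.term a s n * mellin f s ∧
      ∫ t in Ioi (0 : ℝ), ‖(t : ℂ) ^ (s - 1) • (a n * f (n * t))‖ =
        ‖LSeries.term a s n‖ * ∫ t in Ioi (0 : ℝ), ‖(t : ℂ) ^ (s - 1) • f t‖ := by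
    rcases eq_or_ne n 0 with rfl | hn
    · simp [hf₀, MellinConvergent, mellin]
    have hn' : (0 : ℝ) < n := by positivity
    refine ⟨((MellinConvergent.comp_mul_left hn').2 hf).const_smul (a n), ?_, ?_⟩
    · have h := mellin_const_smul (fun t ↦ f (n * t)) s (a n)
      simp only [smul_eq_mul] at h
      rw [h, mellin_comp_mul_left _ _ hn', LSeries.term_of_ne_zero hn, Complex.cpow_neg,
        smul_eq_mul, Complex.ofReal_natCast]
      ring
    · have h := setIntegral_norm_cpow_smul_comp_mul f s hn'
      simp only [smul_eq_mul, mul_left_comm _ (a n), norm_mul (a n), integral_const_mul] at h ⊢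
      rw [h, LSeries.norm_term_eq, if_neg hn, Real.rpow_neg hn'.le]
      ring
  have hsum := hasSum_integral_of_summable_integral_norm (fun n ↦ (hterm n).1)
    (by simpa only [fun n ↦ (hterm n).2.2] using ha.norm.mul_right _)
  rw [LSeries, ← tsum_mul_right]
  simp only [← fun n ↦ (hterm n).2.1]
  rw [show ∑' n, mellin (fun t ↦ a n * f (n * t)) s = _ from hsum.tsum_eq, mellin]
  simp only [smul_eq_mul, tsum_mul_left]

/-- The smoothed count `∑ a n * w (n t)` of the sequence `a` up to `1 / t`, where `w` is
`parabolicWeight`. -/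
def parabolicSum (a : ℕ → ℝ) (t : ℝ) : ℝ :=
  ∑' n, a n * parabolicWeight (n * t)

lemma parabolicSum_of_notMem (a : ℕ → ℝ) {t : ℝ} (ht : t ∉ Ioc 0 1) : parabolicSum a t = 0 := by
  refine (tsum_congr fun n ↦ ?_).trans tsum_zero
  rcases le_or_gt t 0 with h | h
  · rw [parabolicWeight_of_nonpos (mul_nonpos_of_nonneg_of_nonpos n.cast_nonneg h), mul_zero]
  rcases n.eq_zero_or_pos with rfl | hn
  · simp [parabolicWeight_of_nonpos]
  have ht' : 1 < t := not_le.1 fun h' ↦ ht ⟨h, h'⟩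
  have hn' : (1 : ℝ) ≤ n := mod_cast hn
  rw [parabolicWeight_of_one_le (by nlinarith), mul_zero]

lemma summable_mul_parabolicWeight (a : ℕ → ℝ) (t : ℝ) :
    Summable fun n : ℕ ↦ a n * parabolicWeight (n * t) := by
  refine summable_of_ne_finset_zero (s := Finset.range ⌈t⁻¹⌉₊) fun n hn ↦ ?_
  rcases le_or_gt t 0 with h | h
  · rw [parabolicWeight_of_nonpos (mul_nonpos_of_nonneg_of_nonpos n.cast_nonneg h), mul_zero]
  · rw [Finset.mem_range, not_lt, Nat.ceil_le, inv_le_iff_one_le_mul₀ h] at hn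
    rw [parabolicWeight_of_one_le hn, mul_zero]

lemma measurable_parabolicSum (a : ℕ → ℝ) : Measurable (parabolicSum a) :=
  Measurable.tsum fun n ↦ by
    have := continuous_parabolicWeight.measurable
    fun_prop

variable {a : ℕ → ℝ} {c δ C : ℝ}

lemma sum_mul_cast_le_of_parabolicSum_le (ha : ∀ n, 0 ≤ a n)
    (hC : ∀ t ∈ Ioc (0 : ℝ) 1, parabolicSum a t ≤ C * t⁻¹) {N : ℕ} (hN : 1 ≤ N) :
    ∑ n ∈ Finset.Icc 1 N, a n * n ≤ 8 * C * (N : ℝ) ^ 2 := by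
  have hN' : (1 : ℝ) ≤ N := mod_cast hN
  set t : ℝ := (2 * N)⁻¹ with ht
  have ht_mem : t ∈ Ioc (0 : ℝ) 1 := ⟨by positivity, inv_le_one_of_one_le₀ (by linarith)⟩
  have hweight (n : ℕ) (hn : n ∈ Finset.Icc 1 N) :
      a n * n ≤ 4 * N * (a n * parabolicWeight (n * t)) := by
    have hn' : (n : ℝ) ≤ N := mod_cast (Finset.mem_Icc.1 hn).2
    have hnt : n * t ≤ 1 / 2 := by
      rw [ht, ← div_eq_mul_inv, div_le_iff₀ (by positivity)]
      linarith
    have hNt : 2 * N * t = 1 := mul_inv_cancel₀ (by positivity)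
    rw [parabolicWeight_of_mem ⟨by positivity, by linarith⟩]
    calc a n * n ≤ a n * n * (2 * (1 - n * t)) :=
          le_mul_of_one_le_right (mul_nonneg (ha n) n.cast_nonneg) (by linarith)
      _ = 4 * N * (a n * (n * t * (1 - n * t))) := by
          linear_combination (-2 * a n * n * (1 - n * t)) * hNt
  calc ∑ n ∈ Finset.Icc 1 N, a n * n
      ≤ ∑ n ∈ Finset.Icc 1 N, 4 * N * (a n * parabolicWeight (n * t)) := Finset.sum_le_sum hweight
    _ ≤ 4 * N * parabolicSum a t := by
        rw [← Finset.mul_sum]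
        gcongr
        exact (summable_mul_parabolicWeight a t).sum_le_tsum _
          fun n _ ↦ mul_nonneg (ha n) (parabolicWeight_nonneg _)
    _ ≤ 4 * N * (C * t⁻¹) := by gcongr; exact hC t ht_mem
    _ = 8 * C * (N : ℝ) ^ 2 := by rw [ht, inv_inv]; ring

lemma lSeries_term_mul_cast (a : ℕ → ℂ) (s : ℂ) :
    LSeries.term (fun n ↦ a n * n) (s + 1) = LSeries.term a s := by
  ext n
  rcases eq_or_ne n 0 with rfl | hn
  · simp
  have hn' : (n : ℂ) ≠ 0 := mod_cast hn
  rw [LSeries.term_of_ne_zero hn, LSeries.term_of_ne_zero hn, Complex.cpow_add _ _ hn',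
    Complex.cpow_one, mul_div_mul_right _ _ hn']

lemma lSeriesSummable_of_parabolicSum_le (ha : ∀ n, 0 ≤ a n)
    (hC : ∀ t ∈ Ioc (0 : ℝ) 1, parabolicSum a t ≤ C * t⁻¹) {s : ℂ} (hs : 1 < s.re) :
    LSeriesSummable (fun n ↦ (a n : ℂ)) s := by
  have hO : (fun N : ℕ ↦ ∑ n ∈ Finset.Icc 1 N, a n * n) =O[atTop] fun N ↦ (N : ℝ) ^ (2 : ℝ) := by
    refine Asymptotics.IsBigO.of_bound (8 * C) ?_
    filter_upwards [eventually_ge_atTop 1] with N hN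
    rw [Real.norm_of_nonneg (Finset.sum_nonneg fun n _ ↦ mul_nonneg (ha n) n.cast_nonneg),
      Real.norm_of_nonneg (by positivity), Real.rpow_two]
    exact sum_mul_cast_le_of_parabolicSum_le ha hC hN
  have h := LSeriesSummable_of_sum_norm_bigO_and_nonneg hO
    (fun n ↦ mul_nonneg (ha n) n.cast_nonneg) zero_le_two (s := s + 1)
    (by rw [Complex.add_re, Complex.one_re]; linarith)
  push_cast at h
  rwa [LSeriesSummable, lSeries_term_mul_cast] at h

lemma mellin_parabolicSum (ha : ∀ n, 0 ≤ a n)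
    (hC : ∀ t ∈ Ioc (0 : ℝ) 1, parabolicSum a t ≤ C * t⁻¹) {s : ℂ} (hs : 1 < s.re) :
    mellin (fun t ↦ (parabolicSum a t : ℂ)) s =
      LSeries (fun n ↦ (a n : ℂ)) s * (1 / ((s + 1) * (s + 2))) := by
  have hw := hasMellin_parabolicWeight (s := s) (by linarith)
  rw [← hw.2, ← mellin_tsum_mul_comp_mul hw.1 (by simp [parabolicWeight_of_nonpos])
    (lSeriesSummable_of_parabolicSum_le ha hC hs)]
  simp [parabolicSum, Complex.ofReal_tsum]

/-- The deviation of the smoothed count `parabolicSum a t` from `c / t` on `(0, 1]`. -/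
def parabolicError (a : ℕ → ℝ) (c t : ℝ) : ℂ :=
  parabolicSum a t - (Ioc 0 1).indicator (fun t : ℝ ↦ (c : ℂ) * (t : ℂ) ^ (-1 : ℂ)) t

lemma norm_parabolicError_le
    (hC : ∀ t ∈ Ioc (0 : ℝ) 1, |parabolicSum a t - c * t⁻¹| ≤ C * t ^ (δ - 1)) (t : ℝ) :
    ‖parabolicError a c t‖ ≤ ‖(Ioc 0 1).indicator (fun t ↦ C * t ^ (δ - 1)) t‖ := by
  by_cases ht : t ∈ Ioc 0 1
  · rw [parabolicError, indicator_of_mem ht, indicator_of_mem ht, Complex.cpow_neg_one]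
    refine le_trans ?_ (Real.le_norm_self _)
    exact_mod_cast hC t ht
  · simp [parabolicError, ht, parabolicSum_of_notMem]

lemma locallyIntegrableOn_parabolicError
    (hC : ∀ t ∈ Ioc (0 : ℝ) 1, |parabolicSum a t - c * t⁻¹| ≤ C * t ^ (δ - 1)) :
    LocallyIntegrableOn (parabolicError a c) (Ioi 0) := by
  have hbound : LocallyIntegrableOn (fun t : ℝ ↦ C * t ^ (δ - 1)) (Ioi 0) := by
    refine ContinuousOn.locallyIntegrableOn (fun t ht ↦ ?_) measurableSet_Ioi
    exact ((Real.continuousAt_rpow_const _ _ (.inl (ne_of_gt ht))).const_mul C).continuousWithinAt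
  refine hbound.mono (Measurable.aestronglyMeasurable ?_) (.of_forall fun t ↦
    (norm_parabolicError_le hC t).trans (norm_indicator_le_norm_self _ _))
  have hsum := measurable_parabolicSum a
  exact (Complex.measurable_ofReal.comp hsum).sub
    (Measurable.indicator (by fun_prop) measurableSet_Ioc)

lemma parabolicError_isBigO_nhdsGT_zero
    (hC : ∀ t ∈ Ioc (0 : ℝ) 1, |parabolicSum a t - c * t⁻¹| ≤ C * t ^ (δ - 1)) :
    parabolicError a c =O[𝓝[>] 0] (· ^ (-(1 - δ))) := by
  refine Asymptotics.IsBigO.of_bound |C| (.of_forall fun t ↦ ?_)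
  rw [neg_sub, ← Real.norm_eq_abs, ← norm_mul]
  exact (norm_parabolicError_le hC t).trans (norm_indicator_le_norm_self _ _)

lemma parabolicError_isBigO_atTop (a : ℕ → ℝ) (c r : ℝ) :
    parabolicError a c =O[atTop] (· ^ (-r)) := by
  refine Asymptotics.IsBigO.of_bound 0 ?_
  filter_upwards [eventually_gt_atTop 1] with t ht
  have ht' : t ∉ Ioc (0 : ℝ) 1 := fun h ↦ ht.not_ge h.2
  simp [parabolicError, ht', parabolicSum_of_notMem]

lemma mellin_parabolicSum_eq_mellin_parabolicError_add (hδ : 0 < δ)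
    (hC : ∀ t ∈ Ioc (0 : ℝ) 1, |parabolicSum a t - c * t⁻¹| ≤ C * t ^ (δ - 1)) {s : ℂ}
    (hs : 1 < s.re) :
    mellin (fun t ↦ (parabolicSum a t : ℂ)) s = mellin (parabolicError a c) s + c / (s - 1) := by
  have herror := mellinConvergent_of_isBigO_rpow (locallyIntegrableOn_parabolicError hC)
    (parabolicError_isBigO_atTop a c (s.re + 1)) (by linarith)
    (parabolicError_isBigO_nhdsGT_zero hC) (by linarith)
  have hpole := hasMellin_cpow_Ioc (-1) (s := s) (by rw [Complex.neg_re, Complex.one_re]; linarith)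
  have h := (hasMellin_add herror (hpole.1.const_smul (c : ℂ))).2
  rw [mellin_const_smul, hpole.2] at h
  convert h using 2
  · ext t
    by_cases ht : t ∈ Ioc 0 1 <;> simp [parabolicError, ht]
  · rw [smul_eq_mul, mul_one_div, sub_eq_add_neg]

theorem exists_differentiableOn_eq_mul_lSeries (ha : ∀ n, 0 ≤ a n) (hδ : 0 < δ)
    (hC : ∀ t ∈ Ioc (0 : ℝ) 1, |parabolicSum a t - c * t⁻¹| ≤ C * t ^ (δ - 1)) :
    (∀ s : ℂ, 1 < s.re → LSeriesSummable (fun n ↦ (a n : ℂ)) s) ∧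
      ∃ H : ℂ → ℂ, DifferentiableOn ℂ H {s | 1 - δ < s.re} ∧ H 1 = 6 * c ∧
        ∀ s : ℂ, 1 < s.re → H s = (s - 1) * LSeries (fun n ↦ (a n : ℂ)) s := by
  have hC' : ∀ t ∈ Ioc (0 : ℝ) 1, parabolicSum a t ≤ (c + |C|) * t⁻¹ := fun t ht ↦ by
    have hpow : t ^ (δ - 1) ≤ t⁻¹ := by
      rw [← Real.rpow_neg_one]
      exact Real.rpow_le_rpow_of_exponent_ge ht.1 ht.2 (by linarith)
    have := (abs_sub_le_iff.1 (hC t ht)).1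
    have := mul_le_mul (le_abs_self C) hpow (Real.rpow_nonneg ht.1.le _) (abs_nonneg C)
    linarith
  refine ⟨fun s hs ↦ lSeriesSummable_of_parabolicSum_le ha hC' hs,
    fun s ↦ (s + 1) * (s + 2) * (c + (s - 1) * mellin (parabolicError a c) s),
    fun s hs ↦ DifferentiableAt.differentiableWithinAt ?_, by norm_num, fun s hs ↦ ?_⟩
  · have := mellin_differentiableAt_of_isBigO_rpow (locallyIntegrableOn_parabolicError hC)
      (parabolicError_isBigO_atTop a c (s.re + 1)) (by linarith)
      (parabolicError_isBigO_nhdsGT_zero hC) hs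
    fun_prop
  · have hmellin := mellin_parabolicSum_eq_mellin_parabolicError_add hδ hC hs
    rw [mellin_parabolicSum ha hC' hs] at hmellin
    have hne₀ : s - 1 ≠ 0 :=
      Complex.ne_zero_of_re_pos (by rw [Complex.sub_re, Complex.one_re]; linarith)
    have hne₁ : s + 1 ≠ 0 :=
      Complex.ne_zero_of_re_pos (by rw [Complex.add_re, Complex.one_re]; linarith)
    have hne₂ : s + 2 ≠ 0 :=
      Complex.ne_zero_of_re_pos (by rw [Complex.add_re, Complex.re_ofNat]; linarith)
    field_simp at hmellin
    linear_combination -hmellin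

end SmoothedSums

section NonVanishing

open Filter Topology

lemma tendsto_sub_mul_logDeriv {f : ℂ → ℂ} {z : ℂ} (hf : AnalyticAt ℂ f z)
    (hord : analyticOrderAt f z ≠ ⊤) :
    Tendsto (fun w ↦ (w - z) * logDeriv f w) (𝓝[≠] z) (𝓝 (analyticOrderNatAt f z)) := by
  obtain ⟨g, hg, hgz, hfg⟩ := hf.analyticOrderAt_ne_top.1 hord
  set m := analyticOrderNatAt f z
  have hlogDeriv : ∀ᶠ w in 𝓝[≠] z, m + (w - z) * logDeriv g w = (w - z) * logDeriv f w := by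
    filter_upwards [hfg.eventually_nhds.filter_mono nhdsWithin_le_nhds,
      (hg.continuousAt.eventually_ne hgz).filter_mono nhdsWithin_le_nhds,
      hg.eventually_analyticAt.filter_mono nhdsWithin_le_nhds, self_mem_nhdsWithin]
      with w hfw hgw hg' hwz
    have hsub : w - z ≠ 0 := sub_ne_zero.2 hwz
    have hfac : logDeriv f w = logDeriv (fun w ↦ (w - z) ^ m * g w) w := by
      simp only [logDeriv_apply, EventuallyEq.deriv_eq hfw, EventuallyEq.eq_of_nhds hfw,
        smul_eq_mul]
    rw [hfac, logDeriv_mul (f := fun w ↦ (w - z) ^ m) w (pow_ne_zero m hsub) hgw (by fun_prop)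
      hg'.differentiableAt,
      logDeriv_fun_pow (by fun_prop), logDeriv_apply, logDeriv_apply, deriv_sub_const, deriv_id'']
    field_simp
  refine Tendsto.congr' hlogDeriv (Tendsto.mono_left ?_ nhdsWithin_le_nhds)
  have hsub : Tendsto (fun w ↦ w - z) (𝓝 z) (𝓝 0) := by
    simpa using (continuous_sub_right z).tendsto z
  have hlim := (hsub.mul (hg.deriv.continuousAt.div hg.continuousAt hgz)).const_add (m : ℂ)
  rwa [zero_mul, add_zero] at hlim

lemma tendsto_add_ofReal_nhdsGT_zero (s : ℂ) :
    Tendsto (fun ε : ℝ ↦ s + ε) (𝓝[>] 0) (𝓝[≠] s) := by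
  refine tendsto_nhdsWithin_iff.2 ⟨?_, ?_⟩
  · have hcont : Continuous fun ε : ℝ ↦ s + ε := by fun_prop
    simpa using (hcont.tendsto 0).mono_left nhdsWithin_le_nhds
  · filter_upwards [self_mem_nhdsWithin] with ε hε
    simpa using (Set.mem_Ioi.1 hε).ne'

variable {b : ℕ → ℝ}

lemma re_three_four_one_lSeries_nonneg (hb : ∀ n, 0 ≤ b n)
    (hb_sum : ∀ s : ℂ, 1 < s.re → LSeriesSummable (fun n ↦ (b n : ℂ)) s) {σ : ℝ} (hσ : 1 < σ)
    (t : ℝ) :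
    0 ≤ (3 * LSeries (fun n ↦ (b n : ℂ)) σ + 4 * LSeries (fun n ↦ (b n : ℂ)) (σ + t * Complex.I) +
      LSeries (fun n ↦ (b n : ℂ)) (σ + (2 * t : ℝ) * Complex.I)).re := by
  have h₀ := (hb_sum σ (by simpa using hσ)).LSeriesHasSum
  have h₁ := (hb_sum (σ + t * Complex.I) (by simpa using hσ)).LSeriesHasSum
  have h₂ := (hb_sum (σ + (2 * t : ℝ) * Complex.I) (by simpa using hσ)).LSeriesHasSum
  refine (Complex.hasSum_re (((h₀.mul_left 3).add (h₁.mul_left 4)).add h₂)).nonneg fun n ↦ ?_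
  rcases eq_or_ne n 0 with rfl | hn
  · simp
  have hn' : (n : ℂ) ≠ 0 := mod_cast hn
  have hpos : (0 : ℝ) < n := by positivity
  set z : ℂ := (n : ℂ) ^ (-(t * Complex.I)) with hz
  have hz_norm : z.re ^ 2 + z.im ^ 2 = 1 := by
    have hnorm := Complex.norm_cpow_eq_rpow_re_of_pos hpos (-(t * Complex.I))
    rw [Complex.ofReal_natCast, ← hz] at hnorm
    rw [sq, sq, ← Complex.normSq_apply, ← Complex.sq_norm, hnorm]
    simp
  have hterm₁ : LSeries.term (fun n ↦ (b n : ℂ)) (σ + t * Complex.I) n =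
      ((b n * (n : ℝ) ^ (-σ) : ℝ) : ℂ) * z := by
    rw [LSeries.term_of_ne_zero hn, div_eq_mul_inv, ← Complex.cpow_neg, neg_add,
      Complex.cpow_add _ _ hn', Complex.ofReal_mul, Complex.ofReal_cpow hpos.le]
    push_cast
    ring
  have hterm₂ : LSeries.term (fun n ↦ (b n : ℂ)) (σ + (2 * t : ℝ) * Complex.I) n =
      ((b n * (n : ℝ) ^ (-σ) : ℝ) : ℂ) * z ^ 2 := by
    rw [LSeries.term_of_ne_zero hn, div_eq_mul_inv, ← Complex.cpow_neg, neg_add,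
      Complex.cpow_add _ _ hn', Complex.ofReal_mul (b n), Complex.ofReal_cpow hpos.le, hz,
      ← Complex.cpow_nat_mul]
    push_cast
    ring_nf
  have hterm₀ : LSeries.term (fun n ↦ (b n : ℂ)) σ n = ((b n * (n : ℝ) ^ (-σ) : ℝ) : ℂ) := by
    rw [LSeries.term_of_ne_zero hn, div_eq_mul_inv, ← Complex.cpow_neg, Complex.ofReal_mul,
      Complex.ofReal_cpow hpos.le]
    push_cast
    rfl
  have hsquare : (3 + 4 * z + z ^ 2).re = 2 * (1 + z.re) ^ 2 := by
    simp only [Complex.add_re, Complex.re_ofNat, Complex.mul_re, Complex.im_ofNat, pow_two]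
    linear_combination -hz_norm
  calc 0 ≤ b n * (n : ℝ) ^ (-σ) * (2 * (1 + z.re) ^ 2) := by have := hb n; positivity
    _ = _ := by
      rw [← hsquare, ← Complex.re_ofReal_mul, hterm₀, hterm₁, hterm₂]
      ring_nf

variable {H L : ℂ → ℂ}

/-- `H` is an analytic continuation of `(s - 1) * A s`, where `A' = -A * L`, to the closed
half-plane `1 ≤ re s`, and `H 1 ≠ 0`. In the application `A` is a Dedekind zeta function. -/
structure IsPoleFreeContinuation (H L : ℂ → ℂ) : Prop where
  analyticOnNhd : AnalyticOnNhd ℂ H {s | 1 ≤ s.re}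
  apply_one_ne_zero : H 1 ≠ 0
  deriv_eq : ∀ s : ℂ, 1 < s.re → deriv H s = H s * (1 / (s - 1) - L s)

namespace IsPoleFreeContinuation

lemma analyticOrderAt_ne_top (h : IsPoleFreeContinuation H L) {s : ℂ} (hs : 1 ≤ s.re) :
    analyticOrderAt H s ≠ ⊤ := by
  have hone : (1 : ℂ) ∈ {s : ℂ | 1 ≤ s.re} := by simp
  refine h.analyticOnNhd.analyticOrderAt_ne_top_of_isPreconnected
    (convex_halfSpace_re_ge 1).isPreconnected hone hs ?_
  rw [(h.analyticOnNhd 1 hone).analyticOrderAt_eq_zero.2 h.apply_one_ne_zero]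
  exact ENat.zero_ne_top

lemma tendsto_mul (h : IsPoleFreeContinuation H L) {s : ℂ} (hs : 1 ≤ s.re) :
    Tendsto (fun ε : ℝ ↦ (ε : ℂ) * L (s + ε)) (𝓝[>] 0)
      (𝓝 ((if s = 1 then 1 else 0) - analyticOrderNatAt H s)) := by
  have hH := h.analyticOnNhd s hs
  have hord := h.analyticOrderAt_ne_top hs
  have hlim := tendsto_add_ofReal_nhdsGT_zero s
  have hpole : Tendsto (fun ε : ℝ ↦ (ε : ℂ) / (s + ε - 1)) (𝓝[>] 0)
      (𝓝 (if s = 1 then 1 else 0)) := by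
    split_ifs with hs₁
    · refine tendsto_const_nhds.congr' ?_
      filter_upwards [self_mem_nhdsWithin] with ε hε
      rw [hs₁, add_sub_cancel_left, div_self (Complex.ofReal_ne_zero.2 (Set.mem_Ioi.1 hε).ne')]
    · have hε : Tendsto (fun ε : ℝ ↦ (ε : ℂ)) (𝓝[>] 0) (𝓝 0) := by
        simpa using (tendsto_add_ofReal_nhdsGT_zero 0).mono_right nhdsWithin_le_nhds
      have hdiv := hε.div ((hlim.mono_right nhdsWithin_le_nhds).sub_const 1) (sub_ne_zero.2 hs₁)
      rwa [zero_div] at hdiv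
  refine (hpole.sub ((tendsto_sub_mul_logDeriv hH hord).comp hlim)).congr' ?_
  have hne : ∀ᶠ w in 𝓝[≠] s, H w ≠ 0 :=
    hH.eventually_eq_zero_or_eventually_ne_zero.resolve_left
      (mt analyticOrderAt_eq_top.2 hord)
  filter_upwards [hlim.eventually hne, self_mem_nhdsWithin] with ε hHε hε
  have hre : 1 < (s + ε).re := by simpa using hs.trans_lt (lt_add_of_pos_right _ hε)
  simp only [Function.comp_apply, logDeriv_apply, h.deriv_eq _ hre]
  field_simp
  ring

lemma ne_zero_of_one_lt_re (h : IsPoleFreeContinuation H L) {s : ℂ} (hs : 1 < s.re)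
    (hL : ContinuousAt L s) : H s ≠ 0 := by
  have hs₁ : s ≠ 1 := fun hs' ↦ by simp [hs'] at hs
  have hε := (tendsto_add_ofReal_nhdsGT_zero 0).mono_right nhdsWithin_le_nhds
  have hzero := hε.mul (hL.tendsto.comp
    ((tendsto_add_ofReal_nhdsGT_zero s).mono_right nhdsWithin_le_nhds))
  simp only [zero_add, zero_mul] at hzero
  have hord := tendsto_nhds_unique hzero (h.tendsto_mul hs.le)
  have hord' : analyticOrderNatAt H s = 0 := by simpa [hs₁, eq_comm] using hord
  rw [← (h.analyticOnNhd s hs.le).analyticOrderAt_eq_zero,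
    ← Nat.cast_analyticOrderNatAt (h.analyticOrderAt_ne_top hs.le), hord', Nat.cast_zero]

lemma ne_zero_of_re_eq_one (h : IsPoleFreeContinuation H (LSeries fun n ↦ (b n : ℂ)))
    (hb : ∀ n, 0 ≤ b n) (hb_sum : ∀ s : ℂ, 1 < s.re → LSeriesSummable (fun n ↦ (b n : ℂ)) s)
    (t : ℝ) : H (1 + t * Complex.I) ≠ 0 := by
  rcases eq_or_ne t 0 with rfl | ht
  · simpa using h.apply_one_ne_zero
  have hre (u : ℝ) : 1 ≤ (1 + u * Complex.I : ℂ).re := by simp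
  have hne {u : ℝ} (hu : u ≠ 0) : (1 + u * Complex.I : ℂ) ≠ 1 := by simpa using hu
  have hord₀ : analyticOrderNatAt H 1 = 0 :=
    by_contra fun h' ↦ h.apply_one_ne_zero (apply_eq_zero_of_analyticOrderNatAt_ne_zero h')
  have h₀ := h.tendsto_mul (s := 1) (by simp)
  have h₁ := h.tendsto_mul (hre t)
  have h₂ := h.tendsto_mul (hre (2 * t))
  rw [if_pos rfl, hord₀] at h₀
  rw [if_neg (hne ht)] at h₁
  rw [if_neg (hne (mul_ne_zero two_ne_zero ht))] at h₂
  have hnonneg := ge_of_tendsto (Complex.continuous_re.continuousAt.tendsto.comp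
    (((h₀.const_mul 3).add (h₁.const_mul 4)).add h₂)) (b := 0) (by
    filter_upwards [self_mem_nhdsWithin] with ε hε
    rw [Set.mem_Ioi] at hε
    have hpos := mul_nonneg hε.le
      (re_three_four_one_lSeries_nonneg hb hb_sum (lt_add_of_pos_right 1 hε) t)
    rw [← Complex.re_ofReal_mul] at hpos
    have hshift (u : ℝ) : (1 + u * Complex.I + ε : ℂ) = (1 + ε : ℝ) + u * Complex.I := by
      push_cast
      ring
    convert hpos using 2
    simp only [Function.comp_apply, hshift]
    push_cast
    ring_nf)
  -- `3 - 4 m₁ - m₂ ≥ 0` for the orders of vanishing `m₁`, `m₂` at `1 + t i` and `1 + 2 t i`.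
  have horders : 4 * (analyticOrderNatAt H (1 + t * Complex.I) : ℝ) +
      analyticOrderNatAt H (1 + (2 * t : ℝ) * Complex.I) ≤ 3 := by
    simp only [Complex.add_re, Complex.mul_re, Complex.sub_re, Complex.re_ofNat, Complex.im_ofNat,
      Complex.natCast_re, Complex.zero_re, CharP.cast_eq_zero, sub_zero, mul_one, zero_mul]
      at hnonneg
    linarith
  have hord₁ : analyticOrderNatAt H (1 + t * Complex.I) = 0 := by
    have : 4 * analyticOrderNatAt H (1 + t * Complex.I) +
      analyticOrderNatAt H (1 + (2 * t : ℝ) * Complex.I) ≤ 3 := mod_cast horders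
    omega
  rw [← (h.analyticOnNhd _ (hre t)).analyticOrderAt_eq_zero,
    ← Nat.cast_analyticOrderNatAt (h.analyticOrderAt_ne_top (hre t)), hord₁, Nat.cast_zero]

end IsPoleFreeContinuation

end NonVanishing

section AbstractPrimeNumberTheorem

open Filter Topology MeasureTheory Set

/-- The summatory function `∑_{n ≤ x} b n`, where `n` starts at `1` as in an `L`-series. -/
def summatory (b : ℕ → ℝ) (x : ℝ) : ℝ :=
  ∑ n ∈ Finset.Icc 1 ⌊x⌋₊, b n

variable {a b : ℕ → ℝ} {K : ℝ} {s : ℂ}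

lemma summatory_nonneg (hb : ∀ n, 0 ≤ b n) (x : ℝ) : 0 ≤ summatory b x :=
  Finset.sum_nonneg fun n _ ↦ hb n

lemma monotone_summatory (hb : ∀ n, 0 ≤ b n) : Monotone (summatory b) := fun _ _ hxy ↦
  Finset.sum_le_sum_of_subset_of_nonneg (Finset.Icc_subset_Icc_right (Nat.floor_mono hxy))
    fun n _ _ ↦ hb n

lemma summatory_natCast_isBigO (hb : ∀ n, 0 ≤ b n) (hK : ∀ x, 0 ≤ x → summatory b x ≤ K * x) :
    (fun N : ℕ ↦ ∑ k ∈ Finset.Icc 1 N, b k) =O[atTop] fun N ↦ (N : ℝ) ^ (1 : ℝ) :=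
  Asymptotics.IsBigO.of_bound K <| .of_forall fun N ↦ by
    rw [Real.rpow_one, Real.norm_of_nonneg (Finset.sum_nonneg fun k _ ↦ hb k),
      Real.norm_of_nonneg N.cast_nonneg]
    simpa [summatory] using hK N N.cast_nonneg

lemma lSeriesSummable_of_summatory_le (hb : ∀ n, 0 ≤ b n)
    (hK : ∀ x, 0 ≤ x → summatory b x ≤ K * x) (hs : 1 < s.re) :
    LSeriesSummable (fun n ↦ (b n : ℂ)) s :=
  LSeriesSummable_of_sum_norm_bigO_and_nonneg (summatory_natCast_isBigO hb hK) hb zero_le_one hs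

lemma lSeries_eq_mul_integral_summatory_exp (hb : ∀ n, 0 ≤ b n)
    (hK : ∀ x, 0 ≤ x → summatory b x ≤ K * x) (hs : 1 < s.re) :
    LSeries (fun n ↦ (b n : ℂ)) s =
      s * ∫ v in Ioi (0 : ℝ), (summatory b (Real.exp v) : ℂ) * Complex.exp (-s * v) := by
  rw [LSeries_eq_mul_integral_of_nonneg b zero_le_one hs (summatory_natCast_isBigO hb hK) hb,
    ← Real.exp_zero, ← integral_comp_exp_Ioi]
  congr 1
  refine setIntegral_congr_fun measurableSet_Ioi fun v _ ↦ ?_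
  have hcpow : (Real.exp v : ℂ) ^ (-(s + 1)) = Complex.exp (-v) * Complex.exp (-s * v) := by
    rw [Complex.ofReal_exp, ← Complex.exp_add, Complex.cpow_def_of_ne_zero (Complex.exp_ne_zero _),
      ← Complex.ofReal_exp, ← Complex.ofReal_log (Real.exp_pos v).le, Real.log_exp]
    ring_nf
  have hexp : (Real.exp v : ℂ) * Complex.exp (-v) = 1 := by
    rw [Complex.ofReal_exp, ← Complex.exp_add, add_neg_cancel, Complex.exp_zero]
  simp only [hcpow, Complex.real_smul, summatory, Complex.ofReal_sum]
  linear_combination (∑ k ∈ Finset.Icc 1 ⌊Real.exp v⌋₊, (b k : ℂ)) * Complex.exp (-s * v) * hexp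

lemma integrableOn_summatory_exp (hb : ∀ n, 0 ≤ b n)
    (hK : ∀ x, 0 ≤ x → summatory b x ≤ K * x) (hs : 1 < s.re) :
    IntegrableOn (fun v : ℝ ↦ (summatory b (Real.exp v) : ℂ) * Complex.exp (-s * v)) (Ioi 0) := by
  have hdom : IntegrableOn (fun v : ℝ ↦ K * Real.exp ((1 - s.re) * v)) (Ioi 0) :=
    (integrableOn_exp_mul_Ioi (by linarith) 0).const_mul K
  have hmeas : Measurable fun v ↦ summatory b (Real.exp v) :=
    (monotone_summatory hb).measurable.comp Real.measurable_exp
  refine hdom.mono' (by fun_prop) (.of_forall fun v ↦ ?_)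
  have hexp : ‖Complex.exp (-s * v)‖ = Real.exp (-s.re * v) := by simp [Complex.norm_exp]
  calc ‖(summatory b (Real.exp v) : ℂ) * Complex.exp (-s * v)‖
      = summatory b (Real.exp v) * Real.exp (-s.re * v) := by
        rw [norm_mul, hexp, Complex.norm_of_nonneg (summatory_nonneg hb _)]
    _ ≤ K * Real.exp v * Real.exp (-s.re * v) := by gcongr; exact hK _ (Real.exp_pos v).le
    _ = K * Real.exp ((1 - s.re) * v) := by rw [mul_assoc, ← Real.exp_add]; ring_nf

lemma integral_summatory_exp_sub_one (hb : ∀ n, 0 ≤ b n)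
    (hK : ∀ x, 0 ≤ x → summatory b x ≤ K * x) (hs : 0 < s.re) :
    ∫ v in Ioi (0 : ℝ), ((summatory b (Real.exp v) * Real.exp (-v) - 1 : ℝ) : ℂ) *
      Complex.exp (-s * v) = LSeries (fun n ↦ (b n : ℂ)) (s + 1) / (s + 1) - 1 / s := by
  have hs₁ : 1 < (s + 1).re := by simpa using hs
  have hs₀ : (-s).re < 0 := by simpa using hs
  have hexp : ∫ v in Ioi (0 : ℝ), Complex.exp (-s * v) = 1 / s := by
    rw [integral_exp_mul_complex_Ioi hs₀, Complex.ofReal_zero, mul_zero, Complex.exp_zero,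
      neg_div_neg_eq]
  rw [lSeries_eq_mul_integral_summatory_exp hb hK hs₁,
    mul_div_cancel_left₀ _ (Complex.ne_zero_of_one_lt_re hs₁), ← hexp,
    ← integral_sub (integrableOn_summatory_exp hb hK hs₁) (integrableOn_exp_mul_complex_Ioi hs₀ 0)]
  refine setIntegral_congr_fun measurableSet_Ioi fun v _ ↦ ?_
  have hsplit : Complex.exp (-(s + 1) * v) = Complex.exp (-v) * Complex.exp (-s * v) := by
    rw [← Complex.exp_add]
    ring_nf
  simp only [hsplit]
  push_cast
  ring

lemma abscissaOfAbsConv_lt_of_lSeriesSummable {f : ℕ → ℂ}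
    (hf : ∀ s : ℂ, 1 < s.re → LSeriesSummable f s) (hs : 1 < s.re) :
    LSeries.abscissaOfAbsConv f < s.re := by
  have hle : LSeries.abscissaOfAbsConv f ≤ ((1 : ℝ) : EReal) :=
    LSeries.abscissaOfAbsConv_le_of_forall_lt_LSeriesSummable fun y hy ↦ hf y (by simpa using hy)
  exact hle.trans_lt (mod_cast hs)

lemma hasDerivAt_lSeries_of_convolution
    (ha : ∀ s : ℂ, 1 < s.re → LSeriesSummable (fun n ↦ (a n : ℂ)) s)
    (hb : ∀ s : ℂ, 1 < s.re → LSeriesSummable (fun n ↦ (b n : ℂ)) s)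
    (hconv : ∀ n, ∑ p ∈ n.divisorsAntidiagonal, a p.1 * b p.2 = a n * Real.log n) (hs : 1 < s.re) :
    HasDerivAt (LSeries fun n ↦ (a n : ℂ))
      (-(LSeries (fun n ↦ (a n : ℂ)) s * LSeries (fun n ↦ (b n : ℂ)) s)) s := by
  convert LSeries_hasDerivAt (abscissaOfAbsConv_lt_of_lSeriesSummable ha hs) using 2
  rw [← LSeries_convolution' (ha s hs) (hb s hs), LSeries.convolution_def]
  congr 1 with n
  rw [LSeries.logMul, ← Complex.natCast_log, mul_comm, ← Complex.ofReal_mul, ← hconv]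
  push_cast
  rfl

lemma isPoleFreeContinuation_of_convolution {H : ℂ → ℂ} {δ : ℝ} (hδ : 0 < δ)
    (hH : DifferentiableOn ℂ H {s | 1 - δ < s.re}) (hH₁ : H 1 ≠ 0)
    (hHA : ∀ s : ℂ, 1 < s.re → H s = (s - 1) * LSeries (fun n ↦ (a n : ℂ)) s)
    (ha : ∀ s : ℂ, 1 < s.re → LSeriesSummable (fun n ↦ (a n : ℂ)) s)
    (hb : ∀ s : ℂ, 1 < s.re → LSeriesSummable (fun n ↦ (b n : ℂ)) s)
    (hconv : ∀ n, ∑ p ∈ n.divisorsAntidiagonal, a p.1 * b p.2 = a n * Real.log n) :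
    IsPoleFreeContinuation H (LSeries fun n ↦ (b n : ℂ)) where
  analyticOnNhd := (hH.analyticOnNhd (isOpen_lt continuous_const Complex.continuous_re)).mono
    fun s (hs : 1 ≤ s.re) ↦ show 1 - δ < s.re by linarith
  apply_one_ne_zero := hH₁
  deriv_eq s hs := by
    have hs₁ : s - 1 ≠ 0 := fun h ↦ by simp [sub_eq_zero.1 h] at hs
    have hev : H =ᶠ[𝓝 s] fun s ↦ (s - 1) * LSeries (fun n ↦ (a n : ℂ)) s := by
      filter_upwards [(isOpen_lt continuous_const Complex.continuous_re).mem_nhds hs] with z hz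
      exact hHA z hz
    rw [hev.deriv_eq, hev.self_of_nhds, (((hasDerivAt_id' s).sub_const 1).fun_mul
      (hasDerivAt_lSeries_of_convolution ha hb hconv hs)).deriv]
    field_simp
    ring

theorem IsPoleFreeContinuation.tendsto_summatory_div {H : ℂ → ℂ}
    (h : IsPoleFreeContinuation H (LSeries fun n ↦ (b n : ℂ))) (hb : ∀ n, 0 ≤ b n)
    (hK : ∀ x, 0 ≤ x → summatory b x ≤ K * x) :
    Tendsto (fun x ↦ summatory b x / x) atTop (𝓝 1) := by
  have hsum (s : ℂ) (hs : 1 < s.re) := lSeriesSummable_of_summatory_le hb hK hs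
  have hne (s : ℂ) (hs : 1 ≤ s.re) : H s ≠ 0 := by
    rcases hs.eq_or_lt with hs | hs
    · have hs' : s = 1 + s.im * Complex.I := by simpa [← hs] using (Complex.re_add_im s).symm
      exact hs' ▸ h.ne_zero_of_re_eq_one hb hsum s.im
    · exact h.ne_zero_of_one_lt_re hs (LSeries_hasDerivAt
        (abscissaOfAbsConv_lt_of_lSeriesSummable hsum hs)).continuousAt
  refine wiener_ikehara (monotone_summatory hb) (summatory_nonneg hb) (fun x hx ↦ hK x hx.le)
    (G := fun s ↦ (-logDeriv H (s + 1) - 1) / (s + 1)) (fun s (hs : 0 ≤ s.re) ↦ ?_) fun s hs ↦ ?_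
  · have hs₁ : 1 ≤ (s + 1).re := by simpa using hs
    have hH := h.analyticOnNhd _ hs₁
    have hlogDeriv : ContinuousAt (fun s ↦ logDeriv H (s + 1)) s :=
      (hH.deriv.continuousAt.div hH.continuousAt (hne _ hs₁)).comp
        (f := fun s ↦ s + 1) (by fun_prop)
    exact ((hlogDeriv.neg.sub continuousAt_const).div (by fun_prop)
      (Complex.ne_zero_of_re_pos (by linarith))).continuousWithinAt
  · have hs₁ : 1 < (s + 1).re := by simpa using hs
    have hs₀ : s ≠ 0 := Complex.ne_zero_of_re_pos hs
    have hs₁' : s + 1 ≠ 0 := Complex.ne_zero_of_one_lt_re hs₁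
    have hH := hne _ hs₁.le
    rw [integral_summatory_exp_sub_one hb hK hs, logDeriv_apply, h.deriv_eq _ hs₁,
      add_sub_cancel_right]
    field_simp
    ring

lemma summatory_le_of_le_vonMangoldt {D : ℝ} (hD : 0 ≤ D)
    (hbD : ∀ n, b n ≤ D * ArithmeticFunction.vonMangoldt n) {x : ℝ} (hx : 0 ≤ x) :
    summatory b x ≤ D * (Real.log 4 + 4) * x :=
  calc summatory b x ≤ D * ∑ n ∈ Finset.Icc 1 ⌊x⌋₊, ArithmeticFunction.vonMangoldt n := by
        rw [Finset.mul_sum]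
        exact Finset.sum_le_sum fun n _ ↦ hbD n
    _ ≤ D * ((Real.log 4 + 4) * x) := by gcongr; exact Chebyshev.psi_le_const_mul_self hx
    _ = D * (Real.log 4 + 4) * x := by ring

/-- An abstract prime number theorem, for a pair of sequences that are related like the numbers of
ideals of given norm and the von Mangoldt weights of a number field. -/
theorem tendsto_summatory_div_of_convolution {c δ C D : ℝ} (ha : ∀ n, 0 ≤ a n)
    (hb : ∀ n, 0 ≤ b n) (hD : 0 ≤ D) (hbD : ∀ n, b n ≤ D * ArithmeticFunction.vonMangoldt n)
    (hconv : ∀ n, ∑ p ∈ n.divisorsAntidiagonal, a p.1 * b p.2 = a n * Real.log n)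
    (hδ : 0 < δ) (hc : 0 < c)
    (hC : ∀ t ∈ Ioc (0 : ℝ) 1, |parabolicSum a t - c * t⁻¹| ≤ C * t ^ (δ - 1)) :
    Tendsto (fun x ↦ summatory b x / x) atTop (𝓝 1) := by
  obtain ⟨ha_sum, H, hH, hH₁, hHA⟩ := exists_differentiableOn_eq_mul_lSeries ha hδ hC
  have hK (x : ℝ) (hx : 0 ≤ x) := summatory_le_of_le_vonMangoldt hD hbD hx
  refine (isPoleFreeContinuation_of_convolution hδ hH ?_ hHA ha_sum
    (fun s hs ↦ lSeriesSummable_of_summatory_le hb hK hs) hconv).tendsto_summatory_div hb hK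
  rw [hH₁]
  exact mul_ne_zero (by norm_num) (mod_cast hc.ne')

end AbstractPrimeNumberTheorem

section PrimeMeans

open Filter Topology Asymptotics

lemma primesLe_eq_primesLE_floor (x : ℝ) : primesLe x = Nat.primesLE ⌊x⌋₊ := by
  ext p
  have hle (hp : p.Prime) : p ≤ ⌊x⌋₊ ↔ (p : ℝ) ≤ x := Nat.le_floor_iff' hp.ne_zero
  simp only [primesLe, Finset.mem_filter, Finset.mem_range, Nat.lt_succ_iff, Nat.mem_primesLE]
  tauto

/-- `c` has mean value `m` over the primes, each prime `p ≤ x` having weight `log x / x`; by the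
prime number theorem this is the same as the average over the primes up to `x`. -/
def HasPrimeMean (c : ℕ → ℝ) (m : ℝ) : Prop :=
  Tendsto (fun x ↦ (∑ p ∈ primesLe x, c p) / (x / Real.log x)) atTop (𝓝 m)

variable {b c : ℕ → ℝ} {m D : ℝ}

lemma tendsto_sum_primesLe_div (hb : ∀ n, |b n| ≤ D * ArithmeticFunction.vonMangoldt n)
    (h : Tendsto (fun x ↦ summatory b x / x) atTop (𝓝 m)) :
    Tendsto (fun x ↦ (∑ p ∈ primesLe x, b p) / x) atTop (𝓝 m) := by
  have hdiff (x : ℝ) : summatory b x - ∑ p ∈ primesLe x, b p =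
      ∑ n ∈ Finset.Ioc 0 ⌊x⌋₊ with ¬n.Prime, b n := by
    rw [primesLe_eq_primesLE_floor, Nat.primesLE_eq_filter_Ioc_zero, sub_eq_iff_eq_add',
      Finset.sum_filter_add_sum_filter_not]
    rfl
  have hbound : (fun x ↦ summatory b x - ∑ p ∈ primesLe x, b p) =O[atTop]
      (Chebyshev.psi - Chebyshev.theta) := by
    refine .of_bound D (.of_forall fun x ↦ ?_)
    rw [Pi.sub_apply, Real.norm_of_nonneg (sub_nonneg.2 (Chebyshev.theta_le_psi x)),
      Chebyshev.psi_sub_theta_eq_sum_not_prime, hdiff, Finset.mul_sum]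
    exact (Finset.abs_sum_le_sum_abs _ _).trans (Finset.sum_le_sum fun n _ ↦ hb n)
  have hsqrt : Real.sqrt =o[atTop] (id : ℝ → ℝ) := by
    refine isLittleO_of_tendsto' ?_ ?_
    · filter_upwards [eventually_gt_atTop 0] with x hx h0 using absurd h0 hx.ne'
    · simp only [id, Real.sqrt_div_self]
      exact Real.tendsto_sqrt_atTop.inv_tendsto_atTop
  have hlim := ((hbound.trans Chebyshev.isBigO_psi_sub_theta_sqrt).trans_isLittleO
    hsqrt).tendsto_div_nhds_zero
  rw [← sub_zero m]
  exact (h.sub hlim).congr fun x ↦ by simp only [id]; ring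

lemma hasPrimeMean_of_tendsto_sum_mul_log (hc : ∀ p : ℕ, p.Prime → |c p| ≤ D)
    (h : Tendsto (fun x ↦ (∑ p ∈ primesLe x, c p * Real.log p) / x) atTop (𝓝 m)) :
    HasPrimeMean c m := by
  have hdiff (x : ℝ) (hx : 1 < x) :
      |(∑ p ∈ primesLe x, c p) * Real.log x - ∑ p ∈ primesLe x, c p * Real.log p| ≤
        D * (Real.log x * (Nat.primeCounting ⌊x⌋₊ - Chebyshev.theta x / Real.log x)) := by
    have hcard : (Nat.primeCounting ⌊x⌋₊ : ℝ) = ∑ p ∈ primesLe x, 1 := by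
      rw [primesLe_eq_primesLE_floor, Finset.sum_const, nsmul_one,
        Nat.primesLE_card_eq_primeCounting]
    rw [mul_sub, mul_div_cancel₀ _ (Real.log_pos hx).ne', hcard, Chebyshev.theta_eq_sum_primesLE,
      ← primesLe_eq_primesLE_floor, Finset.mul_sum, Finset.sum_mul, ← Finset.sum_sub_distrib,
      ← Finset.sum_sub_distrib, Finset.mul_sum]
    refine (Finset.abs_sum_le_sum_abs _ _).trans (Finset.sum_le_sum fun p hp ↦ ?_)
    obtain ⟨⟨-, hp⟩, hpx⟩ : (_ ∧ p.Prime) ∧ (p : ℝ) ≤ x := by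
      simpa only [primesLe, Finset.mem_filter] using hp
    have hlog : 0 ≤ Real.log x - Real.log p :=
      sub_nonneg.2 (Real.log_le_log (mod_cast hp.pos) hpx)
    rw [← mul_sub, abs_mul, abs_of_nonneg hlog, mul_one]
    exact mul_le_mul_of_nonneg_right (hc p hp) hlog
  have hbound : (fun x ↦ (∑ p ∈ primesLe x, c p) * Real.log x -
      ∑ p ∈ primesLe x, c p * Real.log p) =O[atTop] fun x ↦ Real.log x * (x / Real.log x ^ 2) := by
    refine (IsBigO.of_bound |D| ?_).trans
      ((isBigO_refl Real.log _).mul Chebyshev.primeCounting_sub_theta_div_log_isBigO)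
    filter_upwards [eventually_gt_atTop 1] with x hx
    grw [Real.norm_eq_abs, hdiff x hx, le_abs_self (_ * (_ * _)), abs_mul, Real.norm_eq_abs]
  have hlittle : (fun x ↦ Real.log x * (x / Real.log x ^ 2)) =o[atTop] (id : ℝ → ℝ) := by
    refine isLittleO_of_tendsto' ?_ ?_
    · filter_upwards [eventually_gt_atTop 0] with x hx h0 using absurd h0 hx.ne'
    · refine Real.tendsto_log_atTop.inv_tendsto_atTop.congr' ?_
      filter_upwards [eventually_gt_atTop 1] with x hx
      have hlog := Real.log_pos hx
      simp only [Pi.inv_apply, id]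
      field_simp
  rw [HasPrimeMean, ← add_zero m]
  refine (h.add (hbound.trans_isLittleO hlittle).tendsto_div_nhds_zero).congr fun x ↦ ?_
  rw [id, ← add_div, add_sub_cancel, div_div_eq_mul_div]

theorem hasPrimeMean_of_tendsto_summatory_div
    (hb : ∀ n, |b n| ≤ D * ArithmeticFunction.vonMangoldt n)
    (hbc : ∀ p : ℕ, p.Prime → b p = c p * Real.log p)
    (h : Tendsto (fun x ↦ summatory b x / x) atTop (𝓝 m)) : HasPrimeMean c m := by
  refine hasPrimeMean_of_tendsto_sum_mul_log (D := D) (fun p hp ↦ ?_)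
    ((tendsto_sum_primesLe_div hb h).congr fun x ↦ ?_)
  · have hlog : 0 < Real.log p := Real.log_pos (mod_cast hp.one_lt)
    have hle := hb p
    rw [hbc p hp, ArithmeticFunction.vonMangoldt_apply_prime hp, abs_mul, abs_of_pos hlog] at hle
    exact le_of_mul_le_mul_right hle hlog
  · rw [Finset.sum_congr rfl fun p hp ↦ hbc p ?_]
    exact Nat.prime_of_mem_primesLE (primesLe_eq_primesLE_floor x ▸ hp)

end PrimeMeans

section LatticeSums

open MeasureTheory Set Module
open scoped NNReal

variable {E ι : Type*} [NormedAddCommGroup E] [NormedSpace ℝ E] (b : Basis ι ℝ E)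
  {φ : E → ℝ} {K : ℝ≥0}

section Floor

variable [Fintype ι]

lemma measurable_floor_zspan [MeasurableSpace E] [BorelSpace E] :
    Measurable fun x ↦ (ZSpan.floor b x : E) := by
  have := b.finiteDimensional_of_finite
  have hcoord (i : ι) : Measurable fun x ↦ b.repr x i :=
    (b.coord i).continuous_of_finiteDimensional.measurable
  simp only [ZSpan.floor, AddSubmonoidClass.coe_finsetSum, SetLike.val_smul,
    Basis.restrictScalars_apply, ← Int.cast_smul_eq_zsmul ℝ]
  exact Finset.measurable_sum _ fun i _ ↦
    ((measurable_from_top (f := ((↑) : ℤ → ℝ))).comp (hcoord i).floor).smul_const (b i)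

lemma abs_comp_floor_sub_le (hφ : LipschitzWith K φ) {R B : ℝ}
    (hR : tsupport φ ⊆ Metric.closedBall 0 R)
    (hB : ∀ x ∈ ZSpan.fundamentalDomain b, ‖x‖ ≤ B) {h : ℝ} (hh : h ∈ Ioc (0 : ℝ) 1) (x : E) :
    |φ (h • (ZSpan.floor b x : E)) - φ (h • x)| ≤
      (Metric.closedBall 0 ((R + B) / h)).indicator (fun _ ↦ K * (h * B)) x := by
  have hdist : dist (h • (ZSpan.floor b x : E)) (h • x) ≤ h * B := by
    rw [dist_comm, dist_eq_norm, ← smul_sub, norm_smul, Real.norm_of_nonneg hh.1.le]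
    exact mul_le_mul_of_nonneg_left (hB _ (ZSpan.fract_mem_fundamentalDomain b x)) hh.1.le
  have hB₀ : 0 ≤ B := (norm_nonneg _).trans (hB _ (ZSpan.fract_mem_fundamentalDomain b x))
  by_cases hx : x ∈ Metric.closedBall 0 ((R + B) / h)
  · rw [indicator_of_mem hx]
    exact (hφ.dist_le_mul _ _).trans (by gcongr)
  · rw [indicator_of_notMem hx]
    have hnorm : R + B < ‖h • x‖ := by
      rw [mem_closedBall_zero_iff, not_le, div_lt_iff₀' hh.1] at hx
      rwa [norm_smul, Real.norm_of_nonneg hh.1.le]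
    have hzero {y : E} (hy : dist y (h • x) ≤ B) : φ y = 0 := by
      refine image_eq_zero_of_notMem_tsupport fun hy' ↦ ?_
      have hyR := mem_closedBall_zero_iff.1 (hR hy')
      have := norm_le_norm_add_norm_sub y (h • x)
      rw [dist_eq_norm] at hy
      linarith
    rw [hzero (hdist.trans (mul_le_of_le_one_left hB₀ hh.2)), hzero (by simpa using hB₀), sub_self,
      abs_zero]

lemma integral_comp_floor [MeasurableSpace E] [BorelSpace E] (μ : Measure E)
    [μ.IsAddHaarMeasure] {f : E → ℝ} (hf : Integrable (fun x ↦ f (ZSpan.floor b x)) μ) :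
    ∫ x, f (ZSpan.floor b x) ∂μ =
      μ.real (ZSpan.fundamentalDomain b) * ∑' l : Submodule.span ℤ (range b), f l := by
  have := b.finiteDimensional_of_finite
  have : VAddInvariantMeasure (Submodule.span ℤ (range b)) E μ :=
    inferInstanceAs (VAddInvariantMeasure (Submodule.span ℤ (range b)).toAddSubgroup E μ)
  have : MeasurableConstVAdd (Submodule.span ℤ (range b)) E :=
    inferInstanceAs (MeasurableConstVAdd (Submodule.span ℤ (range b)).toAddSubgroup E)
  rw [(ZSpan.isAddFundamentalDomain b μ).integral_eq_tsum'' _ hf, ← tsum_mul_left]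
  refine tsum_congr fun l ↦ ?_
  have hfloor (x : E) (hx : x ∈ ZSpan.fundamentalDomain b) : f (ZSpan.floor b (l +ᵥ x)) = f l := by
    congr 1
    have hfract := ZSpan.fract_zSpan_add b x l.2
    rw [ZSpan.fract_eq_self.2 hx, ZSpan.fract_apply, sub_eq_iff_eq_add, add_comm] at hfract
    rw [Submodule.vadd_def, vadd_eq_add, add_comm]
    exact (add_left_cancel hfract).symm
  rw [setIntegral_congr_fun (ZSpan.fundamentalDomain_measurableSet b) hfloor, setIntegral_const,
    smul_eq_mul]

end Floor

variable [Finite ι]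

lemma summable_comp_smul_zspan (hφ_supp : HasCompactSupport φ) {h : ℝ} (hh : h ≠ 0) :
    Summable fun l : Submodule.span ℤ (range b) ↦ φ (h • (l : E)) := by
  have := b.finiteDimensional_of_finite
  have hfinite := ZSpan.setFinite_inter b (hφ_supp.comp_smul hh).isCompact.isBounded
  refine summable_of_hasFiniteSupport ((hfinite.preimage Subtype.val_injective.injOn).subset ?_)
  exact fun l hl ↦ ⟨subset_tsupport _ hl, l.2⟩

variable [MeasurableSpace E] [BorelSpace E] (μ : Measure E) [μ.IsAddHaarMeasure]

lemma abs_tsum_zspan_sub_integral_le (hφ : LipschitzWith K φ) (hφ_supp : HasCompactSupport φ)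
    {R B : ℝ} (hR : tsupport φ ⊆ Metric.closedBall 0 R)
    (hB : ∀ x ∈ ZSpan.fundamentalDomain b, ‖x‖ ≤ B) {h : ℝ} (hh : h ∈ Ioc (0 : ℝ) 1) :
    |μ.real (ZSpan.fundamentalDomain b) *
        ∑' l : Submodule.span ℤ (range b), φ (h • (l : E)) - ∫ x, φ (h • x) ∂μ| ≤
      K * (h * B) * μ.real (Metric.closedBall (0 : E) ((R + B) / h)) := by
  have := Fintype.ofFinite ι
  have := b.finiteDimensional_of_finite
  have hint : Integrable (fun x ↦ φ (h • x)) μ :=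
    (integrable_comp_smul_iff μ φ hh.1.ne').2
      (hφ.continuous.integrable_of_hasCompactSupport hφ_supp)
  have hbound : Integrable ((Metric.closedBall (0 : E) ((R + B) / h)).indicator
      (fun _ ↦ K * (h * B))) μ :=
    (integrable_indicator_iff Metric.isClosed_closedBall.measurableSet).2
      (integrableOn_const (isCompact_closedBall _ _).measure_lt_top.ne)
  have hdiff : Integrable (fun x ↦ φ (h • (ZSpan.floor b x : E)) - φ (h • x)) μ :=
    hbound.mono' ((hφ.continuous.measurable.comp ((measurable_floor_zspan b).const_smul h)).sub
      (hφ.continuous.measurable.comp (measurable_const_smul h))).aestronglyMeasurable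
      (.of_forall (abs_comp_floor_sub_le b hφ hR hB hh))
  have hfloor : Integrable (fun x ↦ φ (h • (ZSpan.floor b x : E))) μ :=
    (hdiff.add hint).congr (.of_forall fun x ↦ by simp)
  rw [← integral_comp_floor b μ (f := fun x ↦ φ (h • x)) hfloor, ← integral_sub hfloor hint]
  refine (norm_integral_le_of_norm_le
    (f := fun x ↦ φ (h • (ZSpan.floor b x : E)) - φ (h • x)) hbound
    (.of_forall (abs_comp_floor_sub_le b hφ hR hB hh))).trans_eq ?_
  rw [integral_indicator_const _ Metric.isClosed_closedBall.measurableSet, smul_eq_mul, mul_comm]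

theorem exists_abs_tsum_zspan_sub_integral_le (hφ : LipschitzWith K φ)
    (hφ_supp : HasCompactSupport φ) :
    ∃ C, ∀ h ∈ Ioc (0 : ℝ) 1,
      |h ^ finrank ℝ E * ∑' l : Submodule.span ℤ (range b), φ (h • (l : E)) -
        (∫ x, φ x ∂μ) / μ.real (ZSpan.fundamentalDomain b)| ≤ C * h := by
  have := Fintype.ofFinite ι
  have := b.finiteDimensional_of_finite
  set n := finrank ℝ E
  set v := μ.real (ZSpan.fundamentalDomain b)
  have hv : 0 < v := ENNReal.toReal_pos (ZSpan.measure_fundamentalDomain_ne_zero b)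
    (ZSpan.fundamentalDomain_isBounded b).measure_lt_top.ne
  obtain ⟨R, hR₀, hR⟩ := hφ_supp.isCompact.isBounded.subset_closedBall_lt 0 0
  obtain ⟨B, hB⟩ := (ZSpan.fundamentalDomain_isBounded b).exists_norm_le
  have hB₀ : 0 ≤ B := (norm_nonneg _).trans (hB _ (ZSpan.fract_mem_fundamentalDomain b 0))
  refine ⟨K * B * (R + B) ^ n * μ.real (Metric.closedBall 0 1) / v, fun h hh ↦ ?_⟩
  have hh₀ : 0 < h := hh.1
  have herror : |v * ∑' l : Submodule.span ℤ (range b), φ (h • (l : E)) -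
      (h ^ n)⁻¹ * ∫ x, φ x ∂μ| ≤
        K * (h * B) * (((R + B) / h) ^ n * μ.real (Metric.closedBall 0 1)) := by
    rw [← smul_eq_mul (h ^ n)⁻¹, ← Measure.integral_comp_smul_of_nonneg μ φ h (hR := hh₀.le),
      ← μ.addHaar_real_closedBall' _ (by positivity)]
    exact abs_tsum_zspan_sub_integral_le b μ hφ hφ_supp hR hB hh
  calc |h ^ n * ∑' l : Submodule.span ℤ (range b), φ (h • (l : E)) - (∫ x, φ x ∂μ) / v|
      = h ^ n / v * |v * ∑' l : Submodule.span ℤ (range b), φ (h • (l : E)) -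
          (h ^ n)⁻¹ * ∫ x, φ x ∂μ| := by
        rw [← abs_of_pos (show 0 < h ^ n / v by positivity), ← abs_mul]
        congr 1
        field_simp
    _ ≤ h ^ n / v * (K * (h * B) * (((R + B) / h) ^ n * μ.real (Metric.closedBall 0 1))) := by
        gcongr
    _ = K * B * (R + B) ^ n * μ.real (Metric.closedBall 0 1) / v * h := by
        rw [div_pow]
        field_simp

end LatticeSums

section Tent

open Set

/-- The piecewise linear bump function on `[-1, 1]`, whose integer translates form a partition of
unity. -/
def tent (c : ℝ) : ℝ := max 0 (1 - |c|)

lemma tent_nonneg (c : ℝ) : 0 ≤ tent c := le_max_left _ _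

lemma tent_le_one (c : ℝ) : tent c ≤ 1 := max_le zero_le_one (sub_le_self _ (abs_nonneg c))

lemma tent_of_one_le_abs {c : ℝ} (hc : 1 ≤ |c|) : tent c = 0 := max_eq_left (sub_nonpos.2 hc)

lemma tent_zero : tent 0 = 1 := by simp [tent]

lemma abs_tent_sub_tent_le (a b : ℝ) : |tent a - tent b| ≤ |a - b| := by
  unfold tent
  rw [max_comm 0, max_comm 0]
  refine (abs_max_sub_max_le_abs _ _ _).trans ?_
  rw [sub_sub_sub_cancel_left, abs_sub_comm a]
  exact abs_abs_sub_abs_le b a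

lemma tent_add_of_notMem (c : ℝ) {j : ℤ} (hj : j ∉ ({-⌊c⌋, -⌊c⌋ - 1} : Finset ℤ)) :
    tent (c + j) = 0 := by
  simp only [Finset.mem_insert, Finset.mem_singleton, not_or] at hj
  refine tent_of_one_le_abs (le_abs'.2 ?_)
  rcases lt_or_ge j (-⌊c⌋ - 1) with hlt | hge
  · have : (j : ℝ) ≤ -⌊c⌋ - 2 := by exact_mod_cast (by lia : j ≤ -⌊c⌋ - 2)
    exact .inl (by linarith [Int.lt_floor_add_one c])
  · have : (-⌊c⌋ + 1 : ℝ) ≤ j := by exact_mod_cast (by lia : -⌊c⌋ + 1 ≤ j)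
    exact .inr (by linarith [Int.floor_le c])

lemma sum_tent_add (c : ℝ) : ∑ j ∈ ({-⌊c⌋, -⌊c⌋ - 1} : Finset ℤ), tent (c + j) = 1 := by
  have hfract : c + ((-⌊c⌋ : ℤ) : ℝ) = Int.fract c := by
    rw [Int.cast_neg, ← sub_eq_add_neg, Int.self_sub_floor]
  have hfract' : c + ((-⌊c⌋ - 1 : ℤ) : ℝ) = Int.fract c - 1 := by
    rw [← hfract, Int.cast_sub, Int.cast_one, add_sub_assoc]
  rw [Finset.sum_pair (by lia), hfract, hfract', tent, tent, abs_of_nonneg (Int.fract_nonneg c),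
    abs_of_neg (sub_neg.2 (Int.fract_lt_one c)), neg_sub, sub_sub_cancel,
    max_eq_right (sub_nonneg.2 (Int.fract_lt_one c).le), max_eq_right (Int.fract_nonneg c),
    sub_add_cancel]

variable {ι : Type*}

lemma hasSum_prod_tent [Fintype ι] (c : ι → ℝ) :
    HasSum (fun e : ι → ℤ ↦ ∏ i, tent (c i + e i)) 1 := by
  have hsum : ∑ e ∈ Fintype.piFinset fun i ↦ ({-⌊c i⌋, -⌊c i⌋ - 1} : Finset ℤ),
      ∏ i, tent (c i + e i) = 1 := by
    rw [← Finset.prod_univ_sum (fun i ↦ ({-⌊c i⌋, -⌊c i⌋ - 1} : Finset ℤ))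
      (fun i j ↦ tent (c i + j))]
    exact Finset.prod_eq_one fun i _ ↦ sum_tent_add (c i)
  rw [← hsum]
  refine hasSum_sum_of_ne_finset_zero fun e he ↦ ?_
  obtain ⟨i, hi⟩ := not_forall.1 (mt Fintype.mem_piFinset.2 he)
  exact Finset.prod_eq_zero (Finset.mem_univ i) (tent_add_of_notMem _ hi)

lemma abs_prod_sub_prod_le (s : Finset ι) {f g : ι → ℝ} (hf : ∀ i, |f i| ≤ 1)
    (hg : ∀ i, |g i| ≤ 1) : |∏ i ∈ s, f i - ∏ i ∈ s, g i| ≤ ∑ i ∈ s, |f i - g i| := by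
  induction s using Finset.induction_on with
  | empty => simp
  | insert a s ha ih =>
    have hprod : |∏ i ∈ s, g i| ≤ 1 := by
      rw [Finset.abs_prod]
      exact Finset.prod_le_one (fun _ _ ↦ abs_nonneg _) fun i _ ↦ hg i
    rw [Finset.prod_insert ha, Finset.prod_insert ha, Finset.sum_insert ha]
    calc |f a * ∏ i ∈ s, f i - g a * ∏ i ∈ s, g i|
        = |(f a - g a) * ∏ i ∈ s, g i + f a * (∏ i ∈ s, f i - ∏ i ∈ s, g i)| := by ring_nf
      _ ≤ |f a - g a| * |∏ i ∈ s, g i| + |f a| * |∏ i ∈ s, f i - ∏ i ∈ s, g i| := by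
        simpa only [abs_mul] using
          abs_add_le ((f a - g a) * ∏ i ∈ s, g i) (f a * (∏ i ∈ s, f i - ∏ i ∈ s, g i))
      _ ≤ |f a - g a| + ∑ i ∈ s, |f i - g i| := by
        gcongr
        · exact mul_le_of_le_one_right (abs_nonneg _) hprod
        · exact (mul_le_of_le_one_left (abs_nonneg _) (hf a)).trans ih

end Tent

section LogCutoff

open NumberField NumberField.Units NumberField.Units.dirichletUnitTheorem
open scoped NNReal

variable (K : Type*) [Field K] [NumberField K]

/-- The basis of the logarithmic space given by a system of fundamental units. -/
def logUnitBasis : Module.Basis (Fin (rank K)) ℝ (logSpace K) :=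
  (basisUnitLattice K).ofZLatticeBasis ℝ (unitLattice K)

/-- A Lipschitz bump function on the logarithmic space whose translates by the unit lattice form a
partition of unity; it plays the role of the indicator function of a fundamental domain. -/
def logCutoff (y : logSpace K) : ℝ := ∏ i, tent ((logUnitBasis K).repr y i)

lemma logCutoff_nonneg (y : logSpace K) : 0 ≤ logCutoff K y :=
  Finset.prod_nonneg fun _ _ ↦ tent_nonneg _

lemma logCutoff_le_one (y : logSpace K) : logCutoff K y ≤ 1 :=
  Finset.prod_le_one (fun _ _ ↦ tent_nonneg _) fun _ _ ↦ tent_le_one _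

lemma logCutoff_zero : logCutoff K 0 = 1 := by simp [logCutoff, tent_zero]

lemma exists_lipschitzWith_logCutoff : ∃ M : ℝ≥0, LipschitzWith M (logCutoff K) := by
  have htent (c : ℝ) : |tent c| ≤ 1 := abs_le.2 ⟨by linarith [tent_nonneg c], tent_le_one c⟩
  have hcoord (i) : ∃ M : ℝ, ∀ y, |(logUnitBasis K).repr y i| ≤ M * ‖y‖ := by
    let T := LinearMap.toContinuousLinearMap ((logUnitBasis K).coord i)
    exact ⟨‖T‖, T.le_opNorm⟩
  choose M hM using hcoord
  refine ⟨(∑ i, M i).toNNReal, LipschitzWith.of_dist_le' fun y z ↦ ?_⟩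
  rw [Real.dist_eq, dist_eq_norm, Finset.sum_mul]
  refine (abs_prod_sub_prod_le _ (fun _ ↦ htent _) fun _ ↦ htent _).trans
    (Finset.sum_le_sum fun i _ ↦ (abs_tent_sub_tent_le _ _).trans ?_)
  rw [← Finsupp.sub_apply, ← map_sub]
  exact hM i _

lemma exists_norm_le_of_logCutoff_ne_zero :
    ∃ Λ : ℝ, ∀ y : logSpace K, logCutoff K y ≠ 0 → ‖y‖ ≤ Λ := by
  refine ⟨∑ i, ‖logUnitBasis K i‖, fun y hy ↦ ?_⟩
  rw [← (logUnitBasis K).sum_repr y]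
  refine (norm_sum_le _ _).trans (Finset.sum_le_sum fun i _ ↦ ?_)
  have hcoord : |(logUnitBasis K).repr y i| ≤ 1 := by
    contrapose! hy
    exact Finset.prod_eq_zero (Finset.mem_univ i) (tent_of_one_le_abs hy.le)
  rw [norm_smul]
  exact mul_le_of_le_one_left (norm_nonneg _) hcoord

/-- Dirichlet's unit theorem, as a parametrization of the unit group by a root of unity and the
exponents of the fundamental units. -/
def torsionProdExponentsEquiv : torsion K × (Fin (rank K) → ℤ) ≃ (𝓞 K)ˣ :=
  Equiv.ofBijective (fun ζe ↦ ζe.1 * ∏ i, fundSystem K i ^ ζe.2 i) <| by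
    simpa only [Function.bijective_iff_existsUnique, eq_comm] using exist_unique_eq_mul_prod K

lemma logUnitBasis_repr_logEmbedding (z : torsion K × (Fin (rank K) → ℤ)) (i : Fin (rank K)) :
    (logUnitBasis K).repr
      (logEmbedding K (Additive.ofMul (torsionProdExponentsEquiv K z))) i = z.2 i := by
  have hlog : logEmbedding K (Additive.ofMul (torsionProdExponentsEquiv K z)) =
      ∑ i, (z.2 i : ℝ) • logUnitBasis K i := by
    simp only [torsionProdExponentsEquiv, Equiv.ofBijective_apply, ofMul_mul, map_add, ofMul_prod,
      map_sum, ofMul_zpow, map_zsmul, logEmbedding_fundSystem, logUnitBasis,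
      Module.Basis.ofZLatticeBasis_apply, Int.cast_smul_eq_zsmul,
      logEmbedding_eq_zero_iff.2 z.1.2, zero_add]
  rw [hlog, Module.Basis.repr_sum_self]

lemma hasSum_logCutoff_units (y : logSpace K) :
    HasSum (fun u : (𝓞 K)ˣ ↦ logCutoff K (logEmbedding K (Additive.ofMul u) + y))
      (torsionOrder K) := by
  have := Fintype.ofFinite (torsion K)
  have htorsion : HasSum (fun _ : torsion K ↦ (1 : ℝ)) (torsionOrder K) := by
    simpa [torsionOrder, Nat.card_eq_fintype_card] using
      hasSum_fintype fun _ : torsion K ↦ (1 : ℝ)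
  have hexp := hasSum_prod_tent fun i ↦ (logUnitBasis K).repr y i
  have hsummable := htorsion.summable.mul_of_nonneg hexp.summable (fun _ ↦ zero_le_one)
    fun _ ↦ Finset.prod_nonneg fun _ _ ↦ tent_nonneg _
  have hval (z : torsion K × (Fin (rank K) → ℤ)) :
      logCutoff K (logEmbedding K (Additive.ofMul (torsionProdExponentsEquiv K z)) + y) =
        1 * ∏ i, tent ((logUnitBasis K).repr y i + z.2 i) := by
    rw [logCutoff, one_mul]
    refine Finset.prod_congr rfl fun i _ ↦ ?_
    rw [map_add, Finsupp.add_apply, logUnitBasis_repr_logEmbedding, add_comm]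
  rw [← (torsionProdExponentsEquiv K).hasSum_iff, ← mul_one (torsionOrder K : ℝ)]
  exact (htorsion.mul hexp hsummable).congr_fun hval

end LogCutoff

section LipschitzEstimates

open scoped NNReal

lemma exists_lipschitzWith_of_forall_norm_sub_le {E : Type*} [SeminormedAddCommGroup E] {f : E → ℝ}
    {ε A B : ℝ} (hε : 0 < ε) (hA : 0 ≤ A) (hB : 0 ≤ B) (hf : ∀ x, |f x| ≤ A * ‖x‖)
    (hloc : ∀ x y, f x ≠ 0 → ‖x - y‖ ≤ ε * ‖x‖ → |f x - f y| ≤ B * ‖x - y‖) :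
    ∃ M : ℝ≥0, LipschitzWith M f := by
  have hmain (x y : E) (hx : f x ≠ 0) : |f x - f y| ≤ (A * (2 / ε + 1) + B) * ‖x - y‖ := by
    rcases le_or_gt ‖x - y‖ (ε * ‖x‖) with hnear | hfar
    · refine (hloc x y hx hnear).trans ?_
      gcongr
      exact le_add_of_nonneg_left (by positivity)
    · have hxle : ‖x‖ ≤ ‖x - y‖ / ε := by
        rw [le_div_iff₀ hε]
        linarith
      calc |f x - f y| ≤ |f x| + |f y| := abs_sub _ _
        _ ≤ A * ‖x‖ + A * (‖x‖ + ‖x - y‖) := by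
          have hy : ‖y‖ ≤ ‖x‖ + ‖x - y‖ := by
            simpa using norm_sub_le x (x - y)
          gcongr
          · exact hf x
          · exact (hf y).trans (by gcongr)
        _ ≤ A * (‖x - y‖ / ε) + A * (‖x - y‖ / ε + ‖x - y‖) := by gcongr
        _ = A * (2 / ε + 1) * ‖x - y‖ := by ring
        _ ≤ (A * (2 / ε + 1) + B) * ‖x - y‖ := by
          gcongr
          exact le_add_of_nonneg_right hB
  refine ⟨(A * (2 / ε + 1) + B).toNNReal, LipschitzWith.of_dist_le' fun x y ↦ ?_⟩
  rw [Real.dist_eq, dist_eq_norm]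
  by_cases hx : f x = 0
  · by_cases hy : f y = 0
    · rw [hx, hy, sub_zero, abs_zero]
      positivity
    · rw [abs_sub_comm, norm_sub_rev]
      exact hmain y x hy
  · exact hmain x y hx

lemma abs_log_sub_log_le {a b c : ℝ} (hc : 0 < c) (ha : c ≤ a) (hb : c ≤ b) :
    |Real.log a - Real.log b| ≤ |a - b| / c := by
  wlog hab : a ≤ b generalizing a b
  · rw [abs_sub_comm, abs_sub_comm a]
    exact this hb ha (le_of_not_ge hab)
  have ha0 : 0 < a := hc.trans_le ha
  have hb0 : 0 < b := hc.trans_le hb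
  calc |Real.log a - Real.log b| = Real.log (b / a) := by
        rw [abs_sub_comm, abs_of_nonneg (sub_nonneg.2 (Real.log_le_log ha0 hab)),
          Real.log_div hb0.ne' ha0.ne']
    _ ≤ b / a - 1 := Real.log_le_sub_one_of_pos (div_pos hb0 ha0)
    _ = (b - a) / a := by field_simp
    _ ≤ (b - a) / c := by gcongr
    _ = |a - b| / c := by rw [abs_sub_comm, abs_of_nonneg (sub_nonneg.2 hab)]

lemma parabolicWeight_le_min {u : ℝ} (hu : 0 ≤ u) : parabolicWeight u ≤ min 1 u := by
  rw [parabolicWeight]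
  exact max_le (le_min zero_le_one hu) (le_min (by nlinarith [sq_nonneg (u - 1)]) (by nlinarith))

lemma abs_parabolicWeight_sub_le {a b : ℝ} (ha : 0 < a) (hb : 0 < b) :
    |parabolicWeight a - parabolicWeight b| ≤
      (min 1 a + min 1 b) * |Real.log a - Real.log b| := by
  wlog hab : a ≤ b generalizing a b
  · rw [abs_sub_comm, abs_sub_comm (Real.log a), add_comm]
    exact this hb ha (le_of_not_ge hab)
  rcases le_or_gt 1 a with h1 | h1
  · rw [parabolicWeight_of_one_le h1, parabolicWeight_of_one_le (h1.trans hab), sub_zero, abs_zero]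
    positivity
  set b' := min 1 b with hb'
  have hb'0 : 0 < b' := lt_min one_pos hb
  have hab' : a ≤ b' := le_min h1.le hab
  have hwb : parabolicWeight b = parabolicWeight b' := by
    rcases le_total 1 b with h | h
    · rw [hb', min_eq_left h, parabolicWeight_of_one_le h, parabolicWeight_of_one_le le_rfl]
    · rw [hb', min_eq_right h]
  have hlog : b' - a ≤ b' * (Real.log b' - Real.log a) := by
    have := Real.log_le_sub_one_of_pos (div_pos ha hb'0)
    rw [Real.log_div ha.ne' hb'0.ne'] at this
    calc b' - a = b' * (1 - a / b') := by field_simp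
      _ ≤ b' * (Real.log b' - Real.log a) :=
        mul_le_mul_of_nonneg_left (by linarith) hb'0.le
  calc |parabolicWeight a - parabolicWeight b| = |(b' - a) * (1 - b' - a)| := by
        rw [hwb, parabolicWeight_of_mem ⟨ha.le, h1.le⟩,
          parabolicWeight_of_mem ⟨hb'0.le, min_le_left 1 b⟩, abs_sub_comm]
        ring_nf
    _ ≤ b' - a := by
      rw [abs_mul, abs_of_nonneg (sub_nonneg.2 hab')]
      exact mul_le_of_le_one_right (sub_nonneg.2 hab')
        (abs_le.2 ⟨by linarith [min_le_left 1 b], by linarith⟩)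
    _ ≤ b' * (Real.log b' - Real.log a) := hlog
    _ ≤ (min 1 a + b') * |Real.log a - Real.log b| := by
      rw [abs_sub_comm, abs_of_nonneg (sub_nonneg.2 (Real.log_le_log ha hab))]
      gcongr
      · exact sub_nonneg.2 (Real.log_le_log ha hab')
      · exact le_add_of_nonneg_left (by positivity)
      · exact min_le_right 1 b

end LipschitzEstimates

section MixedSpaceNorm

open NumberField NumberField.InfinitePlace NumberField.mixedEmbedding NumberField.Units
open NumberField.Units.dirichletUnitTheorem Module

variable {K : Type*} [Field K] [NumberField K]

lemma normAtPlace_le_norm (w : InfinitePlace K) (x : mixedSpace K) : normAtPlace w x ≤ ‖x‖ := by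
  rw [norm_eq_sup'_normAtPlace]
  exact Finset.le_sup' (fun w ↦ normAtPlace w x) (Finset.mem_univ w)

lemma abs_normAtPlace_sub_le (w : InfinitePlace K) (x y : mixedSpace K) :
    |normAtPlace w x - normAtPlace w y| ≤ ‖x - y‖ := by
  have hle (x y : mixedSpace K) : normAtPlace w x - normAtPlace w y ≤ ‖x - y‖ := by
    have := normAtPlace_add_le w (x - y) y
    rw [sub_add_cancel] at this
    linarith [normAtPlace_le_norm w (x - y)]
  exact abs_sub_le_iff.2 ⟨hle x y, norm_sub_rev x y ▸ hle y x⟩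

lemma mixedEmbedding_norm_le_pow (x : mixedSpace K) :
    mixedEmbedding.norm x ≤ ‖x‖ ^ finrank ℚ K := by
  rw [mixedEmbedding.norm_apply, ← sum_mult_eq, ← Finset.prod_pow_eq_pow_sum]
  gcongr with w
  · exact fun w _ ↦ pow_nonneg (normAtPlace_nonneg w x) _
  · exact normAtPlace_nonneg w x
  · exact normAtPlace_le_norm w x

lemma min_one_mixedEmbedding_norm_le (x : mixedSpace K) :
    min 1 (mixedEmbedding.norm x) ≤ ‖x‖ := by
  rcases le_total 1 ‖x‖ with h | h
  · exact (min_le_left _ _).trans h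
  · exact (min_le_right _ _).trans
      ((mixedEmbedding_norm_le_pow x).trans (pow_le_of_le_one (norm_nonneg x) h finrank_pos.ne'))

lemma mixedEmbedding_norm_pos {x : mixedSpace K} :
    0 < mixedEmbedding.norm x ↔ ∀ w, 0 < normAtPlace w x := by
  simp only [(mixedEmbedding.norm_nonneg x).lt_iff_ne', (normAtPlace_nonneg _ x).lt_iff_ne',
    ne_eq, mixedEmbedding.norm_eq_zero_iff, not_exists]

lemma log_mixedEmbedding_norm {x : mixedSpace K} (hx : 0 < mixedEmbedding.norm x) :
    Real.log (mixedEmbedding.norm x) = ∑ w, mult w * Real.log (normAtPlace w x) := by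
  rw [mixedEmbedding.norm_apply,
    Real.log_prod fun w _ ↦ (pow_pos (mixedEmbedding_norm_pos.1 hx w) _).ne']
  simp only [Real.log_pow]

lemma abs_log_mixedEmbedding_norm_sub_le {x y : mixedSpace K} {D : ℝ}
    (hx : 0 < mixedEmbedding.norm x) (hy : 0 < mixedEmbedding.norm y)
    (hD : ∀ w, |Real.log (normAtPlace w x) - Real.log (normAtPlace w y)| ≤ D) :
    |Real.log (mixedEmbedding.norm x) - Real.log (mixedEmbedding.norm y)| ≤ finrank ℚ K * D := by
  rw [log_mixedEmbedding_norm hx, log_mixedEmbedding_norm hy, ← Finset.sum_sub_distrib,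
    ← sum_mult_eq, Nat.cast_sum, Finset.sum_mul]
  refine (Finset.abs_sum_le_sum_abs _ _).trans (Finset.sum_le_sum fun w _ ↦ ?_)
  rw [← mul_sub, abs_mul, Nat.abs_cast]
  gcongr
  exact hD w

lemma norm_logMap_sub_logMap_le {x y : mixedSpace K} {D : ℝ}
    (hx : 0 < mixedEmbedding.norm x) (hy : 0 < mixedEmbedding.norm y)
    (hD : ∀ w, |Real.log (normAtPlace w x) - Real.log (normAtPlace w y)| ≤ D) :
    ‖logMap x - logMap y‖ ≤ 4 * D := by
  have hn : (0 : ℝ) < finrank ℚ K := Nat.cast_pos.2 finrank_pos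
  have hD0 : 0 ≤ D := (abs_nonneg _).trans (hD w₀)
  refine (pi_norm_le_iff_of_nonneg (by positivity)).2 fun w ↦ ?_
  have hN : |(Real.log (mixedEmbedding.norm x) - Real.log (mixedEmbedding.norm y)) *
      (finrank ℚ K : ℝ)⁻¹| ≤ D := by
    rw [← div_eq_mul_inv, abs_div, Nat.abs_cast, div_le_iff₀' hn]
    exact abs_log_mixedEmbedding_norm_sub_le hx hy hD
  have hmult : (mult w.1 : ℝ) ≤ 2 := by
    rw [mult]
    split_ifs <;> norm_num
  calc ‖(logMap x - logMap y) w‖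
      = mult w.1 * |(Real.log (normAtPlace w.1 x) - Real.log (normAtPlace w.1 y)) -
          (Real.log (mixedEmbedding.norm x) - Real.log (mixedEmbedding.norm y)) *
            (finrank ℚ K : ℝ)⁻¹| := by
        rw [Pi.sub_apply, logMap_apply, logMap_apply, ← mul_sub, norm_mul, Real.norm_natCast,
          Real.norm_eq_abs]
        ring_nf
    _ ≤ 2 * (D + D) := by
      gcongr
      exact (abs_sub _ _).trans (add_le_add (hD w) hN)
    _ = 4 * D := by ring

lemma sum_mult_mul_log_normAtPlace_sub {x : mixedSpace K} (hx : 0 < mixedEmbedding.norm x) :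
    ∑ w, mult w * (Real.log (normAtPlace w x) -
      Real.log (mixedEmbedding.norm x) * (finrank ℚ K : ℝ)⁻¹) = 0 := by
  simp only [mul_sub, Finset.sum_sub_distrib]
  rw [← log_mixedEmbedding_norm hx, ← Finset.sum_mul, ← Nat.cast_sum, sum_mult_eq]
  field_simp [finrank_pos.ne']
  ring

lemma abs_log_normAtPlace_sub_le {x : mixedSpace K} (hx : 0 < mixedEmbedding.norm x)
    (w : InfinitePlace K) :
    |Real.log (normAtPlace w x) - Real.log (mixedEmbedding.norm x) * (finrank ℚ K : ℝ)⁻¹| ≤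
      Fintype.card (InfinitePlace K) * ‖logMap x‖ := by
  set ℓ : InfinitePlace K → ℝ := fun w ↦
    mult w * (Real.log (normAtPlace w x) -
      Real.log (mixedEmbedding.norm x) * (finrank ℚ K : ℝ)⁻¹) with hℓ
  have hne (w : {w : InfinitePlace K // w ≠ w₀}) : |ℓ w| ≤ ‖logMap x‖ :=
    norm_le_pi_norm (logMap x) w
  have hw₀ : |ℓ w₀| ≤ ∑ w : {w : InfinitePlace K // w ≠ w₀}, |ℓ w| := by
    have hsum : ℓ w₀ + ∑ w : {w : InfinitePlace K // w ≠ w₀}, ℓ w = 0 := by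
      rw [← sum_mult_mul_log_normAtPlace_sub hx, ← Fintype.sum_eq_add_sum_subtype_ne]
    rw [eq_neg_of_add_eq_zero_left hsum, abs_neg]
    exact Finset.abs_sum_le_sum_abs _ _
  have hcard : ∑ w : {w : InfinitePlace K // w ≠ w₀}, |ℓ w| ≤
      Fintype.card (InfinitePlace K) * ‖logMap x‖ := by
    refine (Finset.sum_le_card_nsmul _ _ _ fun w _ ↦ hne w).trans ?_
    rw [nsmul_eq_mul, Finset.card_univ]
    gcongr
    exact Fintype.card_subtype_le _
  have hℓw : |ℓ w| ≤ Fintype.card (InfinitePlace K) * ‖logMap x‖ := by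
    by_cases hw : w = w₀
    · exact hw ▸ hw₀.trans hcard
    · exact (Finset.single_le_sum (f := fun w : {w : InfinitePlace K // w ≠ w₀} ↦ |ℓ w|)
        (fun _ _ ↦ abs_nonneg _) (Finset.mem_univ ⟨w, hw⟩)).trans hcard
  refine le_trans ?_ hℓw
  rw [hℓ, abs_mul, Nat.abs_cast]
  exact le_mul_of_one_le_left (abs_nonneg _) one_le_mult

lemma exp_mul_norm_le_normAtPlace {x : mixedSpace K} {Λ : ℝ} (hx : 0 < mixedEmbedding.norm x)
    (hΛ : ‖logMap x‖ ≤ Λ) (w : InfinitePlace K) :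
    Real.exp (-(2 * (Fintype.card (InfinitePlace K) * Λ))) * ‖x‖ ≤ normAtPlace w x := by
  have hpos := mixedEmbedding_norm_pos.1 hx
  obtain ⟨v, -, hv⟩ := Finset.exists_mem_eq_sup' Finset.univ_nonempty fun w ↦ normAtPlace w x
  have hlog (w : InfinitePlace K) : _ ≤ Fintype.card (InfinitePlace K) * Λ :=
    (abs_log_normAtPlace_sub_le hx w).trans (by gcongr)
  rw [norm_eq_sup'_normAtPlace, hv, ← Real.exp_log (hpos v), ← Real.exp_add,
    ← Real.exp_log (hpos w)]
  exact Real.exp_le_exp.2 (by linarith [(abs_le.1 (hlog w)).1, (abs_le.1 (hlog v)).2])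

end MixedSpaceNorm

section IdealWeight

open NumberField NumberField.InfinitePlace NumberField.mixedEmbedding NumberField.Units
open NumberField.Units.dirichletUnitTheorem MeasureTheory Module
open scoped NNReal

variable (K : Type*) [Field K] [NumberField K]

/-- A nonnegative Lipschitz weight with compact support on the mixed space. Summed over the
associates of an algebraic number, it depends only on the absolute norm of that number, which makes
it suitable for counting ideals. -/
def idealWeight (x : mixedSpace K) : ℝ :=
  parabolicWeight (mixedEmbedding.norm x) * logCutoff K (logMap x)

lemma idealWeight_nonneg (x : mixedSpace K) : 0 ≤ idealWeight K x :=
  mul_nonneg (parabolicWeight_nonneg _) (logCutoff_nonneg K _)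

lemma idealWeight_zero : idealWeight K 0 = 0 := by
  rw [idealWeight, map_zero, parabolicWeight_of_nonpos le_rfl, zero_mul]

lemma norm_pos_of_idealWeight_ne_zero {x : mixedSpace K} (hx : idealWeight K x ≠ 0) :
    0 < mixedEmbedding.norm x := by
  contrapose! hx
  rw [idealWeight, parabolicWeight_of_nonpos hx, zero_mul]

lemma exists_mul_norm_le_normAtPlace :
    ∃ κ > 0, ∀ x, idealWeight K x ≠ 0 → ∀ w, κ * ‖x‖ ≤ normAtPlace w x := by
  obtain ⟨Λ, hΛ⟩ := exists_norm_le_of_logCutoff_ne_zero K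
  exact ⟨_, Real.exp_pos _, fun x hx ↦ exp_mul_norm_le_normAtPlace
    (norm_pos_of_idealWeight_ne_zero K hx) (hΛ _ (right_ne_zero_of_mul hx))⟩

lemma hasCompactSupport_idealWeight : HasCompactSupport (idealWeight K) := by
  obtain ⟨κ, hκ, hbal⟩ := exists_mul_norm_le_normAtPlace K
  refine HasCompactSupport.of_support_subset_isCompact (isCompact_closedBall 0 κ⁻¹) fun x hx ↦ ?_
  have hN : mixedEmbedding.norm x < 1 := by
    by_contra! h
    exact hx (by rw [idealWeight, parabolicWeight_of_one_le h, zero_mul])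
  have hpow : (κ * ‖x‖) ^ finrank ℚ K ≤ mixedEmbedding.norm x := by
    rw [mixedEmbedding.norm_apply, ← sum_mult_eq, ← Finset.prod_pow_eq_pow_sum]
    gcongr with w
    exact hbal x hx w
  rw [mem_closedBall_zero_iff, ← one_div, le_div_iff₀' hκ]
  exact (pow_le_one_iff_of_nonneg (by positivity) finrank_pos.ne').1 (hpow.trans hN.le)

lemma abs_idealWeight_le (x : mixedSpace K) : |idealWeight K x| ≤ ‖x‖ := by
  have hN := mixedEmbedding.norm_nonneg x
  rw [abs_of_nonneg (idealWeight_nonneg K x)]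
  calc idealWeight K x ≤ min 1 (mixedEmbedding.norm x) * 1 :=
        mul_le_mul (parabolicWeight_le_min hN) (logCutoff_le_one K _) (logCutoff_nonneg K _)
          (le_min zero_le_one hN)
    _ ≤ ‖x‖ := by
      rw [mul_one]
      exact min_one_mixedEmbedding_norm_le x

lemma abs_idealWeight_sub_le {M : ℝ≥0} (hM : LipschitzWith M (logCutoff K)) {x y : mixedSpace K}
    {D : ℝ} (hx : 0 < mixedEmbedding.norm x) (hy : 0 < mixedEmbedding.norm y)
    (hD : ∀ w, |Real.log (normAtPlace w x) - Real.log (normAtPlace w y)| ≤ D) :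
    |idealWeight K x - idealWeight K y| ≤
      ‖x‖ * (M * (4 * D)) + (‖x‖ + ‖y‖) * (finrank ℚ K * D) := by
  have hweight : |parabolicWeight (mixedEmbedding.norm x)| ≤ ‖x‖ := by
    rw [abs_of_nonneg (parabolicWeight_nonneg _)]
    exact (parabolicWeight_le_min hx.le).trans (min_one_mixedEmbedding_norm_le x)
  have hcutoff : |logCutoff K (logMap x) - logCutoff K (logMap y)| ≤ M * (4 * D) := by
    rw [← Real.dist_eq]
    refine (hM.dist_le_mul _ _).trans ?_
    gcongr
    exact dist_eq_norm (logMap x) (logMap y) ▸ norm_logMap_sub_logMap_le hx hy hD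
  have hweight_sub : |parabolicWeight (mixedEmbedding.norm x) -
      parabolicWeight (mixedEmbedding.norm y)| ≤ (‖x‖ + ‖y‖) * (finrank ℚ K * D) :=
    (abs_parabolicWeight_sub_le hx hy).trans <| mul_le_mul
      (add_le_add (min_one_mixedEmbedding_norm_le x) (min_one_mixedEmbedding_norm_le y))
      (abs_log_mixedEmbedding_norm_sub_le hx hy hD) (abs_nonneg _) (by positivity)
  have hcutoff_le : |logCutoff K (logMap y)| ≤ 1 := by
    rw [abs_of_nonneg (logCutoff_nonneg K _)]
    exact logCutoff_le_one K _
  calc |idealWeight K x - idealWeight K y|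
      = |parabolicWeight (mixedEmbedding.norm x) *
          (logCutoff K (logMap x) - logCutoff K (logMap y)) +
        (parabolicWeight (mixedEmbedding.norm x) - parabolicWeight (mixedEmbedding.norm y)) *
          logCutoff K (logMap y)| := by
        rw [idealWeight, idealWeight]
        ring_nf
    _ ≤ ‖x‖ * (M * (4 * D)) + (‖x‖ + ‖y‖) * (finrank ℚ K * D) := by
      refine (abs_add_le _ _).trans ?_
      rw [abs_mul, abs_mul]
      exact add_le_add (mul_le_mul hweight hcutoff (abs_nonneg _) (norm_nonneg _))
        ((mul_le_of_le_one_right (abs_nonneg _) hcutoff_le).trans hweight_sub)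

/- The weight vanishes near the walls `normAtPlace w x = 0`, in the sense that `x / ‖x‖` stays away
from them on its support, and the logarithms are Lipschitz there up to a factor `‖x‖⁻¹`, which the
bound `min 1 (norm x) ≤ ‖x‖` compensates. -/
lemma exists_lipschitzWith_idealWeight : ∃ M : ℝ≥0, LipschitzWith M (idealWeight K) := by
  obtain ⟨κ, hκ, hbal⟩ := exists_mul_norm_le_normAtPlace K
  obtain ⟨M, hM⟩ := exists_lipschitzWith_logCutoff K
  refine exists_lipschitzWith_of_forall_norm_sub_le (ε := κ / 2) (A := 1)
    (B := 2 / κ * (4 * M + (2 + κ / 2) * finrank ℚ K)) (by positivity) zero_le_one (by positivity)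
    (by simpa only [one_mul] using abs_idealWeight_le K) fun x y hx hxy ↦ ?_
  have hNx := norm_pos_of_idealWeight_ne_zero K hx
  have hx0 : 0 < ‖x‖ := (mixedEmbedding_norm_pos.1 hNx w₀).trans_le (normAtPlace_le_norm w₀ x)
  have hlow_x (w) : κ / 2 * ‖x‖ ≤ normAtPlace w x := by
    linarith [hbal x hx w, mul_pos hκ hx0]
  have hlow_y (w) : κ / 2 * ‖x‖ ≤ normAtPlace w y := by
    linarith [hbal x hx w, (abs_le.1 (abs_normAtPlace_sub_le w x y)).2]
  have hNy : 0 < mixedEmbedding.norm y :=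
    mixedEmbedding_norm_pos.2 fun w ↦ (by positivity : 0 < κ / 2 * ‖x‖).trans_le (hlow_y w)
  have hD (w) : |Real.log (normAtPlace w x) - Real.log (normAtPlace w y)| ≤
      ‖x - y‖ / (κ / 2 * ‖x‖) :=
    (abs_log_sub_log_le (by positivity) (hlow_x w) (hlow_y w)).trans
      (by gcongr; exact abs_normAtPlace_sub_le w x y)
  have hy : ‖y‖ ≤ (1 + κ / 2) * ‖x‖ := by
    have : ‖y‖ ≤ ‖x‖ + ‖x - y‖ := by simpa using norm_sub_le x (x - y)
    linarith
  calc |idealWeight K x - idealWeight K y|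
      ≤ ‖x‖ * (M * (4 * (‖x - y‖ / (κ / 2 * ‖x‖)))) +
          (‖x‖ + ‖y‖) * (finrank ℚ K * (‖x - y‖ / (κ / 2 * ‖x‖))) :=
        abs_idealWeight_sub_le K hM hNx hNy hD
    _ ≤ ‖x‖ * (M * (4 * (‖x - y‖ / (κ / 2 * ‖x‖)))) +
          (‖x‖ + (1 + κ / 2) * ‖x‖) * (finrank ℚ K * (‖x - y‖ / (κ / 2 * ‖x‖))) := by gcongr
    _ = 2 / κ * (4 * M + (2 + κ / 2) * finrank ℚ K) * ‖x - y‖ := by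
      field_simp
      ring

lemma integral_idealWeight_pos : 0 < ∫ x, idealWeight K x := by
  obtain ⟨M, hM⟩ := exists_lipschitzWith_idealWeight K
  have hN : mixedEmbedding.norm ((1 / 2 : ℝ) • (1 : mixedSpace K)) = (1 / 2) ^ finrank ℚ K := by
    rw [mixedEmbedding.norm_smul, map_one, mul_one, abs_of_pos one_half_pos]
  have hlt : ((1 / 2 : ℝ)) ^ finrank ℚ K < 1 :=
    pow_lt_one₀ one_half_pos.le one_half_lt_one finrank_pos.ne'
  have hpow : (0 : ℝ) < (1 / 2) ^ finrank ℚ K := by positivity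
  refine hM.continuous.integral_pos_of_hasCompactSupport_nonneg_nonzero
    (hasCompactSupport_idealWeight K) (idealWeight_nonneg K)
    (x := (1 / 2 : ℝ) • (1 : mixedSpace K)) ?_
  rw [idealWeight, hN, logMap_real, logCutoff_zero, mul_one,
    parabolicWeight_of_mem ⟨hpow.le, hlt.le⟩]
  exact (mul_pos hpow (sub_pos.2 hlt)).ne'

end IdealWeight

section IdealClassFibration

open scoped nonZeroDivisors

variable {R : Type*} [CommRing R] [IsDedekindDomain R]

lemma exists_mul_eq_span_singleton_of_mem {J : (Ideal R)⁰} {α : R} (hα : α ∈ (J : Ideal R))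
    (hα0 : α ≠ 0) : ∃ I : (Ideal R)⁰, ClassGroup.mk0 I = (ClassGroup.mk0 J)⁻¹ ∧
      (I : Ideal R) * J = Ideal.span {α} := by
  obtain ⟨I, hI⟩ := Ideal.dvd_iff_le.2 ((Ideal.span_singleton_le_iff_mem _).2 hα)
  have hI0 : I ≠ 0 := by
    rintro rfl
    exact hα0 (Ideal.span_singleton_eq_bot.1 (hI.trans (mul_zero _)))
  let I₀ : (Ideal R)⁰ := ⟨I, mem_nonZeroDivisors_of_ne_zero hI0⟩
  have hprincipal : ClassGroup.mk0 (I₀ * J) = 1 :=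
    (ClassGroup.mk0_eq_one_iff (I₀ * J).2).2 ⟨α, (mul_comm I J).trans hI.symm⟩
  rw [map_mul] at hprincipal
  exact ⟨I₀, eq_inv_of_mul_eq_one_left hprincipal, (mul_comm I J).trans hI.symm⟩

lemma hasSum_tsum_generators {J : (Ideal R)⁰} {F : R → ℝ} {S : ℝ} (hF : HasSum F S)
    (hF0 : F 0 = 0) (hFJ : ∀ α ∉ (J : Ideal R), F α = 0) :
    HasSum (fun I : {I : (Ideal R)⁰ // ClassGroup.mk0 I = (ClassGroup.mk0 J)⁻¹} ↦
      ∑' α : (fun α : R ↦ Ideal.span {α}) ⁻¹' {(I.1 : Ideal R) * J}, F α) S := by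
  have hinj : Function.Injective
      fun I : {I : (Ideal R)⁰ // ClassGroup.mk0 I = (ClassGroup.mk0 J)⁻¹} ↦
        (I.1 : Ideal R) * J := fun I I' h ↦
    Subtype.ext (Subtype.ext (mul_right_cancel₀ (nonZeroDivisors.coe_ne_zero J) h))
  refine (hinj.hasSum_iff fun 𝔞 h𝔞 ↦ ?_).2 (hF.tsum_fiberwise fun α ↦ Ideal.span {α})
  refine (tsum_congr fun ⟨α, (hα : Ideal.span {α} = 𝔞)⟩ ↦ ?_).trans tsum_zero
  by_contra hFα
  obtain ⟨I, hI, hIJ⟩ := exists_mul_eq_span_singleton_of_mem (J := J) (α := α)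
    (by_contra fun h ↦ hFα (hFJ α h)) fun h ↦ hFα (h ▸ hF0)
  exact h𝔞 ⟨⟨I, hI⟩, hIJ.trans hα⟩

lemma hasSum_generators_of_units {R : Type*} [CommRing R] [IsDomain R] {g : R} (hg : g ≠ 0)
    {F : R → ℝ} {S : ℝ} (hF : HasSum (fun u : Rˣ ↦ F (u * g)) S) :
    HasSum (fun α : (fun α : R ↦ Ideal.span {α}) ⁻¹' {Ideal.span {g}} ↦ F α) S := by
  let e : Rˣ → (fun α : R ↦ Ideal.span {α}) ⁻¹' {Ideal.span {g}} := fun u ↦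
    ⟨u * g, Ideal.span_singleton_mul_left_unit u.isUnit g⟩
  have he : Function.Bijective e := by
    refine ⟨fun u v huv ↦ Units.ext (mul_right_cancel₀ hg (congrArg Subtype.val huv)), ?_⟩
    rintro ⟨α, hα⟩
    obtain ⟨u, hu⟩ := Ideal.span_singleton_eq_span_singleton.1 (Eq.symm hα)
    exact ⟨u, Subtype.ext ((mul_comm _ _).trans hu)⟩
  exact (Equiv.ofBijective e he).hasSum_iff.1 hF

end IdealClassFibration

section IdealCounting

open NumberField NumberField.mixedEmbedding NumberField.Units MeasureTheory Module Set
open NumberField.Units.dirichletUnitTheorem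
open scoped nonZeroDivisors

variable {K : Type*} [Field K] [NumberField K]

lemma mixedEmbedding_norm_eq_absNorm_span (g : 𝓞 K) :
    mixedEmbedding.norm (mixedEmbedding K g) = Ideal.absNorm (Ideal.span {g}) := by
  rw [mixedEmbedding.norm_eq_norm, Ideal.absNorm_span_singleton, Nat.cast_natAbs,
    ← Algebra.coe_norm_int]
  push_cast
  rfl

lemma hasSum_idealWeight_generators {g : 𝓞 K} (hg : g ≠ 0) {h : ℝ} (hh : 0 < h) :
    HasSum (fun α : (fun α : 𝓞 K ↦ Ideal.span {α}) ⁻¹' {Ideal.span {g}} ↦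
        idealWeight K (h • mixedEmbedding K (α : 𝓞 K)))
      (parabolicWeight (h ^ finrank ℚ K * Ideal.absNorm (Ideal.span {g})) * torsionOrder K) := by
  refine hasSum_generators_of_units hg
    (F := fun α : 𝓞 K ↦ idealWeight K (h • mixedEmbedding K (α : K))) ?_
  have hnorm : mixedEmbedding.norm (mixedEmbedding K (g : K)) ≠ 0 := by
    simpa [mixedEmbedding.norm_eq_norm] using hg
  refine ((hasSum_logCutoff_units K (logMap (mixedEmbedding K (g : K)))).mul_left _).congr_fun
    fun u ↦ ?_
  have hu : mixedEmbedding K ((u * g : 𝓞 K) : K) = u • mixedEmbedding K (g : K) := by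
    rw [unitSMul_smul, ← map_mul]
    rfl
  rw [hu, idealWeight, logMap_real_smul (by rwa [norm_unit_smul]) hh.ne',
    logMap_unit_smul u hnorm, mixedEmbedding.norm_smul, norm_unit_smul, abs_of_pos hh,
    mixedEmbedding_norm_eq_absNorm_span]

lemma hasSum_indicator_ideal {J : (Ideal (𝓞 K))⁰} {φ : mixedSpace K → ℝ} {S : ℝ}
    (hφ : HasSum (fun l : Submodule.span ℤ
      (range (fractionalIdealLatticeBasis K (FractionalIdeal.mk0 K J))) ↦ φ l) S) :
    HasSum (((J : Ideal (𝓞 K)) : Set (𝓞 K)).indicator fun α ↦ φ (mixedEmbedding K α)) S := by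
  have hmem (x : mixedSpace K) :
      x ∈ Submodule.span ℤ (range (fractionalIdealLatticeBasis K (FractionalIdeal.mk0 K J))) ↔
        ∃ α : 𝓞 K, α ∈ (J : Ideal (𝓞 K)) ∧ mixedEmbedding K (α : K) = x := by
    rw [mem_span_fractionalIdealLatticeBasis]
    simp only [FractionalIdeal.coe_mk0, mem_image, SetLike.mem_coe, FractionalIdeal.mem_coeIdeal,
      exists_exists_and_eq_and]
  let e : {α : 𝓞 K // α ∈ (J : Ideal (𝓞 K))} →
      Submodule.span ℤ (range (fractionalIdealLatticeBasis K (FractionalIdeal.mk0 K J))) :=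
    fun α ↦ ⟨mixedEmbedding K (α.1 : K), (hmem _).2 ⟨α, α.2, rfl⟩⟩
  have he : Function.Bijective e := by
    refine ⟨fun α β hαβ ↦ ?_, fun ⟨x, hx⟩ ↦ ?_⟩
    · exact Subtype.ext (RingOfIntegers.ext
        (mixedEmbedding_injective K (congrArg Subtype.val hαβ)))
    · obtain ⟨α, hα, hαx⟩ := (hmem x).1 hx
      exact ⟨⟨α, hα⟩, Subtype.ext hαx⟩
  rw [← hasSum_subtype_iff_indicator]
  exact (Equiv.ofBijective e he).hasSum_iff.2 hφ

lemma hasSum_parabolicWeight_idealClass (J : (Ideal (𝓞 K))⁰) {h : ℝ} (hh : 0 < h) :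
    HasSum (fun I : {I : (Ideal (𝓞 K))⁰ // ClassGroup.mk0 I = (ClassGroup.mk0 J)⁻¹} ↦
        parabolicWeight (h ^ finrank ℚ K *
          (Ideal.absNorm (I.1 : Ideal (𝓞 K)) * Ideal.absNorm (J : Ideal (𝓞 K)))))
      ((∑' l : Submodule.span ℤ
        (range (fractionalIdealLatticeBasis K (FractionalIdeal.mk0 K J))),
          idealWeight K (h • (l : mixedSpace K))) / torsionOrder K) := by
  have hlattice := hasSum_indicator_ideal (φ := fun x ↦ idealWeight K (h • x))
    (summable_comp_smul_zspan (fractionalIdealLatticeBasis K (FractionalIdeal.mk0 K J))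
      (hasCompactSupport_idealWeight K) hh.ne').hasSum
  have hgenerators := hasSum_tsum_generators hlattice
    (by rw [indicator_of_mem (Submodule.zero_mem (J : Ideal (𝓞 K))),
      RingOfIntegers.coe_eq_algebraMap, map_zero, map_zero, smul_zero, idealWeight_zero])
    fun α hα ↦ indicator_of_notMem hα _
  refine (hgenerators.div_const _).congr_fun fun I ↦ ?_
  obtain ⟨g, hg⟩ : ∃ g : 𝓞 K, (I.1 : Ideal (𝓞 K)) * J = Ideal.span {g} :=
    ((ClassGroup.mk0_eq_one_iff (I.1 * J).2).1 (by
      rw [Subtype.coe_eta, map_mul, I.2, inv_mul_cancel])).principal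
  have hg0 : g ≠ 0 := by
    rintro rfl
    exact (mul_ne_zero (nonZeroDivisors.coe_ne_zero I.1) (nonZeroDivisors.coe_ne_zero J))
      (hg.trans Ideal.span_zero)
  have hfiber (α : (fun α : 𝓞 K ↦ Ideal.span {α}) ⁻¹' {Ideal.span {g}}) :
      ((J : Ideal (𝓞 K)) : Set (𝓞 K)).indicator
          (fun α ↦ idealWeight K (h • mixedEmbedding K (α : K))) α =
        idealWeight K (h • mixedEmbedding K ((α : 𝓞 K) : K)) := by
    have hα : Ideal.span {(α : 𝓞 K)} = (I.1 : Ideal (𝓞 K)) * J :=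
      (show Ideal.span {(α : 𝓞 K)} = Ideal.span {g} from α.2).trans hg.symm
    have hαJ : (α : 𝓞 K) ∈ (J : Ideal (𝓞 K)) :=
      (Ideal.span_singleton_le_iff_mem _).1 (hα.trans_le Ideal.mul_le_right)
    exact indicator_of_mem (SetLike.mem_coe.2 hαJ) _
  rw [← Nat.cast_mul, ← map_mul, hg, tsum_congr hfiber,
    (hasSum_idealWeight_generators hg0 hh).tsum_eq, mul_div_cancel_right₀ _
      (Nat.cast_ne_zero.2 (torsionOrder_pos K).ne')]

lemma exists_abs_tsum_idealWeight_sub_le (J : (Ideal (𝓞 K))⁰) :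
    ∃ m B : ℝ, 0 < m ∧ ∀ s ∈ Ioc (0 : ℝ) 1,
      |∑' l : Submodule.span ℤ
          (range (fractionalIdealLatticeBasis K (FractionalIdeal.mk0 K J))),
        idealWeight K (s ^ (finrank ℚ K : ℝ)⁻¹ • (l : mixedSpace K)) - m * s⁻¹| ≤
        B * s ^ ((finrank ℚ K : ℝ)⁻¹ - 1) := by
  set b := fractionalIdealLatticeBasis K (FractionalIdeal.mk0 K J)
  obtain ⟨M, hM⟩ := exists_lipschitzWith_idealWeight K
  obtain ⟨B, hB⟩ := exists_abs_tsum_zspan_sub_integral_le b volume hM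
    (hasCompactSupport_idealWeight K)
  rw [mixedEmbedding.finrank K] at hB
  have hvol : 0 < volume.real (ZSpan.fundamentalDomain b) :=
    ENNReal.toReal_pos (ZSpan.measure_fundamentalDomain_ne_zero b)
      (ZSpan.fundamentalDomain_isBounded b).measure_lt_top.ne
  refine ⟨_, B, div_pos (integral_idealWeight_pos K) hvol, fun s ⟨hs, hs1⟩ ↦ ?_⟩
  have hbound := hB (s ^ (finrank ℚ K : ℝ)⁻¹)
    ⟨Real.rpow_pos_of_pos hs _, Real.rpow_le_one hs.le hs1 (by positivity)⟩
  rw [Real.rpow_inv_natCast_pow hs.le finrank_pos.ne'] at hbound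
  rw [Real.rpow_sub_one hs.ne', ← mul_div_assoc, le_div_iff₀' hs, ← abs_of_pos hs, ← abs_mul,
    abs_of_pos hs, mul_sub, mul_left_comm s, mul_inv_cancel₀ hs.ne', mul_one]
  exact hbound

lemma exists_hasSum_parabolicWeight_idealClass (C : ClassGroup (𝓞 K)) :
    ∃ c B : ℝ, 0 < c ∧ ∀ t ∈ Ioc (0 : ℝ) 1, ∃ S : ℝ,
      HasSum (fun I : {I : (Ideal (𝓞 K))⁰ // ClassGroup.mk0 I = C} ↦
        parabolicWeight (Ideal.absNorm (I.1 : Ideal (𝓞 K)) * t)) S ∧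
      |S - c * t⁻¹| ≤ B * t ^ ((finrank ℚ K : ℝ)⁻¹ - 1) := by
  obtain ⟨J, hJ⟩ := ClassGroup.mk0_surjective C⁻¹
  obtain ⟨m, B, hm, hB⟩ := exists_abs_tsum_idealWeight_sub_le J
  let q : ℝ := Ideal.absNorm (J : Ideal (𝓞 K))
  have hq : 1 ≤ q :=
    Nat.one_le_cast.2 (Nat.one_le_iff_ne_zero.2 (Ideal.absNorm_ne_zero_of_nonZeroDivisors J))
  let w : ℝ := torsionOrder K
  have hw : 0 < w := Nat.cast_pos.2 (torsionOrder_pos K)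
  refine ⟨m * q / w, B / q ^ ((finrank ℚ K : ℝ)⁻¹ - 1) / w, by positivity, fun t ht ↦ ?_⟩
  have htq : 0 < t / q := div_pos ht.1 (zero_lt_one.trans_le hq)
  have htq1 : t / q ≤ 1 := (div_le_one (by positivity)).2 (ht.2.trans hq)
  have hsum := hasSum_parabolicWeight_idealClass J
    (Real.rpow_pos_of_pos htq (finrank ℚ K : ℝ)⁻¹)
  rw [hJ, inv_inv, Real.rpow_inv_natCast_pow htq.le finrank_pos.ne'] at hsum
  have hbound := hB (t / q) ⟨htq, htq1⟩
  set Θ := ∑' l : Submodule.span ℤ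
    (range (fractionalIdealLatticeBasis K (FractionalIdeal.mk0 K J))),
      idealWeight K ((t / q) ^ (finrank ℚ K : ℝ)⁻¹ • (l : mixedSpace K))
  refine ⟨Θ / w, hsum.congr_fun fun I ↦ congrArg parabolicWeight ?_, ?_⟩
  · change _ = t / q * (_ * q)
    field_simp
  · calc |Θ / w - m * q / w * t⁻¹| = |Θ - m * (t / q)⁻¹| / w := by
          rw [← abs_of_pos hw, ← abs_div, abs_of_pos hw, inv_div]
          ring_nf
      _ ≤ B * (t / q) ^ ((finrank ℚ K : ℝ)⁻¹ - 1) / w := by gcongr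
      _ = B / q ^ ((finrank ℚ K : ℝ)⁻¹ - 1) / w * t ^ ((finrank ℚ K : ℝ)⁻¹ - 1) := by
          rw [Real.div_rpow ht.1.le (by positivity)]
          ring

end IdealCounting

section IdealsOfAbsNorm

variable (R : Type*) [CommRing R] [IsDedekindDomain R] [Module.Free ℤ R] [Module.Finite ℤ R]
  [CharZero R]

/-- The finite set of ideals of absolute norm `n`, whose cardinality is the `n`-th coefficient of
the Dedekind zeta function. -/
def idealsOfAbsNorm (n : ℕ) : Finset (Ideal R) :=
  (Ideal.finite_setOfPred_absNorm_eq (S := R) n).toFinset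

variable {R}

lemma mem_idealsOfAbsNorm {n : ℕ} {I : Ideal R} :
    I ∈ idealsOfAbsNorm R n ↔ Ideal.absNorm I = n := by
  simp only [idealsOfAbsNorm, Set.Finite.mem_toFinset, Set.mem_ofPred_eq]

lemma tsum_card_idealsOfAbsNorm_mul {F : ℕ → ℝ} (hF : F 0 = 0) {S : ℝ}
    (hS : HasSum (fun I : nonZeroDivisors (Ideal R) ↦ F (Ideal.absNorm (I : Ideal R))) S) :
    ∑' n, (idealsOfAbsNorm R n).card * F n = S := by
  have hall : HasSum (fun I : Ideal R ↦ F (Ideal.absNorm I)) S := by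
    refine (Subtype.val_injective.hasSum_iff fun I hI ↦ ?_).1 hS
    have hI0 : I = ⊥ := by
      by_contra h
      exact hI ⟨⟨I, mem_nonZeroDivisors_of_ne_zero h⟩, rfl⟩
    rw [hI0, Ideal.absNorm_bot, hF]
  refine Eq.trans (tsum_congr fun n ↦ ?_) (hall.tsum_fiberwise Ideal.absNorm).tsum_eq
  have hfiber : Ideal.absNorm ⁻¹' {n} = (idealsOfAbsNorm R n : Set (Ideal R)) :=
    Set.ext fun I ↦ mem_idealsOfAbsNorm.symm
  rw [hfiber, Finset.tsum_subtype' (idealsOfAbsNorm R n) fun I ↦ F (Ideal.absNorm I),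
    Finset.sum_congr rfl fun I hI ↦ by rw [mem_idealsOfAbsNorm.1 hI], Finset.sum_const,
    nsmul_eq_mul]

end IdealsOfAbsNorm

section IdealAsymptotics

open NumberField Module Set
open scoped nonZeroDivisors

variable (K : Type*) [Field K] [NumberField K]

theorem exists_abs_parabolicSum_card_idealsOfAbsNorm_sub_le :
    ∃ c C : ℝ, 0 < c ∧ ∀ t ∈ Ioc (0 : ℝ) 1,
      |parabolicSum (fun n ↦ (idealsOfAbsNorm (𝓞 K) n).card) t - c * t⁻¹| ≤
        C * t ^ ((finrank ℚ K : ℝ)⁻¹ - 1) := by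
  choose c B hc hcB using exists_hasSum_parabolicWeight_idealClass (K := K)
  refine ⟨∑ 𝔠, c 𝔠, ∑ 𝔠, B 𝔠, Finset.sum_pos (fun 𝔠 _ ↦ hc 𝔠) Finset.univ_nonempty,
    fun t ht ↦ ?_⟩
  choose S hS hSB using fun 𝔠 ↦ hcB 𝔠 t ht
  have hsum : HasSum (fun I : (Ideal (𝓞 K))⁰ ↦
      parabolicWeight (Ideal.absNorm (I : Ideal (𝓞 K)) * t)) (∑ 𝔠, S 𝔠) := by
    refine (hasSum_sum fun 𝔠 _ ↦ (hasSum_subtype_iff_indicator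
      (f := fun I : (Ideal (𝓞 K))⁰ ↦ parabolicWeight (Ideal.absNorm (I : Ideal (𝓞 K)) * t))
      (s := {I | ClassGroup.mk0 I = 𝔠})).1 (hS 𝔠)).congr_fun fun I ↦ ?_
    simp only [indicator_apply, mem_ofPred_eq, Finset.sum_ite_eq, Finset.mem_univ, if_true]
  rw [parabolicSum, tsum_card_idealsOfAbsNorm_mul (F := fun n ↦ parabolicWeight (n * t))
    (by simp [parabolicWeight]) hsum, Finset.sum_mul, Finset.sum_mul, ← Finset.sum_sub_distrib]
  exact (Finset.abs_sum_le_sum_abs _ _).trans (Finset.sum_le_sum fun 𝔠 _ ↦ hSB 𝔠)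

end IdealAsymptotics

section IdealVonMangoldt

open UniqueFactorizationMonoid
open scoped ArithmeticFunction.vonMangoldt

variable {R : Type*} [CommRing R] [IsDedekindDomain R]

lemma le_count_normalizedFactors_iff {I P : Ideal R} (hI : I ≠ 0) (hP : Prime P) (k : ℕ) :
    k ≤ (normalizedFactors I).count P ↔ P ^ k ∣ I := by
  rw [pow_dvd_iff_le_emultiplicity,
    emultiplicity_eq_count_normalizedFactors hP.irreducible hI, normalize_eq]
  exact Nat.cast_le.symm

/-- The pairs `(P, k)` with `P` prime and `P ^ k`, `1 ≤ k`, a divisor of the nonzero ideal `I`. -/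
def primePowerDivisors (I : Ideal R) : Finset (Ideal R × ℕ) :=
  ((normalizedFactors I).toFinset.sigma fun P ↦
    Finset.Icc 1 ((normalizedFactors I).count P)).map (Equiv.sigmaEquivProd _ _).toEmbedding

lemma mem_primePowerDivisors {I : Ideal R} (hI : I ≠ 0) {z : Ideal R × ℕ} :
    z ∈ primePowerDivisors I ↔ Prime z.1 ∧ 1 ≤ z.2 ∧ z.1 ^ z.2 ∣ I := by
  obtain ⟨P, k⟩ := z
  have hmem : (P, k) ∈ primePowerDivisors I ↔
      P ∈ normalizedFactors I ∧ 1 ≤ k ∧ k ≤ (normalizedFactors I).count P := by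
    simp only [primePowerDivisors, Finset.mem_map_equiv, Equiv.sigmaEquivProd_symm_apply,
      Finset.mem_sigma, Multiset.mem_toFinset, Finset.mem_Icc]
  rw [hmem]
  constructor
  · rintro ⟨hP, hk, hle⟩
    have hprime := prime_of_normalized_factor P hP
    exact ⟨hprime, hk, (le_count_normalizedFactors_iff hI hprime k).1 hle⟩
  · rintro ⟨hP, hk, hdvd⟩
    have hle := (le_count_normalizedFactors_iff hI hP k).2 hdvd
    exact ⟨Multiset.one_le_count_iff_mem.1 (hk.trans hle), hk, hle⟩

variable [Module.Free ℤ R] [Module.Finite ℤ R]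

lemma two_le_absNorm {P : Ideal R} (hP : Prime P) : 2 ≤ Ideal.absNorm P := by
  have h0 : Ideal.absNorm P ≠ 0 := Ideal.absNorm_eq_zero_iff.not.2 hP.ne_zero
  have h1 : Ideal.absNorm P ≠ 1 := fun h ↦
    hP.not_isUnit (Ideal.isUnit_iff.2 (Ideal.absNorm_eq_one_iff.1 h))
  omega

lemma log_absNorm_eq_sum_primePowerDivisors {I : Ideal R} (hI : I ≠ 0) :
    Real.log (Ideal.absNorm I) =
      ∑ z ∈ primePowerDivisors I, Real.log (Ideal.absNorm z.1) := by
  have hfactor : ∏ P ∈ (normalizedFactors I).toFinset,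
      (Ideal.absNorm P : ℝ) ^ (normalizedFactors I).count P = Ideal.absNorm I := by
    conv_rhs => rw [← Ideal.prod_normalizedFactors_eq_self hI, Finset.prod_multiset_count]
    push_cast [map_prod, map_pow]
    rfl
  rw [← hfactor, Real.log_prod fun P hP ↦ ?_, primePowerDivisors, Finset.sum_map,
    Finset.sum_sigma]
  · refine Finset.sum_congr rfl fun P _ ↦ ?_
    simp [Real.log_pow]
  · have := two_le_absNorm (prime_of_normalized_factor P (Multiset.mem_toFinset.1 hP))
    positivity

variable [CharZero R]

variable (R) in
/-- The pairs `(P, k)` with `P` prime, `1 ≤ k` and `P ^ k` of absolute norm `n`. -/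
def primePowersOfAbsNorm (n : ℕ) : Finset (Ideal R × ℕ) :=
  ((Ideal.finite_setOfPred_absNorm_le (S := R) n).toFinset ×ˢ Finset.Icc 1 n).filter
    fun z ↦ Prime z.1 ∧ Ideal.absNorm z.1 ^ z.2 = n

lemma mem_primePowersOfAbsNorm {n : ℕ} {z : Ideal R × ℕ} :
    z ∈ primePowersOfAbsNorm R n ↔ Prime z.1 ∧ 1 ≤ z.2 ∧ Ideal.absNorm z.1 ^ z.2 = n := by
  simp only [primePowersOfAbsNorm, Finset.mem_filter, Finset.mem_product,
    Set.Finite.mem_toFinset, Set.mem_ofPred_eq, Finset.mem_Icc]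
  constructor
  · rintro ⟨⟨-, hk, -⟩, hP, hn⟩
    exact ⟨hP, hk, hn⟩
  · rintro ⟨hP, hk, rfl⟩
    have hP2 := two_le_absNorm hP
    exact ⟨⟨Nat.le_self_pow (by omega) _, hk, (Nat.lt_pow_self hP2).le⟩, hP, rfl⟩

variable (R) in
/-- The von Mangoldt function of the ideals of `R`, summed over the ideals of absolute norm `n`: up
to sign, the coefficients of the logarithmic derivative of the Dedekind zeta function. -/
def idealVonMangoldt (n : ℕ) : ℝ :=
  ∑ z ∈ primePowersOfAbsNorm R n, Real.log (Ideal.absNorm z.1)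

lemma idealVonMangoldt_nonneg (n : ℕ) : 0 ≤ idealVonMangoldt R n :=
  Finset.sum_nonneg fun _ _ ↦ Real.log_natCast_nonneg _

lemma injOn_fst_primePowersOfAbsNorm (n : ℕ) :
    Set.InjOn Prod.fst (primePowersOfAbsNorm R n : Set (Ideal R × ℕ)) := by
  rintro ⟨P, j⟩ hj ⟨_, k⟩ hk (rfl : P = _)
  obtain ⟨hP, -, hPj⟩ := mem_primePowersOfAbsNorm.1 hj
  exact congrArg (P, ·) (Nat.pow_right_injective (two_le_absNorm hP)
    (hPj.trans (mem_primePowersOfAbsNorm.1 hk).2.2.symm))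

lemma dvd_span_of_mem_primePowersOfAbsNorm {p m : ℕ} {z : Ideal R × ℕ}
    (hz : z ∈ primePowersOfAbsNorm R (p ^ m)) : z.1 ∣ Ideal.span {(p : R)} := by
  obtain ⟨hP, hk, hn⟩ := mem_primePowersOfAbsNorm.1 hz
  have hmem : ((p ^ m : ℕ) : R) ∈ z.1 := by
    rw [← hn, Nat.cast_pow]
    exact Ideal.pow_mem_of_mem _ (Ideal.absNorm_mem z.1) _ hk
  rw [Nat.cast_pow] at hmem
  rw [Ideal.dvd_span_singleton]
  exact (Ideal.isPrime_of_prime hP).mem_of_pow_mem _ hmem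

lemma idealVonMangoldt_pow_le {p : ℕ} (hp : p.Prime) (m : ℕ) :
    idealVonMangoldt R (p ^ m) ≤ Module.finrank ℤ R * Real.log p := by
  let s := (primePowersOfAbsNorm R (p ^ m)).image Prod.fst
  have hs : ∀ P ∈ s, Prime P ∧ P ∣ Ideal.span {(p : R)} := by
    intro P hP
    obtain ⟨z, hz, rfl⟩ := Finset.mem_image.1 hP
    exact ⟨(mem_primePowersOfAbsNorm.1 hz).1, dvd_span_of_mem_primePowersOfAbsNorm hz⟩
  have hpos : ∀ P ∈ s, (0 : ℝ) < Ideal.absNorm P := fun P hP ↦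
    Nat.cast_pos.2 (zero_lt_two.trans_le (two_le_absNorm (hs P hP).1))
  have hdvd : ∏ P ∈ s, Ideal.absNorm P ∣ p ^ Module.finrank ℤ R := by
    rw [← Ideal.absNorm_span_natCast, ← map_prod]
    exact map_dvd _ (Finset.prod_primes_dvd _ (fun P hP ↦ (hs P hP).1) fun P hP ↦ (hs P hP).2)
  calc idealVonMangoldt R (p ^ m) = ∑ P ∈ s, Real.log (Ideal.absNorm P) :=
        (Finset.sum_image (f := fun P ↦ Real.log (Ideal.absNorm P))
          (injOn_fst_primePowersOfAbsNorm _)).symm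
    _ = Real.log (∏ P ∈ s, (Ideal.absNorm P : ℝ)) :=
        (Real.log_prod fun P hP ↦ (hpos P hP).ne').symm
    _ ≤ Real.log ((p : ℝ) ^ Module.finrank ℤ R) := by
        refine Real.log_le_log (Finset.prod_pos hpos) ?_
        exact_mod_cast Nat.le_of_dvd (pow_pos hp.pos _) hdvd
    _ = Module.finrank ℤ R * Real.log p := Real.log_pow _ _

lemma idealVonMangoldt_le (n : ℕ) : idealVonMangoldt R n ≤ Module.finrank ℤ R * Λ n := by
  obtain hempty | ⟨⟨P, k⟩, hPk⟩ := (primePowersOfAbsNorm R n).eq_empty_or_nonempty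
  · rw [idealVonMangoldt, hempty, Finset.sum_empty]
    exact mul_nonneg (Nat.cast_nonneg _) ArithmeticFunction.vonMangoldt_nonneg
  · obtain ⟨hP, hk, hn⟩ := mem_primePowersOfAbsNorm.1 hPk
    have : P.IsMaximal := (Ideal.isPrime_of_prime hP).isMaximal hP.ne_zero
    obtain ⟨p, m, hm, -, hp, hN⟩ := Ideal.exists_prime_and_absNorm_eq_pow P
    rw [← hn, hN, ← pow_mul,
      ArithmeticFunction.vonMangoldt_apply_pow (mul_ne_zero hm.ne' (Nat.one_le_iff_ne_zero.1 hk)),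
      ArithmeticFunction.vonMangoldt_apply_prime hp]
    exact idealVonMangoldt_pow_le hp _

lemma idealVonMangoldt_apply_prime {p : ℕ} (hp : p.Prime) :
    idealVonMangoldt R p = (idealsOfAbsNorm R p).card * Real.log p := by
  have himage : primePowersOfAbsNorm R p = (idealsOfAbsNorm R p).image (·, 1) := by
    ext ⟨P, k⟩
    simp only [mem_primePowersOfAbsNorm, Finset.mem_image, mem_idealsOfAbsNorm, Prod.mk.injEq]
    constructor
    · rintro ⟨-, -, hpow⟩
      obtain rfl : k = 1 := (hpow ▸ hp : (Ideal.absNorm P ^ k).Prime).eq_one_of_pow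
      exact ⟨P, (pow_one _).symm.trans hpow, rfl, rfl⟩
    · rintro ⟨P, hP, rfl, rfl⟩
      have hbot : P ≠ ⊥ := by
        rintro rfl
        exact hp.ne_zero (hP.symm.trans Ideal.absNorm_bot)
      exact ⟨Ideal.prime_of_isPrime hbot (Ideal.isPrime_of_irreducible_absNorm (hP ▸ hp)), le_rfl,
        (pow_one _).trans hP⟩
  rw [idealVonMangoldt, himage, Finset.sum_image (Prod.mk_left_injective 1).injOn,
    Finset.sum_congr rfl fun P hP ↦ by rw [mem_idealsOfAbsNorm.1 hP], Finset.sum_const,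
    nsmul_eq_mul]

lemma bijOn_mul_primePower {n : ℕ} (hn : n ≠ 0) :
    Set.BijOn (fun x : (_ : ℕ × ℕ) × Ideal R × Ideal R × ℕ ↦
        (⟨x.2.1 * x.2.2.1 ^ x.2.2.2, x.2.2⟩ : (_ : Ideal R) × Ideal R × ℕ))
      (n.divisorsAntidiagonal.sigma fun ab ↦
        idealsOfAbsNorm R ab.1 ×ˢ primePowersOfAbsNorm R ab.2 :
        Finset ((_ : ℕ × ℕ) × Ideal R × Ideal R × ℕ))
      ((idealsOfAbsNorm R n).sigma primePowerDivisors) := by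
  have hne {I : Ideal R} (hI : Ideal.absNorm I = n) : I ≠ 0 := by
    rintro rfl
    exact hn (hI.symm.trans Ideal.absNorm_bot)
  refine ⟨?_, ?_, ?_⟩
  · rintro ⟨⟨a, b⟩, A, P, k⟩ hx
    simp only [Finset.mem_coe, Finset.mem_sigma, Nat.mem_divisorsAntidiagonal, Finset.mem_product,
      mem_idealsOfAbsNorm, mem_primePowersOfAbsNorm] at hx ⊢
    obtain ⟨⟨rfl, -⟩, rfl, hP, hk, rfl⟩ := hx
    have hN : Ideal.absNorm (A * P ^ k) = Ideal.absNorm A * Ideal.absNorm P ^ k := by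
      rw [map_mul, map_pow]
    exact ⟨hN, (mem_primePowerDivisors (hne hN)).2 ⟨hP, hk, dvd_mul_left _ _⟩⟩
  · rintro ⟨⟨a, b⟩, A, P, k⟩ hx ⟨⟨a', b'⟩, A', P', k'⟩ hx' heq
    simp only [Finset.mem_coe, Finset.mem_sigma, Nat.mem_divisorsAntidiagonal, Finset.mem_product,
      mem_idealsOfAbsNorm, mem_primePowersOfAbsNorm] at hx hx'
    obtain ⟨-, rfl, hP, -, rfl⟩ := hx
    obtain ⟨-, rfl, -, -, rfl⟩ := hx'
    simp only [Sigma.mk.injEq, heq_eq_eq, Prod.mk.injEq] at heq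
    obtain ⟨hA, rfl, rfl⟩ := heq
    obtain rfl := mul_right_cancel₀ (pow_ne_zero k hP.ne_zero) hA
    rfl
  · rintro ⟨I, P, k⟩ hI
    simp only [Finset.mem_coe, Finset.mem_sigma, mem_idealsOfAbsNorm] at hI
    obtain ⟨hN, hdvd⟩ := hI
    obtain ⟨hP, hk, A, rfl⟩ := (mem_primePowerDivisors (hne hN)).1 hdvd
    refine ⟨⟨(Ideal.absNorm A, Ideal.absNorm P ^ k), A, P, k⟩, ?_, by simp only [mul_comm]⟩
    simp only [Finset.mem_coe, Finset.mem_sigma, Nat.mem_divisorsAntidiagonal, Finset.mem_product,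
      mem_idealsOfAbsNorm, mem_primePowersOfAbsNorm]
    rw [map_mul, map_pow, mul_comm] at hN
    exact ⟨⟨hN, hn⟩, trivial, hP, hk, trivial⟩

lemma sum_card_mul_idealVonMangoldt (n : ℕ) :
    ∑ ab ∈ n.divisorsAntidiagonal, ((idealsOfAbsNorm R ab.1).card : ℝ) *
      idealVonMangoldt R ab.2 = (idealsOfAbsNorm R n).card * Real.log n := by
  obtain rfl | hn := eq_or_ne n 0
  · simp
  have hlog : ∀ I ∈ idealsOfAbsNorm R n,
      Real.log n = ∑ z ∈ primePowerDivisors I, Real.log (Ideal.absNorm z.1) := by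
    intro I hI
    rw [← mem_idealsOfAbsNorm.1 hI]
    refine log_absNorm_eq_sum_primePowerDivisors ?_
    rintro rfl
    exact hn ((mem_idealsOfAbsNorm.1 hI).symm.trans Ideal.absNorm_bot)
  rw [← nsmul_eq_mul, ← Finset.sum_const, Finset.sum_congr rfl hlog, Finset.sum_sigma']
  simp only [idealVonMangoldt, ← nsmul_eq_mul, ← Finset.sum_const, ← Finset.sum_product']
  rw [Finset.sum_sigma']
  have hbij := bijOn_mul_primePower (R := R) hn
  exact Finset.sum_nbij _ hbij.mapsTo hbij.injOn hbij.surjOn fun _ _ ↦ rfl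

end IdealVonMangoldt

section PrimeIdealTheorem

open NumberField

theorem hasPrimeMean_card_idealsOfAbsNorm (K : Type*) [Field K] [NumberField K] :
    HasPrimeMean (fun p ↦ (idealsOfAbsNorm (𝓞 K) p).card) 1 := by
  obtain ⟨c, C, hc, hC⟩ := exists_abs_parabolicSum_card_idealsOfAbsNorm_sub_le K
  have hδ : (0 : ℝ) < (Module.finrank ℚ K : ℝ)⁻¹ :=
    inv_pos.2 (Nat.cast_pos.2 Module.finrank_pos)
  have hsummatory := tendsto_summatory_div_of_convolution (fun n ↦ Nat.cast_nonneg _)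
    idealVonMangoldt_nonneg (Nat.cast_nonneg _) idealVonMangoldt_le
    sum_card_mul_idealVonMangoldt hδ hc hC
  refine hasPrimeMean_of_tendsto_summatory_div (D := Module.finrank ℤ (𝓞 K)) (fun n ↦ ?_)
    (fun p hp ↦ idealVonMangoldt_apply_prime hp) hsummatory
  rw [abs_of_nonneg (idealVonMangoldt_nonneg n)]
  exact idealVonMangoldt_le n

end PrimeIdealTheorem

section KummerDedekind

open NumberField Polynomial UniqueFactorizationMonoid
open scoped IntermediateField

variable {K : Type*} [Field K] {θ : 𝓞 K} {p : ℕ} [hp : Fact p.Prime]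

lemma mem_monicFactorsMod_iff {g : (ZMod p)[X]} : g ∈ RingOfIntegers.monicFactorsMod θ p ↔
    Irreducible g ∧ g.Monic ∧ g ∣ (minpoly ℤ θ).map (Int.castRingHom (ZMod p)) := by
  rw [Multiset.mem_toFinset,
    Polynomial.mem_normalizedFactors_iff (map_monic_ne_zero (minpoly.monic θ.isIntegral))]

lemma X_sub_C_mem_monicFactorsMod_iff {a : ZMod p} :
    X - C a ∈ RingOfIntegers.monicFactorsMod θ p ↔
      ((minpoly ℤ θ).map (Int.castRingHom (ZMod p))).IsRoot a := by
  rw [mem_monicFactorsMod_iff, dvd_iff_isRoot]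
  exact ⟨fun h ↦ h.2.2, fun h ↦ ⟨irreducible_X_sub_C a, monic_X_sub_C a, h⟩⟩

variable [NumberField K]

lemma finrank_adjoin_singleton_eq (hθ : ℚ⟮(θ : K)⟯ = ⊤) :
    Module.finrank ℤ (Algebra.adjoin ℤ {θ}) = Module.finrank ℤ (𝓞 K) := by
  rw [(Algebra.adjoin.powerBasis' θ.isIntegral).finrank, Algebra.adjoin.powerBasis'_dim,
    RingOfIntegers.rank, ← IntermediateField.finrank_top', ← hθ,
    IntermediateField.adjoin.finrank (Algebra.IsIntegral.isIntegral (R := ℚ) (θ : K)),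
    minpoly.isIntegrallyClosed_eq_field_fractions ℚ K θ.isIntegral,
    (minpoly.monic θ.isIntegral).natDegree_map]

lemma exponent_ne_zero (hθ : ℚ⟮(θ : K)⟯ = ⊤) : RingOfIntegers.exponent θ ≠ 0 := by
  let N := Subalgebra.toSubmodule (Algebra.adjoin ℤ {θ})
  have : Finite (𝓞 K ⧸ N) := Submodule.finiteQuotientOfFreeOfRankEq N
    (finrank_adjoin_singleton_eq hθ)
  have hmem : (Nat.card (𝓞 K ⧸ N) : ℤ) ∈ Ideal.under ℤ (conductor ℤ θ) := by
    rw [Ideal.mem_comap, map_natCast, mem_conductor_iff]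
    intro b
    have hb : Nat.card (𝓞 K ⧸ N) • (Submodule.Quotient.mk b : 𝓞 K ⧸ N) = 0 := card_nsmul_eq_zero'
    rwa [← Submodule.Quotient.mk_smul, Submodule.Quotient.mk_eq_zero, nsmul_eq_mul] at hb
  rw [RingOfIntegers.exponent, Ne, Ideal.absNorm_eq_zero_iff]
  intro hbot
  rw [hbot, Ideal.mem_bot, Nat.cast_eq_zero] at hmem
  exact Nat.card_pos.ne' hmem

lemma mem_primesOver_of_absNorm_eq {P : Ideal (𝓞 K)} (hP : Ideal.absNorm P = p) :
    P ∈ Ideal.primesOver (Ideal.span {(p : ℤ)}) (𝓞 K) := by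
  subst hP
  exact ⟨Ideal.isPrime_of_irreducible_absNorm hp.out, ⟨Ideal.span_singleton_absNorm hp.out⟩⟩

lemma absNorm_primesOverSpanEquivMonicFactorsMod_symm (h : ¬p ∣ RingOfIntegers.exponent θ)
    (g : RingOfIntegers.monicFactorsMod θ p) :
    Ideal.absNorm ((Ideal.primesOverSpanEquivMonicFactorsMod h).symm g : Ideal (𝓞 K)) =
      p ^ (g : (ZMod p)[X]).natDegree := by
  let P := (Ideal.primesOverSpanEquivMonicFactorsMod h).symm g
  have := P.2.2
  have : (Ideal.span {(p : ℤ)}).IsMaximal := Int.ideal_span_isMaximal_of_prime p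
  have : P.1.IsMaximal := Ideal.primesOver.isMaximal P
  rw [Ideal.absNorm_eq_pow_inertiaDeg' P.1 hp.out, Ideal.inertiaDeg'_eq_inertiaDeg,
    Ideal.inertiaDeg_primesOverSpanEquivMonicFactorsMod_symm_apply' h g.2]

theorem card_idealsOfAbsNorm_eq_ncard_isRoot (h : ¬p ∣ RingOfIntegers.exponent θ) :
    (idealsOfAbsNorm (𝓞 K) p).card =
      {a | ((minpoly ℤ θ).map (Int.castRingHom (ZMod p))).IsRoot a}.ncard := by
  let e := Ideal.primesOverSpanEquivMonicFactorsMod h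
  rw [← Set.ncard_coe_finset]
  refine (Set.ncard_congr (s := {a | IsRoot _ a}) (t := ↑(idealsOfAbsNorm (𝓞 K) p))
    (fun a ha ↦ (e.symm ⟨X - C a, X_sub_C_mem_monicFactorsMod_iff.2 ha⟩).1)
    (fun a ha ↦ ?_) (fun a b ha hb hab ↦ ?_) fun P hP ↦ ?_).symm
  · rw [Finset.mem_coe, mem_idealsOfAbsNorm, absNorm_primesOverSpanEquivMonicFactorsMod_symm,
      natDegree_X_sub_C, pow_one]
  · have hXC := congrArg Subtype.val (e.symm.injective (Subtype.ext hab))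
    exact C_injective (sub_right_injective hXC)
  · rw [Finset.mem_coe, mem_idealsOfAbsNorm] at hP
    obtain ⟨g, hg⟩ := e.symm.surjective ⟨P, mem_primesOver_of_absNorm_eq hP⟩
    have hdeg : (g : (ZMod p)[X]).natDegree = 1 := by
      have hnorm := absNorm_primesOverSpanEquivMonicFactorsMod_symm h g
      rw [hg, hP] at hnorm
      exact Nat.pow_right_injective hp.out.two_le (hnorm.symm.trans (pow_one p).symm)
    have hlinear : (g : (ZMod p)[X]) = X - C (-(g : (ZMod p)[X]).coeff 0) := by
      rw [C_neg, sub_neg_eq_add]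
      exact (mem_monicFactorsMod_iff.1 g.2).2.1.eq_X_add_C hdeg
    refine ⟨_, X_sub_C_mem_monicFactorsMod_iff.1 (hlinear ▸ g.2), ?_⟩
    simp only [← hlinear, Subtype.coe_eta, hg]

end KummerDedekind

section FrobeniusFixedPoints

open Polynomial

variable {p : ℕ} [hp : Fact p.Prime] {k : Type*} [CommRing k] [IsDomain k] (ι : ZMod p →+* k)

lemma prod_X_sub_C_eq_X_pow_sub_X : ∏ a : ZMod p, (X - C a) = X ^ p - X := by
  have hlt : (X : (ZMod p)[X]).degree < (X ^ p : (ZMod p)[X]).degree := by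
    rw [degree_X, degree_X_pow]
    exact mod_cast hp.out.one_lt
  have hmonic : (X ^ p - X : (ZMod p)[X]).Monic := (monic_X_pow p).sub_of_left hlt
  have hroots : (X ^ p - X : (ZMod p)[X]).roots = Finset.univ.val := by
    simpa only [ZMod.card] using FiniteField.roots_X_pow_card_sub_X (ZMod p)
  have hcard : (X ^ p - X : (ZMod p)[X]).roots.card = (X ^ p - X : (ZMod p)[X]).natDegree := by
    rw [hroots, FiniteField.X_pow_card_sub_X_natDegree_eq _ hp.out.one_lt, Finset.card_val,
      Finset.card_univ, ZMod.card]
  rw [← prod_multiset_X_sub_C_of_monic_of_roots_card_eq hmonic hcard, hroots]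
  rfl

lemma pow_eq_self_iff_mem_range {x : k} : x ^ p = x ↔ x ∈ Set.range ι := by
  have hprod := congrArg (eval₂ ι x) (prod_X_sub_C_eq_X_pow_sub_X (p := p))
  simp only [eval₂_finsetProd, eval₂_sub, eval₂_X, eval₂_C, eval₂_pow] at hprod
  rw [← sub_eq_zero, ← hprod, Finset.prod_eq_zero_iff]
  simp only [Finset.mem_univ, true_and, sub_eq_zero, Set.mem_range, eq_comm (a := x)]

theorem ncard_preimage_image_eq_ncard_fixed {α : Type*} {X : Set α} {s : α → α} {θ : α → k}
    (hs : Set.MapsTo s X X) (hθ : Set.InjOn θ X) (hpow : ∀ x ∈ X, θ (s x) = θ x ^ p) :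
    (ι ⁻¹' (θ '' X)).ncard = {x ∈ X | s x = x}.ncard := by
  have hfixed : ∀ x ∈ X, s x = x ↔ θ x ∈ Set.range ι := fun x hx ↦ by
    rw [← pow_eq_self_iff_mem_range, ← hpow x hx, hθ.eq_iff (hs hx) hx]
  have himage : ι '' (ι ⁻¹' (θ '' X)) = θ '' {x ∈ X | s x = x} := by
    rw [Set.image_preimage_eq_inter_range]
    ext y
    constructor
    · rintro ⟨⟨x, hx, rfl⟩, hy⟩
      exact ⟨x, ⟨hx, (hfixed x hx).2 hy⟩, rfl⟩
    · rintro ⟨x, ⟨hx, hsx⟩, rfl⟩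
      exact ⟨⟨x, hx, rfl⟩, (hfixed x hx).1 hsx⟩
  rw [← Set.ncard_image_of_injective _ ι.injective, himage,
    (hθ.mono fun x hx ↦ hx.1).ncard_image]

end FrobeniusFixedPoints

section ArithmeticFrobenius

open NumberField

variable {L : Type*} [Field L] {p : ℕ} {Q : Ideal (𝓞 L)}

lemma intCast_mem_iff_dvd (hQ : Q ∈ Ideal.primesOver (Ideal.span {(p : ℤ)}) (𝓞 L)) {v : ℤ} :
    (v : 𝓞 L) ∈ Q ↔ (p : ℤ) ∣ v := by
  have := hQ.2
  rw [← Ideal.mem_span_singleton, Ideal.mem_of_liesOver Q (Ideal.span {(p : ℤ)}), eq_intCast]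

lemma charP_quotient (hQ : Q ∈ Ideal.primesOver (Ideal.span {(p : ℤ)}) (𝓞 L)) :
    CharP (𝓞 L ⧸ Q) p where
  cast_eq_zero_iff n := by
    rw [← Int.natCast_dvd_natCast, ← intCast_mem_iff_dvd hQ, Int.cast_natCast,
      ← Ideal.Quotient.eq_zero_iff_mem, map_natCast]

variable [NumberField L]

/-- `σ` is an arithmetic Frobenius element at some prime ideal of `𝓞 L` above `p`. -/
def IsFrobeniusAbove (p : ℕ) (σ : L ≃ₐ[ℚ] L) : Prop :=
  ∃ Q ∈ Ideal.primesOver (Ideal.span {(p : ℤ)}) (𝓞 L), IsArithFrobAt ℤ σ Q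

theorem exists_isFrobeniusAbove [IsGalois ℚ L] (hp : p.Prime) :
    ∃ σ : L ≃ₐ[ℚ] L, IsFrobeniusAbove p σ := by
  have : Fact p.Prime := ⟨hp⟩
  have : (Ideal.span {(p : ℤ)}).IsMaximal := Int.ideal_span_isMaximal_of_prime p
  obtain ⟨Q, hQ, hover⟩ :=
    Ideal.exists_maximal_ideal_liesOver_of_isIntegral (S := 𝓞 L) (Ideal.span {(p : ℤ)})
  have hp₀ : Ideal.span {(p : ℤ)} ≠ ⊥ := by
    simpa only [Ne, Ideal.span_singleton_eq_bot, Nat.cast_eq_zero] using hp.ne_zero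
  have hQ₀ : Q ≠ ⊥ := Ideal.ne_bot_of_liesOver_of_ne_bot hp₀ Q
  have : Finite (𝓞 L ⧸ Q) := Ring.HasFiniteQuotients.finiteQuotient hQ₀
  obtain ⟨σ, hσ⟩ := IsArithFrobAt.exists_of_isInvariant ℤ (L ≃ₐ[ℚ] L) Q
  exact ⟨σ, Q, ⟨hQ.isPrime, hover⟩, hσ⟩

lemma mk_smul_eq_pow_of_isArithFrobAt
    (hQ : Q ∈ Ideal.primesOver (Ideal.span {(p : ℤ)}) (𝓞 L))
    {σ : L ≃ₐ[ℚ] L} (hσ : IsArithFrobAt ℤ σ Q) (x : 𝓞 L) :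
    Ideal.Quotient.mk Q (σ • x) = Ideal.Quotient.mk Q x ^ p := by
  have hunder : Q.under ℤ = Ideal.span {(p : ℤ)} := hQ.2.over.symm
  have hcard : Nat.card (ℤ ⧸ Q.under ℤ) = p := by
    rw [hunder, Nat.card_congr (Int.quotientSpanNatEquivZMod p).toEquiv, Nat.card_zmod]
  rw [← map_pow, Ideal.Quotient.eq, ← hcard]
  exact hσ x

lemma exists_forall_notMem_of_ne_zero {δ : 𝓞 L} (hδ : δ ≠ 0) : ∃ M : ℕ, M ≠ 0 ∧ ∀ p : ℕ,
    ¬p ∣ M → ∀ Q ∈ Ideal.primesOver (Ideal.span {(p : ℤ)}) (𝓞 L), δ ∉ Q := by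
  refine ⟨Ideal.absNorm (Ideal.span {δ}), ?_, fun p hpM Q hQ hδQ ↦ hpM ?_⟩
  · rwa [Ne, Ideal.absNorm_eq_zero_iff, Ideal.span_singleton_eq_bot]
  · rw [← Int.natCast_dvd_natCast, ← intCast_mem_iff_dvd hQ, Int.cast_natCast]
    exact (Ideal.span_singleton_le_iff_mem Q).2 hδQ (Ideal.absNorm_mem _)

lemma exists_forall_injOn_mk (Ω : Finset (𝓞 L)) : ∃ M : ℕ, M ≠ 0 ∧ ∀ p : ℕ, ¬p ∣ M →
    ∀ Q ∈ Ideal.primesOver (Ideal.span {(p : ℤ)}) (𝓞 L), Set.InjOn (Ideal.Quotient.mk Q) Ω := by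
  have hΔ : ∏ z ∈ Ω.offDiag, (z.1 - z.2) ≠ 0 := by
    refine Finset.prod_ne_zero_iff.2 fun z hz ↦ sub_ne_zero.2 ?_
    exact (Finset.mem_offDiag.1 hz).2.2
  obtain ⟨M, hM, hnotMem⟩ := exists_forall_notMem_of_ne_zero hΔ
  refine ⟨M, hM, fun p hpM Q hQ β hβ γ hγ hβγ ↦ ?_⟩
  by_contra hne
  refine hnotMem p hpM Q hQ (Ideal.mem_of_dvd Q ?_ (Ideal.Quotient.eq.1 hβγ))
  exact Finset.dvd_prod_of_mem (fun z : 𝓞 L × 𝓞 L ↦ z.1 - z.2) (a := (β, γ))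
    (Finset.mem_offDiag.2 ⟨hβ, hγ, hne⟩)

end ArithmeticFrobenius

section RootsModuloPrimes

open NumberField Polynomial

lemma leadingCoeff_pow_mul_eval_eq {F : Type*} [Field F] {g : F[X]} (hg : g.Splits) (x : F) :
    g.leadingCoeff ^ g.natDegree * g.eval x = g.leadingCoeff *
      (g.roots.map fun r ↦ g.leadingCoeff * x - g.leadingCoeff * r).prod := by
  simp only [← mul_sub]
  rw [Multiset.prod_map_mul, Multiset.map_const', Multiset.prod_replicate,
    ← hg.natDegree_eq_card_roots, hg.eval_eq_prod_roots]
  ring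

variable {L : Type*} [Field L] {g : ℤ[X]}

lemma exists_coe_eq_leadingCoeff_mul {r : L} (hr : r ∈ g.rootSet L) :
    ∃ t : 𝓞 L, (t : L) = g.leadingCoeff * r := by
  have hint : IsIntegral ℤ (g.leadingCoeff • r) :=
    isIntegral_leadingCoeff_smul g r (aeval_eq_zero_of_mem_rootSet hr)
  exact ⟨⟨_, hint⟩, zsmul_eq_mul _ _⟩

variable [NumberField L]

lemma leadingCoeff_pow_mul_eval_intCast_eq (hg : (g.map (algebraMap ℤ L)).Splits) {θ : L → 𝓞 L}
    (hθ : ∀ r ∈ g.rootSet L, (θ r : L) = g.leadingCoeff * r) (m : ℤ) :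
    ((g.leadingCoeff ^ g.natDegree * g.eval m : ℤ) : 𝓞 L) = g.leadingCoeff *
      ((g.aroots L).map fun r ↦ ((g.leadingCoeff * m : ℤ) : 𝓞 L) - θ r).prod := by
  have hinj : Function.Injective (algebraMap ℤ L) := FaithfulSMul.algebraMap_injective ℤ L
  have h := leadingCoeff_pow_mul_eval_eq hg m
  rw [leadingCoeff_map_of_injective hinj, natDegree_map_eq_of_injective hinj,
    ← eq_intCast (algebraMap ℤ L) m, eval_map_apply] at h
  apply RingOfIntegers.coe_injective
  simp only [map_intCast, map_mul, map_multiset_prod, Multiset.map_map, Function.comp_apply,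
    map_sub]
  simp only [Int.cast_mul, Int.cast_pow]
  simp only [eq_intCast] at h
  rw [h]
  congr 2
  refine Multiset.map_congr rfl fun r hr ↦ ?_
  have hr' : r ∈ g.rootSet L := by rwa [rootSet_def, Finset.mem_coe, Multiset.mem_toFinset]
  exact congrArg _ (hθ r hr').symm

variable {p : ℕ} {Q : Ideal (𝓞 L)}

lemma dvd_eval_iff_mem_image (hQ : Q ∈ Ideal.primesOver (Ideal.span {(p : ℤ)}) (𝓞 L))
    (hp : ¬(p : ℤ) ∣ g.leadingCoeff) (hg : (g.map (algebraMap ℤ L)).Splits) {θ : L → 𝓞 L}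
    (hθ : ∀ r ∈ g.rootSet L, (θ r : L) = g.leadingCoeff * r) (m : ℤ) :
    (p : ℤ) ∣ g.eval m ↔ ((g.leadingCoeff * m : ℤ) : 𝓞 L ⧸ Q) ∈
      (Ideal.Quotient.mk Q ∘ θ) '' g.rootSet L := by
  have := hQ.1
  have hdvd (v : ℤ) : (p : ℤ) ∣ v ↔ (v : 𝓞 L ⧸ Q) = 0 := by
    rw [← intCast_mem_iff_dvd hQ, ← Ideal.Quotient.eq_zero_iff_mem, map_intCast]
  have hc : (g.leadingCoeff : 𝓞 L ⧸ Q) ≠ 0 := fun h ↦ hp ((hdvd _).2 h)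
  have h := congrArg (Ideal.Quotient.mk Q) (leadingCoeff_pow_mul_eval_intCast_eq hg hθ m)
  rw [map_intCast, map_mul, map_intCast, map_multiset_prod, Multiset.map_map, Int.cast_mul,
    Int.cast_pow] at h
  rw [hdvd, ← mul_right_inj' (pow_ne_zero g.natDegree hc), h, mul_zero, mul_eq_zero_iff_left hc,
    Multiset.prod_eq_zero_iff, Multiset.mem_map]
  simp only [Function.comp_apply, map_sub, map_intCast, sub_eq_zero, Set.mem_image,
    rootSet_def, Finset.mem_coe, Multiset.mem_toFinset]
  simp only [eq_comm]

lemma injOn_of_coe_eq_leadingCoeff_mul (hg : g ≠ 0) {θ : L → 𝓞 L}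
    (hθ : ∀ r ∈ g.rootSet L, (θ r : L) = g.leadingCoeff * r) : Set.InjOn θ (g.rootSet L) := by
  intro r hr s hs hrs
  have hmul : (g.leadingCoeff : L) * r = g.leadingCoeff * s := by rw [← hθ r hr, hrs, hθ s hs]
  exact mul_left_cancel₀ (Int.cast_ne_zero.2 (leadingCoeff_ne_zero.2 hg)) hmul

lemma mapsTo_rootSet (σ : L ≃ₐ[ℚ] L) : Set.MapsTo σ (g.rootSet L) (g.rootSet L) :=
  rootSet_mapsTo (σ : L →+* L).toIntAlgHom

lemma apply_eq_smul_of_coe_eq_leadingCoeff_mul {θ : L → 𝓞 L}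
    (hθ : ∀ r ∈ g.rootSet L, (θ r : L) = g.leadingCoeff * r) (σ : L ≃ₐ[ℚ] L) {r : L}
    (hr : r ∈ g.rootSet L) : θ (σ r) = σ • θ r := by
  apply RingOfIntegers.coe_injective
  calc (θ (σ r) : L) = σ (g.leadingCoeff * r) := by
        rw [hθ _ (mapsTo_rootSet σ hr), map_mul, map_intCast]
    _ = σ (θ r) := by rw [hθ r hr]

theorem exists_ncard_isRoot_eq_ncard_fixed (hg : g ≠ 0)
    (hsplits : (g.map (algebraMap ℤ L)).Splits) :
    ∃ M : ℕ, M ≠ 0 ∧ ∀ p : ℕ, p.Prime → ¬p ∣ M → ∀ σ : L ≃ₐ[ℚ] L, IsFrobeniusAbove p σ →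
      {a | (g.map (Int.castRingHom (ZMod p))).IsRoot a}.ncard =
        {r ∈ g.rootSet L | σ r = r}.ncard := by
  choose! θ hθ using fun r (hr : r ∈ g.rootSet L) ↦ exists_coe_eq_leadingCoeff_mul hr
  obtain ⟨M, hM, hinj⟩ := exists_forall_injOn_mk ((g.rootSet_finite L).toFinset.image θ)
  refine ⟨M * g.leadingCoeff.natAbs, mul_ne_zero hM (by simpa using hg), ?_⟩
  rintro p hp hpM' σ ⟨Q, hQ, hσ⟩
  have : Fact p.Prime := ⟨hp⟩
  have := hQ.1
  have := charP_quotient hQ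
  have hpc : ¬(p : ℤ) ∣ g.leadingCoeff := fun h ↦
    hpM' (dvd_mul_of_dvd_right (Int.natCast_dvd.1 h) M)
  have hpM : ¬p ∣ M := fun h ↦ hpM' (dvd_mul_of_dvd_left h _)
  have hc : (g.leadingCoeff : ZMod p) ≠ 0 := by rwa [Ne, ZMod.intCast_zmod_eq_zero_iff_dvd]
  have hθinj : Set.InjOn (Ideal.Quotient.mk Q ∘ θ) (g.rootSet L) :=
    (by simpa using hinj p hpM Q hQ : Set.InjOn _ (θ '' g.rootSet L)).comp
      (injOn_of_coe_eq_leadingCoeff_mul hg hθ) (Set.mapsTo_image θ _)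
  have hpow : ∀ r ∈ g.rootSet L,
      (Ideal.Quotient.mk Q ∘ θ) (σ r) = (Ideal.Quotient.mk Q ∘ θ) r ^ p := fun r hr ↦ by
    rw [Function.comp_apply, apply_eq_smul_of_coe_eq_leadingCoeff_mul hθ σ hr]
    exact mk_smul_eq_pow_of_isArithFrobAt hQ hσ (θ r)
  let ι := ZMod.castHom dvd_rfl (𝓞 L ⧸ Q)
  have hroots : {a | (g.map (Int.castRingHom (ZMod p))).IsRoot a} =
      ((g.leadingCoeff : ZMod p) * ·) ⁻¹' (ι ⁻¹' ((Ideal.Quotient.mk Q ∘ θ) '' g.rootSet L)) := by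
    ext a
    obtain ⟨m, rfl⟩ := ZMod.intCast_surjective a
    rw [Set.mem_ofPred_eq, IsRoot, eval_intCast_map, eq_intCast, ZMod.intCast_zmod_eq_zero_iff_dvd,
      dvd_eval_iff_mem_image hQ hpc hsplits hθ]
    simp [ι]
  rw [hroots, ← ncard_preimage_image_eq_ncard_fixed ι (mapsTo_rootSet σ) hθinj hpow]
  exact Set.ncard_preimage_of_injective_subset_range (mul_right_injective₀ hc)
    fun a _ ↦ ⟨_, mul_inv_cancel_left₀ hc a⟩

end RootsModuloPrimes

section PrimeMeanValues

open Filter Topology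

lemma tendsto_div_log_atTop : Tendsto (fun x : ℝ ↦ x / Real.log x) atTop atTop := by
  have hlog : Tendsto (fun x : ℝ ↦ Real.log x / x) atTop (𝓝[>] 0) := by
    refine tendsto_nhdsWithin_iff.2 ⟨Real.isLittleO_log_id_atTop.tendsto_div_nhds_zero, ?_⟩
    filter_upwards [eventually_gt_atTop 1] with x hx
    exact div_pos (Real.log_pos hx) (one_pos.trans hx)
  exact hlog.inv_tendsto_nhdsGT_zero.congr fun x ↦ inv_div _ _

lemma prime_of_mem_primesLe {p : ℕ} {x : ℝ} (hp : p ∈ primesLe x) : p.Prime := by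
  rw [primesLe_eq_primesLE_floor, Nat.mem_primesLE] at hp
  exact hp.2

namespace HasPrimeMean

variable {a b : ℕ → ℝ} {m : ℝ} {M : ℕ}

lemma congr_of_not_dvd (ha : HasPrimeMean a m) (hM : M ≠ 0)
    (h : ∀ p, p.Prime → ¬p ∣ M → b p = a p) : HasPrimeMean b m := by
  have hlim : Tendsto (fun x ↦ (∑ p ∈ M.primeFactors, |b p - a p|) / (x / Real.log x)) atTop
      (𝓝 0) := tendsto_const_nhds.div_atTop tendsto_div_log_atTop
  have hsum (x : ℝ) : |∑ p ∈ primesLe x, b p - ∑ p ∈ primesLe x, a p| ≤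
      ∑ p ∈ M.primeFactors, |b p - a p| := by
    have hne : ∀ p ∈ primesLe x, |b p - a p| ≠ 0 → p ∣ M := fun p hp hne ↦ by
      contrapose! hne
      rw [h p (prime_of_mem_primesLe hp) hne, sub_self, abs_zero]
    rw [← Finset.sum_sub_distrib]
    refine (Finset.abs_sum_le_sum_abs _ _).trans ?_
    rw [← Finset.sum_filter_of_ne hne]
    refine Finset.sum_le_sum_of_subset_of_nonneg (fun p hp ↦ ?_) fun _ _ _ ↦ abs_nonneg _
    obtain ⟨hpx, hpM⟩ := Finset.mem_filter.1 hp
    exact Nat.mem_primeFactors.2 ⟨prime_of_mem_primesLe hpx, hpM, hM⟩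
  have hdiff : Tendsto (fun x ↦ (∑ p ∈ primesLe x, b p) / (x / Real.log x) -
      (∑ p ∈ primesLe x, a p) / (x / Real.log x)) atTop (𝓝 0) := by
    refine squeeze_zero_norm' ?_ hlim
    filter_upwards [tendsto_div_log_atTop.eventually_gt_atTop 0] with x hx
    rw [← sub_div, norm_div, Real.norm_of_nonneg hx.le]
    exact div_le_div_of_nonneg_right (hsum x) hx.le
  rw [HasPrimeMean, ← zero_add m]
  exact (hdiff.add ha).congr fun x ↦ sub_add_cancel _ _

lemma sum {ι : Type*} {s : Finset ι} {a : ι → ℕ → ℝ} {m : ι → ℝ}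
    (ha : ∀ i ∈ s, HasPrimeMean (a i) (m i)) :
    HasPrimeMean (fun p ↦ ∑ i ∈ s, a i p) (∑ i ∈ s, m i) := by
  refine (tendsto_finsetSum s ha).congr fun x ↦ ?_
  rw [Finset.sum_comm, Finset.sum_div]

lemma const_mul (c : ℝ) (ha : HasPrimeMean a m) : HasPrimeMean (fun p ↦ c * a p) (c * m) :=
  (Filter.Tendsto.const_mul c ha).congr fun x ↦ by rw [← Finset.mul_sum, mul_div_assoc]

end HasPrimeMean

end PrimeMeanValues

section FixedPointCounts

open MulAction

variable {G X : Type*} [Group G] [MulAction G X]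

lemma ncard_orbit_inter_fixedBy (x : X) (σ : G) :
    (orbit G x ∩ fixedBy X σ).ncard = (fixedBy (G ⧸ stabilizer G x) σ).ncard := by
  rw [← Set.ncard_image_of_injective _ (injective_ofQuotientStabilizer G x)]
  congr 1
  ext y
  constructor
  · rintro ⟨⟨g, rfl⟩, hg⟩
    refine ⟨g, injective_ofQuotientStabilizer G x ?_, rfl⟩
    rwa [ofQuotientStabilizer_smul]
  · rintro ⟨q, hq, rfl⟩
    refine ⟨ofQuotientStabilizer_mem_orbit G x q, ?_⟩
    rw [mem_fixedBy, ← ofQuotientStabilizer_smul, hq]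

lemma ncard_fixedBy_eq_sum [Finite X] [Fintype (orbitRel.Quotient G X)] (σ : G) :
    (fixedBy X σ).ncard =
      ∑ ω : orbitRel.Quotient G X, (fixedBy (G ⧸ stabilizer G ω.out) σ).ncard := by
  have := Fintype.ofFinite X
  rw [Set.ncard_eq_toFinset_card', Finset.card_eq_sum_card_fiberwise
    (f := (Quotient.mk'' : X → orbitRel.Quotient G X)) (t := Finset.univ)
    fun _ _ ↦ Finset.mem_coe.2 (Finset.mem_univ _)]
  refine Finset.sum_congr rfl fun ω _ ↦ ?_
  rw [← ncard_orbit_inter_fixedBy, ← orbitRel.Quotient.orbit_eq_orbit_out ω Quotient.out_eq',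
    ← Set.ncard_coe_finset]
  congr 1
  ext x
  simp only [Finset.coe_filter, Set.mem_toFinset, Set.mem_inter_iff, orbitRel.Quotient.mem_orbit,
    Set.mem_ofPred_eq, and_comm]

lemma sum_ncard_fixedBy_div_card [Fintype G] [Finite X] [Fintype (orbitRel.Quotient G X)] :
    (∑ σ : G, ((fixedBy X σ).ncard : ℝ)) / Nat.card G = Fintype.card (orbitRel.Quotient G X) := by
  have := Fintype.ofFinite X
  have hburnside := sum_card_fixedBy_eq_card_orbits_mul_card_group G X
  rw [div_eq_iff (Nat.cast_ne_zero.2 Nat.card_pos.ne'), Nat.card_eq_fintype_card]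
  simp only [← Nat.card_coe_set_eq, Nat.card_eq_fintype_card]
  exact_mod_cast hburnside

lemma ncard_fixedBy_fin_fun (σ : G) (k : ℕ) :
    (fixedBy (Fin k → X) σ).ncard = (fixedBy X σ).ncard ^ k := by
  rw [← Nat.card_coe_set_eq, ← Nat.card_coe_set_eq, ← Nat.card_fin k, ← Nat.card_fun, Nat.card_fin]
  exact Nat.card_congr ⟨fun w i ↦ ⟨w.1 i, congrFun w.2 i⟩,
    fun w ↦ ⟨fun i ↦ (w i).1, funext fun i ↦ (w i).2⟩, fun _ ↦ rfl, fun _ ↦ rfl⟩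

end FixedPointCounts

section Stabilizers

open NumberField IntermediateField

section

variable {F E : Type*} [Field F] [Field E] [Algebra F E]

lemma fixingSubgroup_adjoin_simple (α : E) :
    F⟮α⟯.fixingSubgroup = MulAction.stabilizer (E ≃ₐ[F] E) α := by
  ext σ
  rw [← Subgroup.zpowers_le, ← IntermediateField.le_iff_le, adjoin_simple_le_iff,
    mem_fixedField_iff, ← Subgroup.zpowers_le]
  rfl

lemma exists_stabilizer_eq [FiniteDimensional F E] [Algebra.IsSeparable F E]
    (H : Subgroup (E ≃ₐ[F] E)) : ∃ α : E, MulAction.stabilizer (E ≃ₐ[F] E) α = H := by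
  obtain ⟨α, hα⟩ := Field.exists_primitive_element F (fixedField H)
  have hαH : F⟮(α : E)⟯ = fixedField H := by
    rw [← lift_adjoin_simple, hα, lift_top]
  exact ⟨α, by rw [← fixingSubgroup_adjoin_simple, hαH, fixingSubgroup_fixedField]⟩

end

variable {L : Type*} [Field L] [NumberField L]

theorem exists_integer_stabilizer_eq (H : Subgroup (L ≃ₐ[ℚ] L)) :
    ∃ θ : 𝓞 L, MulAction.stabilizer (L ≃ₐ[ℚ] L) θ = H := by
  obtain ⟨α, rfl⟩ := exists_stabilizer_eq H
  have halg : IsAlgebraic ℤ α :=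
    (IsFractionRing.isAlgebraic_iff ℤ ℚ L).2 (Algebra.IsAlgebraic.isAlgebraic α)
  obtain ⟨n, hn, hint⟩ := halg.exists_integral_multiple
  obtain ⟨θ, hθ⟩ : ∃ θ : 𝓞 L, (θ : L) = n • α := ⟨⟨_, hint⟩, rfl⟩
  have hfix (σ : L ≃ₐ[ℚ] L) : σ (θ : L) = θ ↔ σ α = α := by
    rw [hθ, map_zsmul, smul_right_inj hn]
  refine ⟨θ, Subgroup.ext fun σ ↦ ?_⟩
  rw [MulAction.mem_stabilizer_iff, MulAction.mem_stabilizer_iff, RingOfIntegers.ext_iff]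
  exact hfix σ

end Stabilizers

section GaloisAverages

open NumberField IntermediateField Polynomial MulAction

universe u

variable {L : Type u} [Field L] [NumberField L]

lemma adjoin_simple_gen_eq_top {F E : Type*} [Field F] [Field E] [Algebra F E] (α : E) :
    F⟮AdjoinSimple.gen F α⟯ = ⊤ := by
  apply lift_injective
  rw [lift_adjoin_simple, lift_top, AdjoinSimple.coe_gen]

lemma exists_adjoin_simple_eq_top_of_integer (θ : 𝓞 L) :
    ∃ (K : Type u) (_ : Field K) (_ : NumberField K) (η : 𝓞 K),
      ℚ⟮(η : K)⟯ = ⊤ ∧ minpoly ℤ η = minpoly ℤ θ := by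
  have hmin : minpoly ℤ (AdjoinSimple.gen ℚ (θ : L)) = minpoly ℤ θ := by
    rw [← minpoly.algebraMap_eq (algebraMap ℚ⟮(θ : L)⟯ L).injective,
      AdjoinSimple.algebraMap_gen, minpoly.algebraMap_eq RingOfIntegers.coe_injective]
  have hint : IsIntegral ℤ (AdjoinSimple.gen ℚ (θ : L)) := by
    rw [← isIntegral_algebraMap_iff (algebraMap ℚ⟮(θ : L)⟯ L).injective,
      AdjoinSimple.algebraMap_gen]
    exact θ.isIntegral_coe
  obtain ⟨η, hη⟩ : ∃ η : 𝓞 ℚ⟮(θ : L)⟯, (η : ℚ⟮(θ : L)⟯) = AdjoinSimple.gen ℚ (θ : L) :=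
    ⟨⟨_, hint⟩, rfl⟩
  refine ⟨ℚ⟮(θ : L)⟯, inferInstance, inferInstance, η, ?_, ?_⟩
  · rw [hη, Subsingleton.elim DivisionRing.toRatAlgebra ℚ⟮(θ : L)⟯.algebra']
    exact adjoin_simple_gen_eq_top _
  · rw [← hmin, ← hη, minpoly.algebraMap_eq RingOfIntegers.coe_injective]

variable [IsGalois ℚ L]

lemma rootSet_minpoly_eq (θ : 𝓞 L) :
    (minpoly ℤ θ).rootSet L = (↑) '' orbit (L ≃ₐ[ℚ] L) θ := by
  have hθ : IsIntegral ℚ (θ : L) := Algebra.IsIntegral.isIntegral _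
  have hmin : minpoly ℚ (θ : L) = (minpoly ℤ θ).map (algebraMap ℤ ℚ) :=
    minpoly.isIntegrallyClosed_eq_field_fractions ℚ L θ.isIntegral
  ext r
  have hconj : r ∈ (minpoly ℤ θ).rootSet L ↔ IsConjRoot ℚ (θ : L) r := by
    rw [isConjRoot_iff_mem_minpoly_rootSet hθ, hmin, rootSet, rootSet, aroots_map]
  rw [hconj, IsConjRoot.comm, isConjRoot_iff_exists_algEquiv]
  constructor
  · rintro ⟨σ, hσ⟩
    refine ⟨σ • θ, ⟨σ, rfl⟩, hσ⟩
  · rintro ⟨_, ⟨σ, rfl⟩, rfl⟩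
    exact ⟨σ, rfl⟩

lemma ncard_fixed_rootSet_minpoly (θ : 𝓞 L) (σ : L ≃ₐ[ℚ] L) :
    {r ∈ (minpoly ℤ θ).rootSet L | σ r = r}.ncard =
      (orbit (L ≃ₐ[ℚ] L) θ ∩ fixedBy (𝓞 L) σ).ncard := by
  rw [rootSet_minpoly_eq, ← Set.ncard_image_of_injective _ RingOfIntegers.coe_injective]
  congr 1
  ext r
  constructor
  · rintro ⟨⟨β, hβ, rfl⟩, hσ⟩
    exact ⟨β, ⟨hβ, RingOfIntegers.coe_injective hσ⟩, rfl⟩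
  · rintro ⟨β, ⟨hβ, hσ⟩, rfl⟩
    exact ⟨⟨β, hβ, rfl⟩, congrArg (algebraMap (𝓞 L) L) hσ⟩

lemma splits_map_minpoly (θ : 𝓞 L) : ((minpoly ℤ θ).map (algebraMap ℤ L)).Splits := by
  have hsplits := Normal.splits (inferInstance : Normal ℚ L) (θ : L)
  rwa [minpoly.isIntegrallyClosed_eq_field_fractions ℚ L θ.isIntegral, Polynomial.map_map,
    ← IsScalarTower.algebraMap_eq] at hsplits

variable {φ : ℕ → L ≃ₐ[ℚ] L}

/- The fixed points correspond to the primes of degree one above `p` in `ℚ(θ)`. -/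
theorem hasPrimeMean_ncard_orbit_inter_fixedBy (hφ : ∀ p, p.Prime → IsFrobeniusAbove p (φ p))
    (θ : 𝓞 L) :
    HasPrimeMean (fun p ↦ (orbit (L ≃ₐ[ℚ] L) θ ∩ fixedBy (𝓞 L) (φ p)).ncard) 1 := by
  obtain ⟨K, _, _, η, htop, hmin⟩ := exists_adjoin_simple_eq_top_of_integer θ
  obtain ⟨M, hM, hroots⟩ := exists_ncard_isRoot_eq_ncard_fixed (minpoly.ne_zero θ.isIntegral)
    (splits_map_minpoly θ)
  refine (hasPrimeMean_card_idealsOfAbsNorm K).congr_of_not_dvd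
    (mul_ne_zero hM (exponent_ne_zero htop)) fun p hp hpM ↦ ?_
  have : Fact p.Prime := ⟨hp⟩
  rw [card_idealsOfAbsNorm_eq_ncard_isRoot (θ := η) fun h ↦ hpM (dvd_mul_of_dvd_right h M), hmin,
    hroots p hp (fun h ↦ hpM (dvd_mul_of_dvd_left h _)) (φ p) (hφ p hp),
    ncard_fixed_rootSet_minpoly]

variable (X : Type*) [MulAction (L ≃ₐ[ℚ] L) X] [Finite X]

theorem hasPrimeMean_ncard_fixedBy (hφ : ∀ p, p.Prime → IsFrobeniusAbove p (φ p)) :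
    HasPrimeMean (fun p ↦ (fixedBy X (φ p)).ncard)
      ((∑ σ : L ≃ₐ[ℚ] L, ((fixedBy X σ).ncard : ℝ)) / Nat.card (L ≃ₐ[ℚ] L)) := by
  have := Fintype.ofFinite (orbitRel.Quotient (L ≃ₐ[ℚ] L) X)
  have horbit (ω : orbitRel.Quotient (L ≃ₐ[ℚ] L) X) :
      HasPrimeMean (fun p ↦ (fixedBy ((L ≃ₐ[ℚ] L) ⧸ stabilizer (L ≃ₐ[ℚ] L) ω.out) (φ p)).ncard)
        1 := by
    obtain ⟨θ, hθ⟩ := exists_integer_stabilizer_eq (stabilizer (L ≃ₐ[ℚ] L) ω.out)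
    rw [← hθ]
    simpa only [ncard_orbit_inter_fixedBy] using hasPrimeMean_ncard_orbit_inter_fixedBy hφ θ
  rw [sum_ncard_fixedBy_div_card]
  simpa only [ncard_fixedBy_eq_sum, Nat.cast_sum, Finset.sum_const, Finset.card_univ,
    nsmul_eq_mul, mul_one] using HasPrimeMean.sum fun ω (_ : ω ∈ Finset.univ) ↦ horbit ω

lemma hasPrimeMean_ncard_fixedBy_pow (hφ : ∀ p, p.Prime → IsFrobeniusAbove p (φ p)) (k : ℕ) :
    HasPrimeMean (fun p ↦ (fixedBy X (φ p)).ncard ^ k)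
      ((∑ σ : L ≃ₐ[ℚ] L, ((fixedBy X σ).ncard : ℝ) ^ k) / Nat.card (L ≃ₐ[ℚ] L)) := by
  simpa only [ncard_fixedBy_fin_fun, Nat.cast_pow] using
    hasPrimeMean_ncard_fixedBy (Fin k → X) hφ

/- The number of fixed points takes finitely many values, so `u` may be taken to be polynomial. -/
theorem hasPrimeMean_comp_ncard_fixedBy (hφ : ∀ p, p.Prime → IsFrobeniusAbove p (φ p))
    (u : ℕ → ℝ) :
    HasPrimeMean (fun p ↦ u (fixedBy X (φ p)).ncard)
      ((∑ σ : L ≃ₐ[ℚ] L, u (fixedBy X σ).ncard) / Nat.card (L ≃ₐ[ℚ] L)) := by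
  let P := Lagrange.interpolate (Finset.range (Nat.card X + 1)) (fun n : ℕ ↦ (n : ℝ)) u
  have hP (σ : L ≃ₐ[ℚ] L) : u (fixedBy X σ).ncard =
      ∑ k ∈ Finset.range (P.natDegree + 1), P.coeff k * ((fixedBy X σ).ncard : ℝ) ^ k := by
    rw [← eval_eq_sum_range]
    exact (Lagrange.eval_interpolate_at_node u Nat.cast_injective.injOn
      (Finset.mem_range.2 (Nat.lt_succ_of_le (Set.ncard_le_card _)))).symm
  simp only [hP]
  rw [Finset.sum_comm, Finset.sum_div]
  simp only [← Finset.mul_sum, mul_div_assoc]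
  exact HasPrimeMean.sum fun k _ ↦ (hasPrimeMean_ncard_fixedBy_pow X hφ k).const_mul _

end GaloisAverages

section FrobeniusDensity

open NumberField Polynomial MulAction

lemma ncard_fixedBy_subMulAction {G X : Type*} [Group G] [MulAction G X] (R : SubMulAction G X)
    (σ : G) : (fixedBy R σ).ncard = {r ∈ (R : Set X) | σ • r = r}.ncard := by
  rw [← Set.ncard_image_of_injective _ Subtype.val_injective]
  congr 1
  ext r
  constructor
  · rintro ⟨r, hr, rfl⟩
    exact ⟨r.2, congrArg Subtype.val hr⟩
  · exact fun ⟨hr, hσ⟩ ↦ ⟨⟨r, hr⟩, Subtype.ext hσ, rfl⟩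

variable {L : Type*} [Field L] [NumberField L] {g : ℤ[X]}

theorem hasPrimeMean_comp_ncard_isRoot [IsGalois ℚ L] (hg : g ≠ 0)
    (hsplits : (g.map (algebraMap ℤ L)).Splits) (u : ℕ → ℝ) :
    HasPrimeMean (fun p ↦ u {a | (g.map (Int.castRingHom (ZMod p))).IsRoot a}.ncard)
      ((∑ σ : L ≃ₐ[ℚ] L, u {r ∈ g.rootSet L | σ r = r}.ncard) / Nat.card (L ≃ₐ[ℚ] L)) := by
  choose! φ hφ using fun (p : ℕ) (hp : p.Prime) ↦ exists_isFrobeniusAbove (L := L) hp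
  obtain ⟨M, hM, hroots⟩ := exists_ncard_isRoot_eq_ncard_fixed hg hsplits
  let R : SubMulAction (L ≃ₐ[ℚ] L) L := ⟨g.rootSet L, fun σ _ hr ↦ mapsTo_rootSet σ hr⟩
  have : Finite R := g.rootSet_finite L
  have hfixed (σ : L ≃ₐ[ℚ] L) : (fixedBy R σ).ncard = {r ∈ g.rootSet L | σ r = r}.ncard :=
    ncard_fixedBy_subMulAction R σ
  simp only [← hfixed]
  refine (hasPrimeMean_comp_ncard_fixedBy R hφ u).congr_of_not_dvd hM fun p hp hpM ↦ ?_
  rw [hroots p hp hpM (φ p) (hφ p hp), hfixed]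

end FrobeniusDensity

section IntegerValuedPolynomials

open Polynomial

variable {f : ℚ[X]} {g : ℤ[X]} {N : ℤ}

lemma rootSet_eq_of_map_eq_smul {L : Type*} [Field L] [Algebra ℚ L] (hN : N ≠ 0)
    (hg : g.map (algebraMap ℤ ℚ) = N • f) : g.rootSet L = f.rootSet L := by
  have haroots : (N • f).aroots L = f.aroots L := by
    rw [← Int.cast_smul_eq_zsmul ℚ, aroots_smul_nonzero f (Int.cast_ne_zero.2 hN)]
  rw [rootSet, rootSet, ← haroots, ← hg, aroots_map]

lemma setOf_dvd_eval_eq_setOf_isRoot (hf : ∀ n : ℤ, ∃ m : ℤ, f.eval (n : ℚ) = m)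
    (hg : g.map (algebraMap ℤ ℚ) = N • f) {p : ℕ} (hp : p.Prime) (hpN : ¬(p : ℤ) ∣ N) :
    {n : ZMod p | ∃ m : ℤ, (m : ZMod p) = n ∧ ∀ v : ℤ, (v : ℚ) = f.eval (m : ℚ) → (p : ℤ) ∣ v} =
      {a | (g.map (Int.castRingHom (ZMod p))).IsRoot a} := by
  have hroot (m : ℤ) : (g.map (Int.castRingHom (ZMod p))).IsRoot m ↔
      ∀ v : ℤ, (v : ℚ) = f.eval (m : ℚ) → (p : ℤ) ∣ v := by
    obtain ⟨w, hw⟩ := hf m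
    have heval : g.eval m = N * w := by
      have h := congrArg (eval (m : ℚ)) hg
      rw [eval_intCast_map, eval_smul, hw, zsmul_eq_mul, eq_intCast] at h
      exact_mod_cast h
    rw [IsRoot, eval_intCast_map, eq_intCast, ZMod.intCast_zmod_eq_zero_iff_dvd, Int.cast_id, heval,
      (Nat.prime_iff_prime_int.1 hp).dvd_mul, or_iff_right hpN, hw]
    simp only [Int.cast_inj, forall_eq]
  ext n
  simp only [Set.mem_ofPred_eq, ← hroot]
  constructor
  · rintro ⟨m, rfl, hm⟩
    exact hm
  · obtain ⟨m, rfl⟩ := ZMod.intCast_surjective n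
    exact fun hm ↦ ⟨m, rfl, hm⟩

theorem hasPrimeMean_comp_card_sieve {L : Type*} [Field L] [hL : Algebra ℚ L]
    [FiniteDimensional ℚ L] [IsGalois ℚ L] (hf₀ : f ≠ 0)
    (hf : ∀ n : ℤ, ∃ m : ℤ, f.eval (n : ℚ) = m) (hsplits : (f.map (algebraMap ℚ L)).Splits)
    {d : ℕ} {I : ∀ p : ℕ, Finset (ZMod p)}
    (hI : ∀ p : ℕ, p.Prime → d < p → ∀ n : ZMod p, n ∈ I p ↔
      ∃ m : ℤ, (m : ZMod p) = n ∧ ∀ v : ℤ, (v : ℚ) = f.eval (m : ℚ) → (p : ℤ) ∣ v)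
    (u : ℕ → ℝ) :
    HasPrimeMean (fun p ↦ u (I p).card)
      ((∑ σ : L ≃ₐ[ℚ] L, u {r ∈ f.rootSet L | σ r = r}.ncard) / Nat.card (L ≃ₐ[ℚ] L)) := by
  have hchar : CharZero L := algebraRat.charZero L
  obtain rfl : hL = DivisionRing.toRatAlgebra := Subsingleton.elim _ _
  have : NumberField L := ⟨⟩
  obtain ⟨N, hN, hg⟩ := IsLocalization.integerNormalization_spec (nonZeroDivisors ℤ) f
  set g := IsLocalization.integerNormalization (nonZeroDivisors ℤ) f
  have hN₀ : N ≠ 0 := nonZeroDivisors.ne_zero hN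
  have hg₀ : g ≠ 0 := fun h ↦ smul_ne_zero hN₀ hf₀ (by rw [← hg, h, Polynomial.map_zero])
  have hgsplits : (g.map (algebraMap ℤ L)).Splits := by
    rw [IsScalarTower.algebraMap_eq ℤ ℚ L, ← Polynomial.map_map, hg, zsmul_eq_mul,
      Polynomial.map_mul, Polynomial.map_intCast, ← C_eq_intCast]
    exact hsplits.C_mul _
  simp only [← rootSet_eq_of_map_eq_smul hN₀ hg]
  refine (hasPrimeMean_comp_ncard_isRoot hg₀ hgsplits u).congr_of_not_dvd
    (mul_ne_zero (Int.natAbs_ne_zero.2 hN₀) d.factorial_ne_zero) fun p hp hpM ↦ ?_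
  have hpN : ¬(p : ℤ) ∣ N := fun h ↦ hpM (dvd_mul_of_dvd_left (Int.natCast_dvd.1 h) _)
  have hdp : d < p := by
    by_contra! hle
    exact hpM (dvd_mul_of_dvd_right ((hp.dvd_factorial).2 hle) _)
  rw [← setOf_dvd_eval_eq_setOf_isRoot hf hg hp hpN, ← Set.ncard_coe_finset]
  congr 2
  exact Set.ext (hI p hp hdp)

lemma isGalois_splittingField {F : Type*} [Field F] [PerfectField F] (f : F[X]) :
    IsGalois F f.SplittingField := ⟨⟩

end IntegerValuedPolynomials

theorem stmt16_general (f : Polynomial ℚ) (hf : f ≠ 0)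
    (hint : ∀ n : ℤ, ∃ m : ℤ, f.eval (n : ℚ) = (m : ℚ)) (d : ℕ) (I : ∀ p : ℕ, Finset (ZMod p))
    (hI : ∀ p : ℕ, p.Prime → d < p → ∀ n : ZMod p, n ∈ I p ↔
      ∃ m : ℤ, (m : ZMod p) = n ∧ ∀ v : ℤ, (v : ℚ) = f.eval (m : ℚ) → (p : ℤ) ∣ v) (ν : ℕ) :
    Filter.Tendsto
      (fun x : ℝ ↦ (((primesLe x).filter fun p ↦ (I p).card = ν).card : ℝ) / (x / Real.log x))
      Filter.atTop
      (nhds ((Nat.card {σ : f.Gal //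
          Set.ncard {r : f.SplittingField | r ∈ f.rootSet f.SplittingField ∧ σ r = r} = ν} : ℝ) /
        (Nat.card f.Gal : ℝ))) := by
  have := isGalois_splittingField f
  have h := hasPrimeMean_comp_card_sieve hf hint (Polynomial.SplittingField.splits f) hI
    fun n ↦ if n = ν then 1 else 0
  rw [Finset.sum_boole, ← Fintype.card_subtype, ← Nat.card_eq_fintype_card] at h
  exact h.congr fun x ↦ congrArg (· / (x / Real.log x)) (Finset.sum_boole _ _)

/-- **Hypothesis (e) for polynomial sieving systems (Chebotarev).**  For every
`ν ≥ 0` the density `ρ_ν = lim_{x→∞} #{p ≤ x : |I_p| = ν}/(x/log x)` exists and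
equals the proportion of elements of the Galois group of (the splitting field of) `f`
which fix exactly `ν` of the roots of `f`. -/
theorem stmt16 (f : Polynomial ℚ) (d : ℕ) (hdeg : f.natDegree = d) (hd1 : 1 ≤ d)
    (hint : ∀ n : ℤ, ∃ m : ℤ, f.eval (n : ℚ) = (m : ℚ))
    (hlead : 0 < f.leadingCoeff)
    (hirr : Irreducible f)
    -- the polynomial sieving system of `f`
    (I : ∀ p : ℕ, Finset (ZMod p))
    (hI : ∀ p : ℕ, p.Prime →
      (p ≤ d → I p = ∅) ∧
      (d < p → ∀ nres : ZMod p, nres ∈ I p ↔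
        ∃ m : ℤ, ((m : ZMod p) = nres ∧ ∀ v : ℤ, (v : ℚ) = f.eval (m : ℚ) → (p : ℤ) ∣ v)))
    :
    ∀ ν : ℕ,
      Filter.Tendsto (fun x : ℝ =>
          (((primesLe x).filter (fun p => (I p).card = ν)).card : ℝ) / (x / Real.log x))
        Filter.atTop
        (nhds ((Nat.card {σ : f.Gal //
            Set.ncard {rr : f.SplittingField | rr ∈ f.rootSet f.SplittingField ∧ σ rr = rr}
              = ν} : ℝ) / (Nat.card f.Gal : ℝ))) := by
  exact fun ν ↦ stmt16_general f hirr.ne_zero hint d I (fun p hp ↦ (hI p hp).2) ν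

end
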